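/- arXiv:1701.06145 — 2 statements merged into one kernel-verified Lean document; each statement's English description precedes it below -/
import Mathlib

section
/- Let T > 0, let a : ℝ → ℝ be T-periodic and locally integrable satisfying condition (a*) with m positive humps, and for μ > 0 set a_μ(t) = a⁺(t) − μ a⁻(t). Let g ∈ C¹([0,∞)) satisfy (g*) and (gs). Then there exists μ* > 0 such that, for each μ > μ* and each integer k ≥ 2, the equation u'' + a_μ(t) g(u) = 0 has at least S_{2^m}(k) positive subharmonic solutions of order k, no two of which belong to the same periodicity class, where S_n(k) = (1/k) Σ_{l | k} μ_Möbius(l) n^{k/l} (the sum being over positive divisors l of k and μ_Möbius denoting the Möbius function). -/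
open MeasureTheory Set Filter

/-- `u` is a solution of `u'' + F(t,u) = 0`: `u` is of class `C¹` and its derivative `u'`
is locally absolutely continuous (it is the integral of a locally integrable function),
with `u'' + F(t, u(t)) = 0` for a.e. `t`. -/
def IsSol (F : ℝ → ℝ → ℝ) (u : ℝ → ℝ) : Prop :=
  ∃ u' : ℝ → ℝ,
    (∀ t, HasDerivAt u (u' t) t) ∧
    MeasureTheory.LocallyIntegrable (fun s => F s (u s)) MeasureTheory.volume ∧
    ∀ t, u' t = u' 0 - ∫ s in (0:ℝ)..t, F s (u s)

/-- `q ≻ 0` on `I` : `q ≥ 0` a.e. on `I` and `q ≢ 0` on `I`. -/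
def PosOn (q : ℝ → ℝ) (I : Set ℝ) : Prop :=
  (∀ᵐ t ∂(MeasureTheory.volume.restrict I), 0 ≤ q t) ∧
  ¬ (∀ᵐ t ∂(MeasureTheory.volume.restrict I), q t = 0)

/-- Condition `(q*)`: `[0,T]` splits into `m` closed intervals where `q ≻ 0`
separated by `m` closed intervals where `q ≺ 0`. -/
def SignCond (q : ℝ → ℝ) (T : ℝ) (m : ℕ) : Prop :=
  ∃ σ : ℕ → ℝ, σ 0 = 0 ∧ σ (2*m) = T ∧ (∀ i < 2*m, σ i < σ (i+1)) ∧
    (∀ i < m, PosOn q (Set.Icc (σ (2*i)) (σ (2*i+1)))) ∧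
    (∀ i < m, PosOn (fun t => - q t) (Set.Icc (σ (2*i+1)) (σ (2*i+2))))

/-- A subharmonic solution of order `k`: `kT`-periodic but not `ℓT`-periodic
for `ℓ = 1, …, k-1`. -/
def IsSubharmonic (u : ℝ → ℝ) (T : ℝ) (k : ℕ) : Prop :=
  Function.Periodic u (k * T) ∧ ∀ ℓ : ℕ, 1 ≤ ℓ → ℓ < k → ¬ Function.Periodic u (ℓ * T)

/-- `u` and `v` belong to the same periodicity class. -/
def SameClass (u v : ℝ → ℝ) (T : ℝ) : Prop :=
  ∃ ℓ : ℤ, ∀ t, v t = u (t + ℓ * T)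

/-- Witt's formula: the number `S_n(k)` of aperiodic necklaces of length `k` on `n` colors,
`S_n(k) = (1/k) ∑_{l ∣ k} μ(l) n^{k/l}` (exact integer division). -/
def necklaceCount (n k : ℕ) : ℤ :=
  (∑ l ∈ k.divisors, (ArithmeticFunction.moebius l) * (n : ℤ) ^ (k / l)) / (k : ℤ)

/-!
Replace `g` above a high level `R` by an affine function, which gives a Lipschitz nonlinearity
`f`. Superlinearity at infinity bounds by `R` every solution that stays nonnegative over a hump of
`a`, and `g'(0) = 0` yields a small level `r` at which the hump hardly bends the solution. For
large `μ`, the negative parts of the weight make the flow across each hump stretch a rectangle of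
initial data over itself in two disjoint ways, along which the solution stays small on the hump or
becomes large on it. A Poincaré–Miranda argument then realizes every periodic sequence of choices,
small or large, by a periodic solution, which the truncation bound turns into a positive solution
of the original equation. Reading the choices in blocks of `m`, one block for each period of `a`,
the time shift by `T` becomes the shift of sequences on an alphabet of `2 ^ m` letters. Solutions
of order `k`, up to periodicity class, are therefore at least as many as the orbits of minimal
period `k` of this shift, which Möbius inversion counts.
-/

/-! ### Sperner's lemma on a grid -/

section Kuhn

/-- The `k`-th vertex of the simplex of Kuhn's triangulation that starts at the lattice point `z`
and raises the coordinates one after the other, `r i` being the position of the coordinate `i`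
in that order. -/
def kuhnVertex {n : ℕ} (z : Fin n → ℕ) (r : Equiv.Perm (Fin n)) (k : ℕ) : Fin n → ℕ :=
  fun i ↦ z i + if (r i : ℕ) < k then 1 else 0

/-- The incidence matrix, modulo 2, between the labels `0, …, n` and a family of `n + 1`
lattice points: its determinant is `1` if the family carries every label, and `0` otherwise. -/
def labelMatrix {ι : Type*} {n : ℕ} (lam : (ι → ℕ) → ℕ) (x : Fin (n + 1) → ι → ℕ) :
    Matrix (Fin (n + 1)) (Fin (n + 1)) (ZMod 2) :=
  Matrix.of fun j k ↦ if lam (x k) = j then 1 else 0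

/-- The number modulo 2 of fully labelled simplices with the given base and order of
coordinates. -/
def simplexDet {n : ℕ} (lam : (Fin n → ℕ) → ℕ) (z : Fin n → ℕ) (r : Equiv.Perm (Fin n)) :
    ZMod 2 :=
  (labelMatrix lam fun k : Fin (n + 1) ↦ kuhnVertex z r k).det

/-- The number modulo 2 (`0` or `1`) saying whether the facet opposite to the `k`-th vertex of a
Kuhn simplex carries all the labels `0, …, n`, the label `n + 1` being excluded. -/
def facetDet {n : ℕ} (lam : (Fin (n + 1) → ℕ) → ℕ) (z : Fin (n + 1) → ℕ)
    (r : Equiv.Perm (Fin (n + 1))) (k : Fin (n + 2)) : ZMod 2 :=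
  (labelMatrix lam fun l : Fin (n + 1) ↦ kuhnVertex z r (k.succAbove l : Fin (n + 2))).det

/-- Sperner's boundary conditions for a labelling by `0, …, n` of the lattice points of the cube
`[0, N]ⁿ`. -/
structure IsSpernerLabelling {n : ℕ} (N : ℕ) (lam : (Fin n → ℕ) → ℕ) : Prop where
  le_dim : ∀ x, lam x ≤ n
  le_of_eq_zero : ∀ x (i : Fin n), x i = 0 → lam x ≤ i
  ne_of_eq_top : ∀ x (i : Fin n), x i = N → lam x ≠ i

variable {n N : ℕ}

theorem labelMatrix_det_eq_zero {ι : Type*} {lam : (ι → ℕ) → ℕ} {x : Fin (n + 1) → ι → ℕ}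
    (j : Fin (n + 1)) (h : ∀ k, lam (x k) ≠ j) : (labelMatrix lam x).det = 0 :=
  Matrix.det_eq_zero_of_row_eq_zero j fun k ↦ if_neg (h k)

theorem kuhnVertex_mem_Icc (z : Fin n → ℕ) (r : Equiv.Perm (Fin n)) (k : ℕ) :
    kuhnVertex z r k ∈ Icc z (z + 1) := by
  constructor <;> intro i <;> simp only [kuhnVertex, Pi.add_apply, Pi.one_apply] <;>
    split_ifs <;> omega

theorem IsSpernerLabelling.snoc_zero {lam : (Fin (n + 1) → ℕ) → ℕ}
    (h : IsSpernerLabelling N lam) :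
    IsSpernerLabelling N fun x : Fin n → ℕ ↦ lam (Fin.snoc x 0) where
  le_dim x := by simpa using h.le_of_eq_zero (Fin.snoc x 0) (Fin.last n) (by simp)
  le_of_eq_zero x i hi := by
    simpa using h.le_of_eq_zero (Fin.snoc x 0) i.castSucc (by simpa using hi)
  ne_of_eq_top x i hi := by
    simpa using h.ne_of_eq_top (Fin.snoc x 0) i.castSucc (by simpa using hi)

/- Every column of the label matrix has exactly one entry `1`, so adding all the rows to the last
one turns it into a row of ones, and one expands along it. -/
theorem simplexDet_eq_sum_facetDet {lam : (Fin (n + 1) → ℕ) → ℕ} (hlam : ∀ x, lam x ≤ n + 1)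
    (z : Fin (n + 1) → ℕ) (r : Equiv.Perm (Fin (n + 1))) :
    simplexDet lam z r = ∑ k, facetDet lam z r k := by
  set A := labelMatrix lam fun k : Fin (n + 2) ↦ kuhnVertex z r k with hA
  have column_sum (k) : ∑ j, A j k = 1 := by
    have hk : lam (kuhnVertex z r k) < n + 2 := Nat.lt_succ_of_le (hlam _)
    simp only [hA, labelMatrix, Matrix.of_apply]
    rw [Finset.sum_eq_single ⟨_, hk⟩ (fun j _ hj ↦ if_neg fun h ↦ hj (Fin.ext h.symm)) (by simp),
      if_pos rfl]
  have ones_eq : (fun _ ↦ 1) = ∑ j, (1 : ZMod 2) • A j := by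
    ext k
    simpa using ((Finset.sum_apply k Finset.univ A).trans (column_sum k)).symm
  have ones_row : (A.updateRow (Fin.last (n + 1)) fun _ ↦ 1).det = A.det := by
    rw [ones_eq, Matrix.det_updateRow_sum, one_smul]
  rw [simplexDet, ← hA, ← ones_row, Matrix.det_succ_row _ (Fin.last (n + 1))]
  refine Finset.sum_congr rfl fun k _ ↦ ?_
  rw [CharTwo.neg_eq, one_pow, one_mul, Matrix.updateRow_self, one_mul, facetDet]
  congr 1
  ext j l
  rw [Matrix.submatrix_apply, Matrix.updateRow_ne (Fin.succAbove_ne _ _)]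
  simp [hA, labelMatrix]

theorem kuhnVertex_swap_mul (z : Fin (n + 1) → ℕ) (r : Equiv.Perm (Fin (n + 1))) (k : Fin n)
    {l : ℕ} (hl : l ≠ k + 1) :
    kuhnVertex z (Equiv.swap k.castSucc k.succ * r) l = kuhnVertex z r l := by
  ext i
  have : (Equiv.swap k.castSucc k.succ (r i) : ℕ) < l ↔ (r i : ℕ) < l := by
    rw [Equiv.swap_apply_def]
    split_ifs with h h
    · simp only [h, Fin.val_castSucc, Fin.val_succ]; omega
    · simp only [h, Fin.val_castSucc, Fin.val_succ]; omega
    · rfl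
  simp only [kuhnVertex, Equiv.Perm.mul_apply, this]

theorem sum_facetDet_interior (lam : (Fin (n + 1) → ℕ) → ℕ) (z : Fin (n + 1) → ℕ) (k : Fin n) :
    ∑ r, facetDet lam z r k.succ.castSucc = 0 := by
  have swap_ne_one : Equiv.swap k.castSucc k.succ ≠ 1 := by
    simp [Fin.ext_iff]
  refine Finset.sum_involution (fun r _ ↦ Equiv.swap k.castSucc k.succ * r) (fun r _ ↦ ?_)
    (fun r _ _ h ↦ swap_ne_one (by simpa using h)) (by simp) (fun r _ ↦ by simp [← mul_assoc])
  have same_facet : facetDet lam z (Equiv.swap k.castSucc k.succ * r) k.succ.castSucc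
      = facetDet lam z r k.succ.castSucc := by
    unfold facetDet
    congr 2
    ext1 l
    refine kuhnVertex_swap_mul z r k fun h ↦ Fin.succAbove_ne k.succ.castSucc l (Fin.ext ?_)
    rw [h, Fin.val_castSucc, Fin.val_succ]
  rw [same_facet, CharTwo.add_self_eq_zero]

theorem kuhnVertex_finRotate_mul_succ (z : Fin (n + 1) → ℕ) (r : Equiv.Perm (Fin (n + 1)))
    {l : ℕ} (hl : l ≤ n) :
    kuhnVertex z (finRotate (n + 1) * r) (l + 1)
      = kuhnVertex (z + Pi.single (r.symm (Fin.last n)) 1) r l := by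
  ext i
  by_cases h : r i = Fin.last n
  · obtain rfl : i = r.symm (Fin.last n) := by rw [← h, r.symm_apply_apply]
    simp [kuhnVertex]
    omega
  · have hi : i ≠ r.symm (Fin.last n) := fun hi ↦ h (by rw [hi, r.apply_symm_apply])
    have rotate : (finRotate (n + 1) (r i) : ℕ) = r i + 1 := coe_finRotate_of_ne_last h
    simp only [kuhnVertex, Equiv.Perm.mul_apply, rotate, Pi.add_apply, Pi.single_eq_of_ne hi,
      Nat.add_lt_add_iff_right, add_zero]

theorem sum_facetDet_zero (lam : (Fin (n + 1) → ℕ) → ℕ) (z : Fin (n + 1) → ℕ) :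
    ∑ r, facetDet lam z r 0 = ∑ r : Equiv.Perm (Fin (n + 1)),
      facetDet lam (z + Pi.single (r.symm (Fin.last n)) 1) r (Fin.last (n + 1)) := by
  rw [← Equiv.sum_comp (Equiv.mulLeft (finRotate (n + 1))) (fun r ↦ facetDet lam z r 0)]
  refine Finset.sum_congr rfl fun r _ ↦ ?_
  unfold facetDet
  congr 2
  ext1 l
  simpa using kuhnVertex_finRotate_mul_succ z r (Nat.lt_succ_iff.1 l.2)

theorem sum_simplexDet_eq {lam : (Fin (n + 1) → ℕ) → ℕ} (hlam : ∀ x, lam x ≤ n + 1)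
    (z : Fin (n + 1) → ℕ) :
    ∑ r, simplexDet lam z r = ∑ r : Equiv.Perm (Fin (n + 1)),
      (facetDet lam z r (Fin.last (n + 1))
        + facetDet lam (z + Pi.single (r.symm (Fin.last n)) 1) r (Fin.last (n + 1))) := by
  simp only [simplexDet_eq_sum_facetDet hlam]
  rw [Finset.sum_comm, Fin.sum_univ_castSucc, Fin.sum_univ_succ]
  simp only [sum_facetDet_interior, Finset.sum_const_zero, add_zero]
  rw [Fin.castSucc_zero, sum_facetDet_zero, Finset.sum_add_distrib, add_comm]

/-- The base points of the cells of the grid `[0, N]ⁿ`. -/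
def gridCells (n N : ℕ) : Finset (Fin n → ℕ) := Fintype.piFinset fun _ ↦ Finset.range N

@[simp]
theorem mem_gridCells {z : Fin n → ℕ} : z ∈ gridCells n N ↔ ∀ i, z i < N := by simp [gridCells]

/- In characteristic two the sum telescopes along the lines parallel to the `i`-th axis. -/
theorem sum_gridCells_add_single (i : Fin n) (φ : (Fin n → ℕ) → ZMod 2)
    (htop : ∀ z, z i = N → φ z = 0) :
    ∑ z ∈ gridCells n N, (φ z + φ (z + Pi.single i 1)) = ∑ z ∈ gridCells n N with z i = 0, φ z := by
  have vanish : ∑ z ∈ gridCells n N with z i + 1 = N, φ (z + Pi.single i 1) = 0 :=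
    Finset.sum_eq_zero fun z hz ↦ htop _ (by simpa using (Finset.mem_filter.1 hz).2)
  have reindex : ∑ z ∈ gridCells n N with ¬ z i + 1 = N, φ (z + Pi.single i 1)
      = ∑ z ∈ gridCells n N with ¬ z i = 0, φ z := by
    refine Finset.sum_nbij' (· + Pi.single i 1) (· - Pi.single i 1) ?_ ?_ ?_ ?_ fun z _ ↦ rfl
    · intro z hz
      simp only [Finset.mem_filter, mem_gridCells] at hz ⊢
      refine ⟨fun j ↦ ?_, by simp⟩
      have := hz.1 j
      rcases eq_or_ne j i with rfl | hj
      · simp only [Pi.add_apply, Pi.single_eq_same]; omega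
      · simpa [hj]
    · intro z hz
      simp only [Finset.mem_filter, mem_gridCells] at hz ⊢
      refine ⟨fun j ↦ (Nat.sub_le _ _).trans_lt (hz.1 j), ?_⟩
      have := hz.1 i
      simp only [Pi.sub_apply, Pi.single_eq_same]; omega
    · intro z _
      simp
    · intro z hz
      ext j
      have := (Finset.mem_filter.1 hz).2
      rcases eq_or_ne j i with rfl | hj
      · simp only [Pi.add_apply, Pi.sub_apply, Pi.single_eq_same]; omega
      · simp [hj]
  rw [Finset.sum_add_distrib, ← Finset.sum_filter_add_sum_filter_not _ (fun z ↦ z i = 0),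
    ← Finset.sum_filter_add_sum_filter_not (gridCells n N) (fun z ↦ z i + 1 = N)
      (fun z ↦ φ (z + _)),
    vanish, reindex, zero_add, add_assoc, CharTwo.add_self_eq_zero, add_zero]

namespace IsSpernerLabelling

variable {lam : (Fin (n + 1) → ℕ) → ℕ}

theorem facetDet_last_eq_zero_of_eq_top (h : IsSpernerLabelling N lam) {z : Fin (n + 1) → ℕ}
    {r : Equiv.Perm (Fin (n + 1))} (hz : z (r.symm (Fin.last n)) = N) :
    facetDet lam z r (Fin.last (n + 1)) = 0 := by
  refine labelMatrix_det_eq_zero (r.symm (Fin.last n)) fun l ↦ h.ne_of_eq_top _ _ ?_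
  simp only [kuhnVertex, hz, Equiv.apply_symm_apply, Fin.val_last, Fin.succAbove_last,
    Fin.val_castSucc, if_neg (Nat.lt_succ_iff.1 l.2).not_gt, add_zero]

theorem facetDet_last_eq_zero_of_eq_zero (h : IsSpernerLabelling N lam) {z : Fin (n + 1) → ℕ}
    {r : Equiv.Perm (Fin (n + 1))} (hz : z (r.symm (Fin.last n)) = 0)
    (hr : r.symm (Fin.last n) ≠ Fin.last n) : facetDet lam z r (Fin.last (n + 1)) = 0 := by
  refine labelMatrix_det_eq_zero (Fin.last n) fun l ↦ ne_of_lt ?_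
  refine (h.le_of_eq_zero _ (r.symm (Fin.last n)) ?_).trans_lt (Fin.lt_last_iff_ne_last.2 hr)
  simp only [kuhnVertex, hz, Equiv.apply_symm_apply, Fin.val_last, Fin.succAbove_last,
    Fin.val_castSucc, if_neg (Nat.lt_succ_iff.1 l.2).not_gt, add_zero]

end IsSpernerLabelling

/-- The permutation of `Fin (n + 1)` that fixes the last element and extends `r`. -/
def permSnoc (r : Equiv.Perm (Fin n)) : Equiv.Perm (Fin (n + 1)) :=
  finSuccEquivLast.permCongr.symm (Equiv.optionCongr r)

@[simp]
theorem permSnoc_last (r : Equiv.Perm (Fin n)) : permSnoc r (Fin.last n) = Fin.last n := by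
  simp [permSnoc, Equiv.permCongr_def]

@[simp]
theorem permSnoc_castSucc (r : Equiv.Perm (Fin n)) (i : Fin n) :
    permSnoc r i.castSucc = (r i).castSucc := by
  simp [permSnoc, Equiv.permCongr_def]

theorem permSnoc_injective : Function.Injective (permSnoc (n := n)) :=
  finSuccEquivLast.permCongr.symm.injective.comp Equiv.optionCongr_injective

theorem exists_permSnoc_eq {r : Equiv.Perm (Fin (n + 1))} (hr : r (Fin.last n) = Fin.last n) :
    ∃ r', permSnoc r' = r := by
  refine ⟨Equiv.removeNone (finSuccEquivLast.permCongr r), ?_⟩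
  have fixes_none : finSuccEquivLast.permCongr r none = none := by simp [hr]
  rw [permSnoc, Equiv.symm_apply_eq]
  ext1 x
  cases x with
  | none => simp [hr]
  | some x =>
    rw [Equiv.optionCongr_apply, Option.map_some, Equiv.removeNone_some]
    refine Option.ne_none_iff_exists'.1 fun h ↦ ?_
    simpa using (finSuccEquivLast.permCongr r).injective (h.trans fixes_none.symm)

theorem kuhnVertex_snoc_zero (z : Fin n → ℕ) (r : Equiv.Perm (Fin n)) {l : ℕ} (hl : l ≤ n) :
    kuhnVertex (Fin.snoc z 0 : Fin (n + 1) → ℕ) (permSnoc r) l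
      = (Fin.snoc (kuhnVertex z r l) 0 : Fin (n + 1) → ℕ) := by
  ext i
  refine Fin.lastCases ?_ (fun i ↦ ?_) i
  · simp [kuhnVertex, hl]
  · simp [kuhnVertex]

theorem facetDet_snoc_zero (lam : (Fin (n + 1) → ℕ) → ℕ) (z : Fin n → ℕ)
    (r : Equiv.Perm (Fin n)) :
    facetDet lam (Fin.snoc z 0) (permSnoc r) (Fin.last (n + 1))
      = simplexDet (fun x ↦ lam (Fin.snoc x 0)) z r := by
  unfold facetDet simplexDet
  congr 1
  ext j l
  simp [labelMatrix, kuhnVertex_snoc_zero z r (Nat.lt_succ_iff.1 l.2)]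

theorem sum_gridCells_last_eq_zero (hN : 0 < N) (φ : (Fin (n + 1) → ℕ) → ZMod 2) :
    ∑ z ∈ gridCells (n + 1) N with z (Fin.last n) = 0, φ z
      = ∑ z ∈ gridCells n N, φ (Fin.snoc z 0) := by
  refine (Finset.sum_nbij' (fun z ↦ Fin.snoc z 0) Fin.init ?_ ?_ (by simp) ?_ fun z _ ↦ rfl).symm
  · intro z hz
    simp only [Finset.mem_filter, mem_gridCells] at hz ⊢
    exact ⟨fun i ↦ Fin.lastCases (by simpa) (fun i ↦ by simpa using hz i) i, by simp⟩
  · intro z hz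
    simp only [Finset.mem_filter, mem_gridCells] at hz ⊢
    exact fun i ↦ hz.1 i.castSucc
  · intro z hz
    rw [← (Finset.mem_filter.1 hz).2, Fin.snoc_init_self]

/- Every facet in the interior belongs to two simplices, and on the boundary of the cube Sperner's
conditions leave only the facets in the face where the last coordinate vanishes. -/
theorem IsSpernerLabelling.sum_simplexDet_succ (hN : 0 < N) {lam : (Fin (n + 1) → ℕ) → ℕ}
    (h : IsSpernerLabelling N lam) :
    ∑ z ∈ gridCells (n + 1) N, ∑ r, simplexDet lam z r
      = ∑ z ∈ gridCells n N, ∑ r, simplexDet (fun x ↦ lam (Fin.snoc x 0)) z r := by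
  set S : Equiv.Perm (Fin (n + 1)) → ZMod 2 := fun r ↦
    ∑ z ∈ gridCells (n + 1) N with z (r.symm (Fin.last n)) = 0,
      facetDet lam z r (Fin.last (n + 1)) with hS
  have boundary : ∑ z ∈ gridCells (n + 1) N, ∑ r, simplexDet lam z r = ∑ r, S r := by
    simp only [sum_simplexDet_eq h.le_dim]
    rw [Finset.sum_comm]
    exact Finset.sum_congr rfl fun r _ ↦ sum_gridCells_add_single (r.symm (Fin.last n))
      (fun z ↦ facetDet lam z r (Fin.last (n + 1))) fun z ↦ h.facetDet_last_eq_zero_of_eq_top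
  have other_faces : ∀ r ∈ Finset.univ, r ∉ Finset.univ.image (permSnoc (n := n)) → S r = 0 := by
    intro r _ hr
    refine Finset.sum_eq_zero fun z hz ↦ h.facetDet_last_eq_zero_of_eq_zero
      (Finset.mem_filter.1 hz).2 fun hlast ↦ hr ?_
    obtain ⟨r', rfl⟩ := exists_permSnoc_eq ((Equiv.symm_apply_eq r).1 hlast).symm
    exact Finset.mem_image_of_mem _ (Finset.mem_univ _)
  rw [boundary, ← Finset.sum_subset (Finset.subset_univ _) other_faces,
    Finset.sum_image permSnoc_injective.injOn, Finset.sum_comm]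
  refine Finset.sum_congr rfl fun r _ ↦ ?_
  have fixes_last : (permSnoc r).symm (Fin.last n) = Fin.last n := by
    rw [Equiv.symm_apply_eq, permSnoc_last]
  simp only [hS, fixes_last]
  rw [sum_gridCells_last_eq_zero hN]
  simp only [facetDet_snoc_zero]

theorem IsSpernerLabelling.sum_simplexDet_eq_one (hN : 0 < N) {lam : (Fin n → ℕ) → ℕ}
    (h : IsSpernerLabelling N lam) :
    ∑ z ∈ gridCells n N, ∑ r, simplexDet lam z r = 1 := by
  induction n with
  | zero =>
    have (x : Fin 0 → ℕ) : lam x = 0 := Nat.le_zero.1 (h.le_dim x)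
    simp [gridCells, simplexDet, labelMatrix, this]
  | succ n ih => rw [h.sum_simplexDet_succ hN, ih h.snoc_zero]

theorem IsSpernerLabelling.exists_fully_labelled_cell (hN : 0 < N) {lam : (Fin n → ℕ) → ℕ}
    (h : IsSpernerLabelling N lam) :
    ∃ z : Fin n → ℕ, (∀ i, z i < N) ∧ ∀ j ≤ n, ∃ y ∈ Icc z (z + 1), lam y = j := by
  by_contra! hcon
  refine zero_ne_one' (ZMod 2) (Eq.trans ?_ (h.sum_simplexDet_eq_one hN))
  refine (Finset.sum_eq_zero fun z hz ↦ Finset.sum_eq_zero fun r _ ↦ ?_).symm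
  obtain ⟨j, hj, hy⟩ := hcon z (mem_gridCells.1 hz)
  exact labelMatrix_det_eq_zero ⟨j, Nat.lt_succ_of_le hj⟩ fun k ↦
    hy _ (kuhnVertex_mem_Icc z r k)

end Kuhn

/-! ### The Poincaré–Miranda theorem -/

section PoincareMiranda

theorem exists_cell_of_sign_predicate_fin {n N : ℕ} (hN : 0 < N)
    (P : (Fin n → ℕ) → Fin n → Prop) (hbot : ∀ x i, x i = 0 → ¬ P x i)
    (htop : ∀ x i, x i = N → P x i) :
    ∃ z : Fin n → ℕ, (∀ i, z i < N) ∧ (∀ i, ∃ y ∈ Icc z (z + 1), ¬ P y i) ∧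
      ∃ y ∈ Icc z (z + 1), ∀ i, P y i := by
  classical
  -- The label of `x` is the first coordinate at which `P` fails, and `n` if there is none.
  let fails (x : Fin n → ℕ) (j : ℕ) : Prop := ∀ h : j < n, ¬ P x ⟨j, h⟩
  have exists_fails (x) : ∃ j, fails x j := ⟨n, fun h ↦ absurd h (lt_irrefl n)⟩
  let lam (x : Fin n → ℕ) : ℕ := Nat.find (exists_fails x)
  have holds_of_lt {x} {i : Fin n} (hi : (i : ℕ) < lam x) : P x i := by
    have := Nat.find_min (exists_fails x) hi
    simpa [fails] using this
  have not_of_eq {x} {i : Fin n} (hi : lam x = i) : ¬ P x i := by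
    have : fails x (lam x) := Nat.find_spec (exists_fails x)
    rw [hi] at this
    exact this i.2
  have sperner : IsSpernerLabelling N lam :=
    { le_dim := fun x ↦ Nat.find_min' _ fun h ↦ absurd h (lt_irrefl n)
      le_of_eq_zero := fun x i hx ↦ not_lt.1 fun hi ↦ hbot x i hx (holds_of_lt hi)
      ne_of_eq_top := fun x i hx hi ↦ not_of_eq hi (htop x i hx) }
  obtain ⟨z, hz, hlabels⟩ := sperner.exists_fully_labelled_cell hN
  refine ⟨z, hz, fun i ↦ ?_, ?_⟩
  · obtain ⟨y, hy, hyi⟩ := hlabels i i.2.le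
    exact ⟨y, hy, not_of_eq hyi⟩
  · obtain ⟨y, hy, hyn⟩ := hlabels n le_rfl
    exact ⟨y, hy, fun i ↦ holds_of_lt (hyn.symm ▸ i.2)⟩

variable {ι : Type*}

theorem exists_cell_of_sign_predicate [Finite ι] {N : ℕ} (hN : 0 < N) (P : (ι → ℕ) → ι → Prop)
    (hbot : ∀ x i, x i = 0 → ¬ P x i) (htop : ∀ x i, x i = N → P x i) :
    ∃ z : ι → ℕ, (∀ i, z i < N) ∧ (∀ i, ∃ y ∈ Icc z (z + 1), ¬ P y i) ∧
      ∃ y ∈ Icc z (z + 1), ∀ i, P y i := by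
  let e := Finite.equivFin ι
  obtain ⟨z, hz, hneg, y, hy, hpos⟩ := exists_cell_of_sign_predicate_fin hN
    (fun x i ↦ P (x ∘ e) (e.symm i)) (fun x i hx ↦ hbot _ _ (by simpa using hx))
    (fun x i hx ↦ htop _ _ (by simpa using hx))
  refine ⟨z ∘ e, fun i ↦ hz _, fun i ↦ ?_, y ∘ e, ⟨fun i ↦ hy.1 _, fun i ↦ hy.2 _⟩, fun i ↦ ?_⟩
  · obtain ⟨y, hy, hyi⟩ := hneg (e i)
    exact ⟨y ∘ e, ⟨fun i ↦ hy.1 _, fun i ↦ hy.2 _⟩, by simpa using hyi⟩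
  · simpa using hpos (e i)

/-- The point with integer coordinates `x` in the subdivision of the box `[a, b]` into `Nⁿ` equal
boxes. -/
noncomputable def gridPoint (a b : ι → ℝ) (N : ℕ) (x : ι → ℕ) : ι → ℝ :=
  fun i ↦ a i + (b i - a i) * (x i / N)

variable {a b : ι → ℝ} {N : ℕ} {x y : ι → ℕ}

theorem gridPoint_mem_Icc (hab : a ≤ b) (hx : ∀ i, x i ≤ N) : gridPoint a b N x ∈ Icc a b := by
  have ratio_le (i) : (x i / N : ℝ) ≤ 1 :=
    div_le_one_of_le₀ (by exact_mod_cast hx i) N.cast_nonneg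
  have ratio_nonneg (i) : (0 : ℝ) ≤ x i / N := by positivity
  constructor <;> intro i <;> simp only [gridPoint] <;>
    nlinarith [hab i, ratio_le i, ratio_nonneg i]

theorem dist_gridPoint_le [Fintype ι] (hy : y ∈ Icc x (x + 1)) :
    dist (gridPoint a b N y) (gridPoint a b N x) ≤ dist b a / N := by
  refine (dist_pi_le_iff (by positivity)).2 fun i ↦ ?_
  have hxy : |(y i - x i : ℝ)| ≤ 1 := by
    have h₁ : (x i : ℝ) ≤ y i := by exact_mod_cast hy.1 i
    have h₂ : (y i : ℝ) ≤ x i + 1 := by exact_mod_cast hy.2 i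
    rw [abs_le]; constructor <;> linarith
  calc dist (gridPoint a b N y i) (gridPoint a b N x i)
      = |b i - a i| * |(y i - x i : ℝ)| / N := by
        rw [Real.dist_eq, ← abs_mul, ← Nat.abs_cast N, ← abs_div]
        simp only [gridPoint]
        congr 1
        ring
    _ ≤ dist b a * 1 / N := by
        gcongr
        exact (Real.dist_eq (b i) (a i)) ▸ dist_le_pi_dist b a i
    _ = dist b a / N := by rw [mul_one]

theorem exists_approx_zero [Fintype ι] {F : (ι → ℝ) → ι → ℝ} (hab : a ≤ b) (hN : 0 < N)
    (hlow : ∀ x ∈ Icc a b, ∀ i, x i = a i → F x i ≤ 0)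
    (hhigh : ∀ x ∈ Icc a b, ∀ i, x i = b i → 0 ≤ F x i) :
    ∃ z ∈ Icc a b, ∀ i, (∃ y ∈ Icc a b, dist y z ≤ dist b a / N ∧ F y i ≤ 0) ∧
      ∃ y ∈ Icc a b, dist y z ≤ dist b a / N ∧ 0 ≤ F y i := by
  obtain ⟨z, hz, hneg, y, hy, hpos⟩ := exists_cell_of_sign_predicate hN
    (fun x i ↦ x i ≠ 0 ∧ (x i = N ∨ 0 ≤ F (gridPoint a b N x) i))
    (fun x i hx h ↦ h.1 hx) (fun x i hx ↦ ⟨by omega, Or.inl hx⟩)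
  have mem_box {y} (hy : y ∈ Icc z (z + 1)) : gridPoint a b N y ∈ Icc a b :=
    gridPoint_mem_Icc hab fun i ↦ (hy.2 i).trans (hz i)
  refine ⟨_, mem_box ⟨le_rfl, fun i ↦ Nat.le_succ _⟩, fun i ↦
    ⟨?_, gridPoint a b N y, mem_box hy, dist_gridPoint_le hy, ?_⟩⟩
  · obtain ⟨y, hy, hyi⟩ := hneg i
    refine ⟨gridPoint a b N y, mem_box hy, dist_gridPoint_le hy, ?_⟩
    rcases eq_or_ne (y i) 0 with h | h
    · exact hlow _ (mem_box hy) i (by simp [gridPoint, h])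
    · exact le_of_not_ge fun h' ↦ hyi ⟨h, Or.inr h'⟩
  · rcases (hpos i).2 with h | h
    · exact hhigh _ (mem_box hy) i (by simp [gridPoint, h, hN.ne'])
    · exact h

theorem poincare_miranda [Finite ι] {F : (ι → ℝ) → ι → ℝ} (hab : a ≤ b)
    (hF : ContinuousOn F (Icc a b))
    (hlow : ∀ x ∈ Icc a b, ∀ i, x i = a i → F x i ≤ 0)
    (hhigh : ∀ x ∈ Icc a b, ∀ i, x i = b i → 0 ≤ F x i) :
    ∃ x ∈ Icc a b, F x = 0 := by
  have := Fintype.ofFinite ι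
  choose z hz hsign using fun p : ℕ ↦ exists_approx_zero hab p.succ_pos hlow hhigh
  obtain ⟨x, hx, φ, hφ, hlim⟩ := isCompact_Icc.tendsto_subseq hz
  have tendsto_F {y : ℕ → ι → ℝ} (hy : ∀ p, y p ∈ Icc a b)
      (hyz : ∀ p, dist (y p) (z p) ≤ dist b a / (p + 1 : ℕ)) :
      Tendsto (fun p ↦ F (y (φ p))) atTop (nhds (F x)) := by
    have dist_zero : Tendsto (fun p ↦ dist (z (φ p)) (y (φ p))) atTop (nhds 0) := by
      refine squeeze_zero (fun _ ↦ dist_nonneg) (fun p ↦ (dist_comm _ _).trans_le (hyz (φ p))) ?_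
      exact ((tendsto_const_div_atTop_nhds_zero_nat _).comp (tendsto_add_atTop_nat 1)).comp
        hφ.tendsto_atTop
    exact (hF x hx).tendsto.comp (tendsto_nhdsWithin_iff.2
      ⟨hlim.congr_dist dist_zero, Eventually.of_forall fun p ↦ hy _⟩)
  refine ⟨x, hx, funext fun i ↦ le_antisymm ?_ ?_⟩
  · choose y hy hyz hyi using fun p ↦ (hsign p i).1
    exact le_of_tendsto' (tendsto_pi_nhds.1 (tendsto_F hy hyz) i) fun p ↦ hyi _
  · choose y hy hyz hyi using fun p ↦ (hsign p i).2
    exact ge_of_tendsto' (tendsto_pi_nhds.1 (tendsto_F hy hyz) i) fun p ↦ hyi _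

end PoincareMiranda

/-! ### Carathéodory differential equations -/

section Caratheodory

variable {E : Type*} [NormedAddCommGroup E] {F : ℝ → E → E} {l : ℝ → ℝ} {c t : ℝ}

theorem intervalIntegrable_of_locallyIntegrable {f : ℝ → E} (hf : LocallyIntegrable f) (s t : ℝ) :
    IntervalIntegrable f volume s t :=
  intervalIntegrable_iff.2 <|
    (hf.integrableOn_isCompact isCompact_uIcc).mono_set uIoc_subset_uIcc

theorem continuous_primitive_of_locallyIntegrable [NormedSpace ℝ E] {f : ℝ → E}
    (hf : LocallyIntegrable f) (c : ℝ) : Continuous fun t ↦ ∫ r in c..t, f r :=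
  intervalIntegral.continuous_primitive (intervalIntegrable_of_locallyIntegrable hf) c

theorem locallyIntegrable_norm {f : ℝ → E} (hf : LocallyIntegrable f) :
    LocallyIntegrable fun t ↦ ‖f t‖ :=
  fun t ↦ (hf t).elim fun s hs ↦ ⟨s, hs.1, hs.2.norm⟩

theorem locallyIntegrable_mul_continuous {f h : ℝ → ℝ} (hf : LocallyIntegrable f)
    (hh : Continuous h) : LocallyIntegrable fun t ↦ f t * h t := by
  exact locallyIntegrable_iff.2 fun K hK ↦
    (locallyIntegrable_iff.1 hf K hK).mul_continuousOn hh.continuousOn hK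

theorem absolutelyContinuousOnInterval_comp_of_lipschitzOnWith {X Y : Type*}
    [PseudoMetricSpace X] [PseudoMetricSpace Y] {K : NNReal} {φ : X → Y} {f : ℝ → X} {a b : ℝ}
    (hφ : LipschitzOnWith K φ (f '' uIcc a b)) (hf : AbsolutelyContinuousOnInterval f a b) :
    AbsolutelyContinuousOnInterval (φ ∘ f) a b := by
  unfold AbsolutelyContinuousOnInterval at hf ⊢
  have hlim := hf.const_mul (K : ℝ)
  rw [mul_zero] at hlim
  refine squeeze_zero' (Eventually.of_forall fun I ↦ Finset.sum_nonneg fun i _ ↦ dist_nonneg) ?_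
    hlim
  refine eventually_inf_principal.2 <| Eventually.of_forall fun I hI ↦ ?_
  rw [Finset.mul_sum]
  exact Finset.sum_le_sum fun i hi ↦
    hφ.dist_le_mul _ (mem_image_of_mem f (hI.1 i hi).1) _ (mem_image_of_mem f (hI.1 i hi).2)

theorem integral_deriv_comp_primitive_mul {φ : ℝ → ℝ} (hφ : ContDiff ℝ 1 φ)
    (hl : LocallyIntegrable l) (c t : ℝ) :
    ∫ s in c..t, deriv φ (∫ r in c..s, l r) * l s = φ (∫ r in c..t, l r) - φ 0 := by
  set L : ℝ → ℝ := fun s ↦ ∫ r in c..s, l r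
  have hL : AbsolutelyContinuousOnInterval L c t :=
    (intervalIntegrable_of_locallyIntegrable hl c t)
      |>.absolutelyContinuousOnInterval_intervalIntegral left_mem_uIcc
  obtain ⟨K, hK⟩ := hφ.locallyLipschitz.locallyLipschitzOn.exists_lipschitzOnWith_of_compact
    (isCompact_uIcc.image_of_continuousOn hL.continuousOn)
  calc ∫ s in c..t, deriv φ (L s) * l s = ∫ s in c..t, deriv (φ ∘ L) s := by
        refine intervalIntegral.integral_congr_ae ?_
        filter_upwards [LocallyIntegrable.ae_hasDerivAt_integral hl] with s hs _
        exact ((hφ.differentiable one_ne_zero _).hasDerivAt.comp s (hs c)).deriv.symm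
    _ = φ (L t) - φ 0 := by
        rw [(absolutelyContinuousOnInterval_comp_of_lipschitzOnWith hK hL).integral_deriv_eq_sub]
        simp only [Function.comp_apply, L, intervalIntegral.integral_same]

/-- The weight `exp (2 |∫_c^t l|)` of Bielecki's norm, for which integration against `l` is a
contraction of ratio `1/2`. -/
noncomputable def bieleckiWeight (l : ℝ → ℝ) (c t : ℝ) : ℝ :=
  Real.exp (2 * |∫ r in c..t, l r|)

theorem bieleckiWeight_pos : 0 < bieleckiWeight l c t := Real.exp_pos _

theorem one_le_bieleckiWeight : 1 ≤ bieleckiWeight l c t := Real.one_le_exp (by positivity)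

theorem continuous_bieleckiWeight (hl : LocallyIntegrable l) (c : ℝ) :
    Continuous (bieleckiWeight l c) := by
  have := continuous_primitive_of_locallyIntegrable hl c
  unfold bieleckiWeight
  fun_prop

theorem abs_integral_exp_two_mul_abs_le (x : ℝ) :
    |∫ y in (0)..x, Real.exp (2 * |y|)| ≤ Real.exp (2 * |x|) / 2 := by
  wlog hx : 0 ≤ x generalizing x
  · have hneg := this (-x) (by linarith)
    have heven := intervalIntegral.integral_comp_neg (a := 0) (b := x)
      fun y : ℝ ↦ Real.exp (2 * |y|)
    simp only [abs_neg, neg_zero] at hneg heven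
    rwa [heven, intervalIntegral.integral_symm, abs_neg]
  have hexp : ∫ y in (0)..x, Real.exp (2 * |y|) = (Real.exp (2 * x) - 1) / 2 := by
    calc ∫ y in (0)..x, Real.exp (2 * |y|) = ∫ y in (0)..x, Real.exp (2 * y) := by
          refine intervalIntegral.integral_congr fun y hy ↦ ?_
          rw [uIcc_of_le hx] at hy
          simp only [abs_of_nonneg hy.1]
      _ = (Real.exp (2 * x) - 1) / 2 := by
          rw [intervalIntegral.integral_comp_mul_left Real.exp two_ne_zero, integral_exp]
          simp only [mul_zero, Real.exp_zero, smul_eq_mul]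
          ring
  have := Real.one_le_exp (show 0 ≤ 2 * x by linarith)
  rw [hexp, abs_of_nonneg hx, abs_of_nonneg (by linarith)]
  linarith

theorem abs_integral_mul_bieleckiWeight_le (hl : LocallyIntegrable l) :
    |∫ s in c..t, l s * bieleckiWeight l c s| ≤ bieleckiWeight l c t / 2 := by
  have hcont : Continuous fun y : ℝ ↦ Real.exp (2 * |y|) := by fun_prop
  have hderiv : deriv (fun x ↦ ∫ y in (0 : ℝ)..x, Real.exp (2 * |y|)) =
      fun x ↦ Real.exp (2 * |x|) := funext (hcont.deriv_integral _ 0)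
  have hφ : ContDiff ℝ 1 fun x ↦ ∫ y in (0 : ℝ)..x, Real.exp (2 * |y|) :=
    contDiff_one_iff_deriv.2
      ⟨intervalIntegral.differentiable_integral_of_continuous hcont, by rwa [hderiv]⟩
  have := integral_deriv_comp_primitive_mul hφ hl c t
  simp only [hderiv, intervalIntegral.integral_same, sub_zero] at this
  simp only [bieleckiWeight, mul_comm (l _)]
  exact this ▸ abs_integral_exp_two_mul_abs_le _

/-- A Carathéodory vector field whose Lipschitz constant at time `t` is the locally integrable
function `l t`. -/
structure IsCaratheodory (F : ℝ → E → E) (l : ℝ → ℝ) : Prop where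
  locallyIntegrable_comp : ∀ x : ℝ → E, Continuous x → LocallyIntegrable fun t ↦ F t (x t)
  locallyIntegrable : LocallyIntegrable l
  nonneg : ∀ t, 0 ≤ l t
  norm_sub_le : ∀ t x y, ‖F t x - F t y‖ ≤ l t * ‖x - y‖

theorem IsCaratheodory.norm_le_add (hF : IsCaratheodory F l) (t : ℝ) (x : E) :
    ‖F t x‖ ≤ ‖F t 0‖ + l t * ‖x‖ := by
  have := hF.norm_sub_le t x 0
  rw [sub_zero] at this
  linarith [norm_le_norm_add_norm_sub' (F t x) (F t 0)]

theorem IsCaratheodory.mono (hF : IsCaratheodory F l) {l' : ℝ → ℝ} (hl' : LocallyIntegrable l')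
    (hle : ∀ t, l t ≤ l' t) : IsCaratheodory F l' where
  locallyIntegrable_comp := hF.locallyIntegrable_comp
  locallyIntegrable := hl'
  nonneg t := (hF.nonneg t).trans (hle t)
  norm_sub_le t x y :=
    (hF.norm_sub_le t x y).trans (mul_le_mul_of_nonneg_right (hle t) (norm_nonneg _))

variable [NormedSpace ℝ E]

theorem norm_integral_le_bieleckiWeight (hl : LocallyIntegrable l) {f : ℝ → E} {C : ℝ}
    (hC : 0 ≤ C) (hf : ∀ s ∈ uIcc c t, ‖f s‖ ≤ C * (l s * bieleckiWeight l c s)) :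
    ‖∫ s in c..t, f s‖ ≤ C / 2 * bieleckiWeight l c t := by
  have h_int : IntervalIntegrable (fun s ↦ C * (l s * bieleckiWeight l c s)) volume c t :=
    ((intervalIntegrable_of_locallyIntegrable hl c t).mul_continuousOn
      (continuous_bieleckiWeight hl c).continuousOn).const_mul C
  calc ‖∫ s in c..t, f s‖ ≤ |∫ s in c..t, C * (l s * bieleckiWeight l c s)| :=
        intervalIntegral.norm_integral_le_abs_of_norm_le
          ((ae_restrict_iff' measurableSet_uIoc).2 <|
            Eventually.of_forall fun s hs ↦ hf s (uIoc_subset_uIcc hs)) h_int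
    _ ≤ C * (bieleckiWeight l c t / 2) := by
        rw [intervalIntegral.integral_const_mul, abs_mul, abs_of_nonneg hC]
        exact mul_le_mul_of_nonneg_left (abs_integral_mul_bieleckiWeight_le hl) hC
    _ = C / 2 * bieleckiWeight l c t := by ring

theorem norm_le_bieleckiWeight_of_integral_eq (hl : LocallyIntegrable l) (hl₀ : ∀ s, 0 ≤ l s)
    {z f : ℝ → E} (hz : Continuous z) (hf : ∀ s, ‖f s‖ ≤ l s * ‖z s‖)
    (hzf : ∀ s ∈ uIcc c t, z s = z c + ∫ r in c..s, f r) :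
    ‖z t‖ ≤ 2 * ‖z c‖ * bieleckiWeight l c t := by
  obtain ⟨s, hs, hmax⟩ := isCompact_uIcc.exists_isMaxOn ⟨c, left_mem_uIcc (b := t)⟩
    (hz.norm.div (continuous_bieleckiWeight hl c) fun _ ↦ bieleckiWeight_pos.ne').continuousOn
  set M := ‖z s‖ / bieleckiWeight l c s
  have hM₀ : 0 ≤ M := div_nonneg (norm_nonneg _) bieleckiWeight_pos.le
  have hzM : ∀ r ∈ uIcc c t, ‖z r‖ ≤ M * bieleckiWeight l c r := fun r hr ↦
    (div_le_iff₀ bieleckiWeight_pos).1 (hmax hr)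
  have h_int : ‖∫ r in c..s, f r‖ ≤ M / 2 * bieleckiWeight l c s := by
    refine norm_integral_le_bieleckiWeight hl hM₀ fun r hr ↦ (hf r).trans ?_
    rw [mul_left_comm]
    exact mul_le_mul_of_nonneg_left (hzM r (uIcc_subset_uIcc left_mem_uIcc hs hr)) (hl₀ r)
  have hzs : ‖z s‖ = M * bieleckiWeight l c s := (div_mul_cancel₀ _ bieleckiWeight_pos.ne').symm
  have hsum : ‖z s‖ ≤ ‖z c‖ + ‖∫ r in c..s, f r‖ := hzf s hs ▸ norm_add_le _ _
  have hMc : M ≤ 2 * ‖z c‖ := by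
    nlinarith [one_le_bieleckiWeight (l := l) (c := c) (t := s)]
  exact (hzM t right_mem_uIcc).trans (mul_le_mul_of_nonneg_right hMc bieleckiWeight_pos.le)

/-- `x` solves the integral form of `x' = F(t, x)` between `c` and `t`. -/
def IsIntegralSolution (F : ℝ → E → E) (x : ℝ → E) (c t : ℝ) : Prop :=
  Continuous x ∧ ∀ s ∈ uIcc c t, x s = x c + ∫ r in c..s, F r (x r)

theorem IsCaratheodory.norm_sub_le_of_isIntegralSolution (hF : IsCaratheodory F l) {x y : ℝ → E}
    (hx : IsIntegralSolution F x c t) (hy : IsIntegralSolution F y c t) :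
    ‖x t - y t‖ ≤ 2 * ‖x c - y c‖ * bieleckiWeight l c t := by
  refine norm_le_bieleckiWeight_of_integral_eq (z := fun s ↦ x s - y s)
    (f := fun s ↦ F s (x s) - F s (y s)) hF.locallyIntegrable hF.nonneg (hx.1.sub hy.1)
    (fun s ↦ hF.norm_sub_le s _ _) fun s hs ↦ ?_
  rw [intervalIntegral.integral_sub
    (intervalIntegrable_of_locallyIntegrable (hF.locallyIntegrable_comp x hx.1) c s)
    (intervalIntegrable_of_locallyIntegrable (hF.locallyIntegrable_comp y hy.1) c s),
    hx.2 s hs, hy.2 s hs]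
  abel

theorem IsCaratheodory.eq_of_isIntegralSolution (hF : IsCaratheodory F l) {x y : ℝ → E}
    (hx : IsIntegralSolution F x c t) (hy : IsIntegralSolution F y c t) (hc : x c = y c) :
    x t = y t := by
  have := hF.norm_sub_le_of_isIntegralSolution hx hy
  rw [hc, sub_self, norm_zero, mul_zero, zero_mul] at this
  exact sub_eq_zero.1 (norm_le_zero_iff.1 this)

theorem IsCaratheodory.exists_weighted_picard (hF : IsCaratheodory F l) (hF₀ : ∀ t, ‖F t 0‖ ≤ l t)
    (c : ℝ) (p : E) (b : BoundedContinuousFunction ℝ E) :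
    ∃ b' : BoundedContinuousFunction ℝ E, ∀ t,
      bieleckiWeight l c t • b' t = p + ∫ r in c..t, F r (bieleckiWeight l c r • b r) := by
  set W := bieleckiWeight l c
  have hWc : Continuous W := continuous_bieleckiWeight hF.locallyIntegrable c
  have hcont : Continuous fun t ↦ ∫ r in c..t, F r (W r • b r) :=
    continuous_primitive_of_locallyIntegrable
      (hF.locallyIntegrable_comp _ (hWc.smul b.continuous)) c
  have hbound : ∀ r, ‖F r (W r • b r)‖ ≤ (1 + ‖b‖) * (l r * W r) := fun r ↦ by
    have hlin := hF.norm_le_add r (W r • b r)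
    rw [norm_smul, Real.norm_of_nonneg bieleckiWeight_pos.le] at hlin
    have hb := mul_le_mul_of_nonneg_left (b.norm_coe_le_norm r)
      (mul_nonneg (hF.nonneg r) (bieleckiWeight_pos (l := l) (c := c) (t := r)).le)
    nlinarith [hF₀ r, hF.nonneg r, one_le_bieleckiWeight (l := l) (c := c) (t := r)]
  refine ⟨.ofNormedAddCommGroup (fun t ↦ (W t)⁻¹ • (p + ∫ r in c..t, F r (W r • b r)))
    ((hWc.inv₀ fun _ ↦ bieleckiWeight_pos.ne').smul (continuous_const.add hcont))
    (‖p‖ + (1 + ‖b‖) / 2) fun t ↦ ?_, fun t ↦ ?_⟩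
  · rw [norm_smul, norm_inv, Real.norm_of_nonneg bieleckiWeight_pos.le,
      inv_mul_le_iff₀ bieleckiWeight_pos]
    have h_int := norm_integral_le_bieleckiWeight (t := t) hF.locallyIntegrable
      (by positivity) fun r _ ↦ hbound r
    have hp := mul_le_mul_of_nonneg_left (one_le_bieleckiWeight (l := l) (c := c) (t := t))
      (norm_nonneg p)
    linarith [norm_add_le p (∫ r in c..t, F r (W r • b r))]
  · exact smul_inv_smul₀ bieleckiWeight_pos.ne' _

theorem IsCaratheodory.exists_isIntegralSolution_of_norm_zero_le [CompleteSpace E]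
    (hF : IsCaratheodory F l) (hF₀ : ∀ t, ‖F t 0‖ ≤ l t) (c : ℝ) (p : E) :
    ∃ x : ℝ → E, Continuous x ∧ ∀ t, x t = p + ∫ r in c..t, F r (x r) := by
  choose Φ hΦ using hF.exists_weighted_picard hF₀ c p
  set W := bieleckiWeight l c
  have hWc : Continuous W := continuous_bieleckiWeight hF.locallyIntegrable c
  have h_int (b : BoundedContinuousFunction ℝ E) (t : ℝ) :
      IntervalIntegrable (fun r ↦ F r (W r • b r)) volume c t :=
    intervalIntegrable_of_locallyIntegrable
      (hF.locallyIntegrable_comp _ (hWc.smul b.continuous)) c t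
  have hcontr : ContractingWith (1 / 2) Φ := by
    refine ⟨by norm_num, LipschitzWith.of_dist_le_mul fun b b' ↦
      (BoundedContinuousFunction.dist_le (by positivity)).2 fun t ↦ ?_⟩
    have hle : ∀ r ∈ uIcc c t, ‖F r (W r • b r) - F r (W r • b' r)‖ ≤
        dist b b' * (l r * W r) := fun r _ ↦ by
      calc ‖F r (W r • b r) - F r (W r • b' r)‖ ≤ l r * (W r * dist (b r) (b' r)) := by
            refine (hF.norm_sub_le r _ _).trans_eq ?_
            rw [← smul_sub, norm_smul, Real.norm_of_nonneg bieleckiWeight_pos.le, dist_eq_norm]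
        _ ≤ l r * (W r * dist b b') := mul_le_mul_of_nonneg_left (mul_le_mul_of_nonneg_left
            (b.dist_coe_le_dist r) bieleckiWeight_pos.le) (hF.nonneg r)
        _ = dist b b' * (l r * W r) := by ring
    have hdiff : W t • (Φ b t - Φ b' t) =
        ∫ r in c..t, (F r (W r • b r) - F r (W r • b' r)) := by
      rw [intervalIntegral.integral_sub (h_int b t) (h_int b' t), smul_sub, hΦ, hΦ,
        add_sub_add_left_eq_sub]
    have hnorm := norm_integral_le_bieleckiWeight hF.locallyIntegrable dist_nonneg hle
    rw [← hdiff, norm_smul, Real.norm_of_nonneg bieleckiWeight_pos.le, ← dist_eq_norm,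
      mul_comm] at hnorm
    have := le_of_mul_le_mul_right hnorm bieleckiWeight_pos
    simpa [div_eq_inv_mul] using this
  set b := ContractingWith.fixedPoint Φ hcontr
  refine ⟨fun t ↦ W t • b t, hWc.smul b.continuous, fun t ↦ ?_⟩
  rw [← hΦ b t, hcontr.fixedPoint_isFixedPt]

theorem IsCaratheodory.exists_isIntegralSolution [CompleteSpace E] (hF : IsCaratheodory F l)
    (c : ℝ) (p : E) : ∃ x : ℝ → E, x c = p ∧ ∀ t, IsIntegralSolution F x c t := by
  have hF' : IsCaratheodory F fun t ↦ l t + ‖F t 0‖ :=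
    hF.mono (hF.locallyIntegrable.add 
      (locallyIntegrable_norm (hF.locallyIntegrable_comp 0 continuous_zero)))
      fun t ↦ le_add_of_nonneg_right (norm_nonneg _)
  obtain ⟨x, hx, hxF⟩ := hF'.exists_isIntegralSolution_of_norm_zero_le
    (fun t ↦ le_add_of_nonneg_left (hF.nonneg t)) c p
  have hc : x c = p := by simpa using hxF c
  exact ⟨x, hc, fun t ↦ ⟨hx, fun s _ ↦ hc.symm ▸ hxF s⟩⟩

theorem IsCaratheodory.lipschitzWith_of_isIntegralSolution (hF : IsCaratheodory F l)
    {x : E → ℝ → E} (hc : ∀ p, x p c = p) (hx : ∀ p, IsIntegralSolution F (x p) c t) :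
    LipschitzWith (2 * bieleckiWeight l c t).toNNReal fun p ↦ x p t := by
  refine LipschitzWith.of_dist_le_mul fun p p' ↦ ?_
  have := hF.norm_sub_le_of_isIntegralSolution (hx p) (hx p')
  rw [hc, hc, ← dist_eq_norm, ← dist_eq_norm, mul_right_comm] at this
  rwa [Real.coe_toNNReal _ (mul_nonneg two_pos.le bieleckiWeight_pos.le)]

end Caratheodory

/-! ### The planar system `u' = v`, `v' = -q(t) f(u)` -/

section PlanarSystem

variable {q f u v : ℝ → ℝ}

/-- The vector field of the planar system `u' = v`, `v' = -q(t) f(u)`. -/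
def planarField (q f : ℝ → ℝ) (t : ℝ) (x : ℝ × ℝ) : ℝ × ℝ := (x.2, -(q t * f x.1))

/-- `(u, v)` is a trajectory of the planar system `u' = v`, `v' = -q(t) f(u)`, the second equation
being understood in integral form. -/
structure IsTrajectory (q f u v : ℝ → ℝ) : Prop where
  hasDerivAt : ∀ t, HasDerivAt u (v t) t
  continuous_snd : Continuous v
  snd_eq : ∀ s t, v t = v s - ∫ r in s..t, q r * f (u r)

/-- The standing hypotheses on a weight `q` and a nonlinearity `f`; `f` is extended by zero to the
negative half line, so that a trajectory entering `{u < 0, v < 0}` stays there forever. -/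
structure AdmissiblePair (q f : ℝ → ℝ) : Prop where
  locallyIntegrable : LocallyIntegrable q
  lipschitz : ∃ Λ, LipschitzWith Λ f
  eq_zero : ∀ x ≤ 0, f x = 0
  nonneg : ∀ x, 0 ≤ f x

theorem IsTrajectory.continuous_fst (h : IsTrajectory q f u v) : Continuous u :=
  continuous_iff_continuousAt.2 fun t ↦ (h.hasDerivAt t).continuousAt

theorem IsTrajectory.fst_eq (h : IsTrajectory q f u v) (s t : ℝ) :
    u t = u s + ∫ r in s..t, v r := by
  rw [intervalIntegral.integral_eq_sub_of_hasDerivAt (fun x _ ↦ h.hasDerivAt x)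
    (h.continuous_snd.intervalIntegrable _ _)]
  ring

theorem IsTrajectory.comp_add_const (h : IsTrajectory q f u v) {S : ℝ}
    (hq : Function.Periodic q S) : IsTrajectory q f (fun t ↦ u (t + S)) fun t ↦ v (t + S) where
  hasDerivAt t := (h.hasDerivAt (t + S)).comp_add_const t S
  continuous_snd := h.continuous_snd.comp (continuous_add_const S)
  snd_eq s t := by
    rw [h.snd_eq (s + S) (t + S),
      ← intervalIntegral.integral_comp_add_right (fun r ↦ q r * f (u r)) S]
    simp only [hq _]

theorem AdmissiblePair.continuous (b : AdmissiblePair q f) : Continuous f :=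
  b.lipschitz.elim fun _ h ↦ h.continuous

theorem AdmissiblePair.locallyIntegrable_mul_comp (b : AdmissiblePair q f) {x : ℝ → ℝ}
    (hx : Continuous x) : LocallyIntegrable fun t ↦ q t * f (x t) :=
  locallyIntegrable_mul_continuous b.locallyIntegrable (b.continuous.comp hx)

theorem AdmissiblePair.exists_isCaratheodory (b : AdmissiblePair q f) :
    ∃ l, IsCaratheodory (planarField q f) l := by
  obtain ⟨Λ, hΛ⟩ := b.lipschitz
  refine ⟨fun t ↦ 1 + Λ * ‖q t‖, fun x hx ↦ ?_, ?_, fun t ↦ by positivity, fun t x y ↦ ?_⟩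
  · rw [locallyIntegrable_iff]
    exact fun K hK ↦ (hx.snd.continuousOn.integrableOn_compact hK).prodMk
      ((b.locallyIntegrable_mul_comp hx.fst).neg.integrableOn_isCompact hK)
  · exact continuous_const.locallyIntegrable.add
      ((locallyIntegrable_norm b.locallyIntegrable).smul (Λ : ℝ))
  · have hfst : ‖x.1 - y.1‖ ≤ ‖x - y‖ := norm_fst_le (x - y)
    have hsnd : ‖x.2 - y.2‖ ≤ ‖x - y‖ := norm_snd_le (x - y)
    have hdiff : planarField q f t x - planarField q f t y =
        (x.2 - y.2, -(q t * (f x.1 - f y.1))) := by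
      ext <;> simp only [planarField, Prod.fst_sub, Prod.snd_sub]
      ring
    have hf : ‖q t * (f x.1 - f y.1)‖ ≤ Λ * ‖q t‖ * ‖x - y‖ := by
      calc ‖q t * (f x.1 - f y.1)‖ ≤ ‖q t‖ * (Λ * ‖x.1 - y.1‖) := by
            rw [norm_mul, ← dist_eq_norm, ← dist_eq_norm]
            exact mul_le_mul_of_nonneg_left (hΛ.dist_le_mul _ _) (norm_nonneg _)
        _ ≤ ‖q t‖ * (Λ * ‖x - y‖) := by gcongr
        _ = Λ * ‖q t‖ * ‖x - y‖ := by ring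
    rw [hdiff, Prod.norm_def, norm_neg, add_mul, one_mul]
    exact max_le (hsnd.trans (le_add_of_nonneg_right (by positivity)))
      (hf.trans (le_add_of_nonneg_left (norm_nonneg _)))

theorem AdmissiblePair.isIntegralSolution_iff (b : AdmissiblePair q f) (hu : Continuous u)
    (hv : Continuous v) {c t : ℝ} :
    IsIntegralSolution (planarField q f) (fun s ↦ (u s, v s)) c t ↔
      ∀ s ∈ uIcc c t, u s = u c + ∫ r in c..s, v r ∧ v s = v c - ∫ r in c..s, q r * f (u r) := by
  have h_int (s : ℝ) : ∫ r in c..s, planarField q f r (u r, v r) =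
      (∫ r in c..s, v r, -∫ r in c..s, q r * f (u r)) := by
    obtain ⟨l, hl⟩ := b.exists_isCaratheodory
    have h_int := intervalIntegrable_of_locallyIntegrable
      (hl.locallyIntegrable_comp (fun s ↦ (u s, v s)) (hu.prodMk hv)) c s
    refine Prod.ext ((ContinuousLinearMap.fst ℝ ℝ ℝ).intervalIntegral_comp_comm h_int).symm ?_
    rw [← intervalIntegral.integral_neg]
    exact ((ContinuousLinearMap.snd ℝ ℝ ℝ).intervalIntegral_comp_comm h_int).symm
  simp only [IsIntegralSolution, hu.prodMk hv, true_and, h_int, Prod.ext_iff, Prod.fst_add,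
    Prod.snd_add, ← sub_eq_add_neg]

theorem IsTrajectory.isIntegralSolution (b : AdmissiblePair q f) (h : IsTrajectory q f u v)
    (c t : ℝ) : IsIntegralSolution (planarField q f) (fun s ↦ (u s, v s)) c t :=
  (b.isIntegralSolution_iff h.continuous_fst h.continuous_snd).2 fun s _ ↦
    ⟨h.fst_eq c s, h.snd_eq c s⟩

theorem AdmissiblePair.exists_isTrajectory (b : AdmissiblePair q f) (c : ℝ) (p : ℝ × ℝ) :
    ∃ x : ℝ → ℝ × ℝ, x c = p ∧ IsTrajectory q f (fun t ↦ (x t).1) fun t ↦ (x t).2 := by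
  obtain ⟨l, hl⟩ := b.exists_isCaratheodory
  obtain ⟨x, hxc, hx⟩ := hl.exists_isIntegralSolution c p
  have hcont : Continuous x := (hx c).1
  have heq (s : ℝ) := (b.isIntegralSolution_iff hcont.fst hcont.snd).1 (hx s) s right_mem_uIcc
  refine ⟨x, hxc, fun t ↦ ?_, hcont.snd, fun s t ↦ ?_⟩
  · rw [funext fun s ↦ (heq s).1]
    exact (hcont.snd.integral_hasStrictDerivAt c t).hasDerivAt.const_add _
  · have h_int := intervalIntegrable_of_locallyIntegrable (b.locallyIntegrable_mul_comp hcont.fst)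
    linarith [(heq s).2, (heq t).2,
      intervalIntegral.integral_add_adjacent_intervals (h_int c s) (h_int s t)]

/-- The solution of the planar system starting from `p` at time `c`. -/
noncomputable def AdmissiblePair.flow (b : AdmissiblePair q f) (c : ℝ) (p : ℝ × ℝ) : ℝ → ℝ × ℝ :=
  (b.exists_isTrajectory c p).choose

variable (b : AdmissiblePair q f)
include b

theorem AdmissiblePair.flow_self (c : ℝ) (p : ℝ × ℝ) : b.flow c p c = p :=
  (b.exists_isTrajectory c p).choose_spec.1

theorem AdmissiblePair.isTrajectory_flow (c : ℝ) (p : ℝ × ℝ) :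
    IsTrajectory q f (fun t ↦ (b.flow c p t).1) fun t ↦ (b.flow c p t).2 :=
  (b.exists_isTrajectory c p).choose_spec.2

theorem AdmissiblePair.eq_flow (h : IsTrajectory q f u v) (c t : ℝ) :
    (u t, v t) = b.flow c (u c, v c) t := by
  obtain ⟨l, hl⟩ := b.exists_isCaratheodory
  exact hl.eq_of_isIntegralSolution (h.isIntegralSolution b c t)
    ((b.isTrajectory_flow c _).isIntegralSolution b c t) (b.flow_self c _).symm

theorem AdmissiblePair.flow_add_period {S : ℝ} (hq : Function.Periodic q S) (c : ℝ) (p : ℝ × ℝ)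
    (t : ℝ) : b.flow (c + S) p (t + S) = b.flow c p t := by
  have := b.eq_flow ((b.isTrajectory_flow (c + S) p).comp_add_const hq) c t
  rwa [Prod.mk.eta, Prod.mk.eta, b.flow_self] at this

theorem AdmissiblePair.continuous_flow (c t : ℝ) : Continuous fun p ↦ b.flow c p t := by
  obtain ⟨l, hl⟩ := b.exists_isCaratheodory
  exact (hl.lipschitzWith_of_isIntegralSolution (fun p ↦ b.flow_self c p)
    fun p ↦ (b.isTrajectory_flow c p).isIntegralSolution b c t).continuous

end PlanarSystem

section Comparison

variable {q f u v : ℝ → ℝ} {s t k : ℝ}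

theorem IsTrajectory.fst_le_add_mul (h : IsTrajectory q f u v) (hst : s ≤ t)
    (hk : ∀ r ∈ Icc s t, v r ≤ k) : u t ≤ u s + k * (t - s) := by
  have := intervalIntegral.integral_mono_on hst (h.continuous_snd.intervalIntegrable s t)
    (intervalIntegrable_const (μ := volume)) hk
  rw [intervalIntegral.integral_const, smul_eq_mul] at this
  linarith [h.fst_eq s t]

theorem IsTrajectory.add_mul_le_fst (h : IsTrajectory q f u v) (hst : s ≤ t)
    (hk : ∀ r ∈ Icc s t, k ≤ v r) : u s + k * (t - s) ≤ u t := by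
  have := intervalIntegral.integral_mono_on hst (intervalIntegrable_const (μ := volume))
    (h.continuous_snd.intervalIntegrable s t) hk
  rw [intervalIntegral.integral_const, smul_eq_mul] at this
  linarith [h.fst_eq s t]

variable (b : AdmissiblePair q f) (h : IsTrajectory q f u v)
include b h

theorem IsTrajectory.snd_le_of_ae_le (hst : s ≤ t)
    (hk : ∀ᵐ r ∂volume.restrict (Icc s t), q r * k ≤ q r * f (u r)) :
    v t ≤ v s - k * ∫ r in s..t, q r := by
  have := intervalIntegral.integral_mono_ae_restrict hst
    ((intervalIntegrable_of_locallyIntegrable b.locallyIntegrable s t).mul_const k)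
    (intervalIntegrable_of_locallyIntegrable
      (b.locallyIntegrable_mul_comp h.continuous_fst) s t) hk
  rw [intervalIntegral.integral_mul_const] at this
  linarith [h.snd_eq s t]

theorem IsTrajectory.le_snd_of_ae_le (hst : s ≤ t)
    (hk : ∀ᵐ r ∂volume.restrict (Icc s t), q r * f (u r) ≤ q r * k) :
    v s - k * (∫ r in s..t, q r) ≤ v t := by
  have := intervalIntegral.integral_mono_ae_restrict hst
    (intervalIntegrable_of_locallyIntegrable
      (b.locallyIntegrable_mul_comp h.continuous_fst) s t)
    ((intervalIntegrable_of_locallyIntegrable b.locallyIntegrable s t).mul_const k) hk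
  rw [intervalIntegral.integral_mul_const] at this
  linarith [h.snd_eq s t]

theorem IsTrajectory.snd_le_of_weight_nonneg (hst : s ≤ t)
    (hq : ∀ᵐ r ∂volume.restrict (Icc s t), 0 ≤ q r) (hk : ∀ r ∈ Icc s t, k ≤ f (u r)) :
    v t ≤ v s - k * ∫ r in s..t, q r := by
  refine h.snd_le_of_ae_le b hst ?_
  filter_upwards [hq, ae_restrict_mem measurableSet_Icc] with r hr hmem
  exact mul_le_mul_of_nonneg_left (hk r hmem) hr

theorem IsTrajectory.le_snd_of_weight_nonneg (hst : s ≤ t)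
    (hq : ∀ᵐ r ∂volume.restrict (Icc s t), 0 ≤ q r) (hk : ∀ r ∈ Icc s t, f (u r) ≤ k) :
    v s - k * (∫ r in s..t, q r) ≤ v t := by
  refine h.le_snd_of_ae_le b hst ?_
  filter_upwards [hq, ae_restrict_mem measurableSet_Icc] with r hr hmem
  exact mul_le_mul_of_nonneg_left (hk r hmem) hr

theorem IsTrajectory.snd_le_of_weight_nonpos (hst : s ≤ t)
    (hq : ∀ᵐ r ∂volume.restrict (Icc s t), q r ≤ 0) (hk : ∀ r ∈ Icc s t, f (u r) ≤ k) :
    v t ≤ v s - k * ∫ r in s..t, q r := by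
  refine h.snd_le_of_ae_le b hst ?_
  filter_upwards [hq, ae_restrict_mem measurableSet_Icc] with r hr hmem
  exact mul_le_mul_of_nonpos_left (hk r hmem) hr

theorem IsTrajectory.le_snd_of_weight_nonpos (hst : s ≤ t)
    (hq : ∀ᵐ r ∂volume.restrict (Icc s t), q r ≤ 0) (hk : ∀ r ∈ Icc s t, k ≤ f (u r)) :
    v s - k * (∫ r in s..t, q r) ≤ v t := by
  refine h.le_snd_of_ae_le b hst ?_
  filter_upwards [hq, ae_restrict_mem measurableSet_Icc] with r hr hmem
  exact mul_le_mul_of_nonpos_left (hk r hmem) hr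

theorem IsTrajectory.monotoneOn_snd (hq : ∀ᵐ r ∂volume.restrict (Icc s t), q r ≤ 0) :
    MonotoneOn v (Icc s t) := fun x hx y hy hxy ↦ by
  have := h.le_snd_of_weight_nonpos b hxy
    (ae_restrict_of_ae_restrict_of_subset (Icc_subset_Icc hx.1 hy.2) hq) fun r _ ↦ b.nonneg (u r)
  rwa [zero_mul, sub_zero] at this

theorem IsTrajectory.antitoneOn_snd (hq : ∀ᵐ r ∂volume.restrict (Icc s t), 0 ≤ q r) :
    AntitoneOn v (Icc s t) := fun x hx y hy hxy ↦ by
  have := h.snd_le_of_weight_nonneg b hxy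
    (ae_restrict_of_ae_restrict_of_subset (Icc_subset_Icc hx.1 hy.2) hq) fun r _ ↦ b.nonneg (u r)
  rwa [zero_mul, sub_zero] at this

theorem IsTrajectory.eq_affine_of_nonpos (hu : u s ≤ 0) (hv : v s ≤ 0) (hst : s ≤ t) :
    u t = u s + v s * (t - s) ∧ v t = v s := by
  have haffine : IsIntegralSolution (planarField q f) (fun r ↦ (u s + v s * (r - s), v s)) s t := by
    refine (b.isIntegralSolution_iff (by fun_prop) (by fun_prop)).2 fun r hr ↦ ⟨?_, ?_⟩
    · rw [intervalIntegral.integral_const, smul_eq_mul]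
      ring
    · have hzero : ∫ x in s..r, q x * f (u s + v s * (x - s)) = 0 := by
        refine intervalIntegral.integral_zero_ae <| Eventually.of_forall fun x hx ↦ ?_
        rw [uIcc_of_le hst] at hr
        rw [uIoc_of_le hr.1] at hx
        rw [b.eq_zero _ (by nlinarith [hx.1]), mul_zero]
      rw [hzero, sub_zero]
  obtain ⟨l, hl⟩ := b.exists_isCaratheodory
  exact Prod.ext_iff.1 (hl.eq_of_isIntegralSolution (h.isIntegralSolution b s t) haffine (by simp))

omit b in
theorem IsTrajectory.exists_neg_of_fst_neg (hst : s ≤ t) (hs : 0 ≤ u s) (ht : u t < 0) :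
    ∃ ξ ∈ Icc s t, u ξ < 0 ∧ v ξ < 0 := by
  obtain ⟨ζ, ⟨hζ, hζ₀⟩, hmax⟩ := (isCompact_Icc.inter_right
    (isClosed_le continuous_const h.continuous_fst)).exists_isMaxOn
      ⟨s, left_mem_Icc.2 hst, hs⟩ continuousOn_id
  have hlt : ζ < t := hζ.2.lt_of_ne fun e ↦ ht.not_ge (e ▸ hζ₀)
  obtain ⟨ξ, hξ, hslope⟩ := exists_hasDerivAt_eq_slope u v hlt h.continuous_fst.continuousOn
    fun x _ ↦ h.hasDerivAt x
  have hξmem : ξ ∈ Icc s t := ⟨hζ.1.trans hξ.1.le, hξ.2.le⟩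
  refine ⟨ξ, hξmem, lt_of_not_ge fun hu ↦ hξ.1.not_ge (hmax ⟨hξmem, hu⟩), ?_⟩
  rw [hslope]
  exact div_neg_of_neg_of_pos (sub_neg.2 (ht.trans_le hζ₀)) (sub_pos.2 hlt)

theorem IsTrajectory.neg_of_fst_neg {t' : ℝ} (hst : s ≤ t) (htt' : t ≤ t') (hs : 0 ≤ u s)
    (ht : u t < 0) : u t' < 0 ∧ v t' < 0 := by
  obtain ⟨ξ, hξ, hu, hv⟩ := h.exists_neg_of_fst_neg hst hs ht
  obtain ⟨hu', hv'⟩ := h.eq_affine_of_nonpos b hu.le hv.le (hξ.2.trans htt')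
  rw [hu', hv']
  exact ⟨by nlinarith [hξ.2], hv⟩

end Comparison

section Apriori

variable {q f u v : ℝ → ℝ} {σ α β τ δ M s₀ R : ℝ}

theorem mul_le_of_concaveOn_of_nonneg (hu : ConcaveOn ℝ (Icc σ τ) u)
    (hu₀ : ∀ t ∈ Icc σ τ, 0 ≤ u t) (hδ : 0 < δ) (hστ : σ < τ) {t z : ℝ} (hz : z ∈ Icc σ τ)
    (htσ : δ * (τ - σ) ≤ t - σ) (htτ : δ * (τ - σ) ≤ τ - t) : δ * u z ≤ u t := by
  have hσt : σ < t := by linarith [mul_pos hδ (sub_pos.2 hστ)]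
  have htτ' : t < τ := by linarith [mul_pos hδ (sub_pos.2 hστ)]
  have hσ₀ := hu₀ σ (left_mem_Icc.2 hστ.le)
  have hτ₀ := hu₀ τ (right_mem_Icc.2 hστ.le)
  have hz₀ := hu₀ z hz
  rcases lt_trichotomy t z with htz | rfl | hzt
  · have hslope := hu.slope_anti_adjacent (left_mem_Icc.2 hστ.le) hz hσt htz
    rw [div_le_div_iff₀ (sub_pos.2 htz) (sub_pos.2 hσt)] at hslope
    have hδz : δ * (z - σ) ≤ t - σ := by nlinarith [hz.2]
    nlinarith [mul_le_mul_of_nonneg_left hδz hz₀, mul_nonneg hσ₀ (sub_pos.2 htz).le]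
  · exact mul_le_of_le_one_left hz₀ (by nlinarith)
  · have hslope := hu.slope_anti_adjacent hz (right_mem_Icc.2 hστ.le) hzt htτ'
    rw [div_le_div_iff₀ (sub_pos.2 htτ') (sub_pos.2 hzt)] at hslope
    have hδz : δ * (τ - z) ≤ τ - t := by nlinarith [hz.1]
    nlinarith [mul_le_mul_of_nonneg_left hδz hz₀, mul_nonneg hτ₀ (sub_pos.2 hzt).le]

theorem IsTrajectory.concaveOn_fst (b : AdmissiblePair q f) (h : IsTrajectory q f u v)
    (hq : ∀ᵐ r ∂volume.restrict (Icc σ τ), 0 ≤ q r) : ConcaveOn ℝ (Icc σ τ) u := by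
  have hderiv : deriv u = v := funext fun t ↦ (h.hasDerivAt t).deriv
  refine AntitoneOn.concaveOn_of_deriv (convex_Icc σ τ) h.continuous_fst.continuousOn
    (fun t _ ↦ (h.hasDerivAt t).differentiableAt.differentiableWithinAt) ?_
  rw [hderiv]
  exact (h.antitoneOn_snd b hq).mono interior_subset

theorem IsTrajectory.fst_le_of_superlinear (b : AdmissiblePair q f) (h : IsTrajectory q f u v)
    (hσα : σ < α) (hαβ : α ≤ β) (hβτ : β < τ) (hq : ∀ᵐ r ∂volume.restrict (Icc σ τ), 0 ≤ q r)
    (hδ : 0 < δ) (hδα : δ * (τ - σ) ≤ α - σ) (hδβ : δ * (τ - σ) ≤ τ - β)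
    (hM : 0 ≤ M) (hMf : ∀ s, s₀ ≤ s → M * s ≤ f s)
    (hMq : 1 / (α - σ) + 1 / (τ - β) < M * δ * ∫ r in α..β, q r) (hR : 0 ≤ R) (hs₀ : s₀ ≤ δ * R)
    (hu : ∀ t ∈ Icc σ τ, 0 ≤ u t) : ∀ t ∈ Icc σ τ, u t ≤ R := by
  have hσ : σ ∈ Icc σ τ := ⟨le_rfl, by linarith⟩
  have hτ : τ ∈ Icc σ τ := ⟨by linarith, le_rfl⟩
  have hα : α ∈ Icc σ τ := ⟨hσα.le, by linarith⟩
  have hβ : β ∈ Icc σ τ := ⟨by linarith, hβτ.le⟩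
  have hanti := h.antitoneOn_snd b hq
  obtain ⟨z, hz, hmax⟩ := isCompact_Icc.exists_isMaxOn ⟨σ, hσ⟩ h.continuous_fst.continuousOn
  have hle : ∀ r ∈ Icc σ τ, u r ≤ u z := fun r hr ↦ hmax hr
  refine fun t ht ↦ (hle t ht).trans (le_of_not_gt fun hzR ↦ ?_)
  have hz₀ : 0 < u z := hR.trans_lt hzR
  have hmid : ∀ r ∈ Icc α β, δ * u z ≤ u r := fun r hr ↦
    mul_le_of_concaveOn_of_nonneg (h.concaveOn_fst b hq) hu hδ (by linarith) hz
      (by linarith [hr.1]) (by linarith [hr.2])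
  have hdrop : v β ≤ v α - M * (δ * u z) * ∫ r in α..β, q r :=
    h.snd_le_of_weight_nonneg b hαβ
      (ae_restrict_of_ae_restrict_of_subset (Icc_subset_Icc hσα.le hβτ.le) hq) fun r hr ↦
        (mul_le_mul_of_nonneg_left (hmid r hr) hM).trans
          (hMf _ (hs₀.trans ((mul_le_mul_of_nonneg_left hzR.le hδ.le).trans (hmid r hr))))
  have hvα : v α ≤ u z * (1 / (α - σ)) := by
    have hsecant : u σ + v α * (α - σ) ≤ u α :=
      h.add_mul_le_fst hσα.le fun r hr ↦ hanti ⟨hr.1, hr.2.trans hα.2⟩ hα hr.2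
    rw [mul_one_div, le_div_iff₀ (sub_pos.2 hσα)]
    linarith [hu σ hσ, hle α hα]
  have hvβ : -v β ≤ u z * (1 / (τ - β)) := by
    have hsecant : u τ ≤ u β + v β * (τ - β) :=
      h.fst_le_add_mul hβτ.le fun r hr ↦ hanti hβ ⟨hβ.1.trans hr.1, hr.2⟩ hr.1
    rw [mul_one_div, le_div_iff₀ (sub_pos.2 hβτ)]
    linarith [hu τ hτ, hle β hβ]
  linarith [mul_lt_mul_of_pos_left hMq hz₀]

end Apriori

/-! ### Chains of stretching maps -/

section Stretching

/-- A continuous map `E` of the plane stretches the rectangle `[0, ρ] × [-Y', Y]` across itself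
twice, once over `{H < 0}` and once over `{0 < H}`. Points of `{x < 0, y < 0}` are to be thought of
as lost: `E` sends both horizontal edges there, the zero set of `H` beyond the top of the rectangle,
and never brings a lost point back. -/
structure IsStretching (E : ℝ × ℝ → ℝ × ℝ) (H : ℝ × ℝ → ℝ) (ρ Y Y' : ℝ) : Prop where
  continuous_map : Continuous E
  continuous_cut : Continuous H
  of_cut_eq_zero : ∀ x ∈ Icc 0 ρ, ∀ y, H (x, y) = 0 → 0 ≤ (E (x, y)).1 ∧ Y + 1 ≤ (E (x, y)).2
  top : ∀ x ∈ Icc 0 ρ, 0 < H (x, Y) ∧ (E (x, Y)).1 < 0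
  bottom : ∀ x ∈ Icc 0 ρ, H (x, -Y') < 0 ∧ (E (x, -Y')).1 < 0
  left : ∀ y < 0, (E (0, y)).1 < 0 ∧ (E (0, y)).2 = y
  right : ∀ y, 0 ≤ y → (E (ρ, y)).1 < 0
  snd_neg : ∀ x y, 0 ≤ x → (E (x, y)).1 < 0 → (E (x, y)).2 < 0
  snd_nonneg : ∀ x y, 0 ≤ x → ρ < (E (x, y)).1 → 0 ≤ (E (x, y)).2

theorem exists_pos_mul_le_of_neg {X : Type*} [TopologicalSpace X] {s : Set X} (hs : IsCompact s)
    {f : X → ℝ} (hf : ContinuousOn f s) (hneg : ∀ x ∈ s, f x < 0) (C : ℝ) :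
    ∃ K, 0 < K ∧ ∀ x ∈ s, K * f x ≤ C := by
  rcases s.eq_empty_or_nonempty with rfl | hne
  · exact ⟨1, one_pos, fun x hx ↦ hx.elim⟩
  obtain ⟨z, hz, hmax⟩ := hs.exists_isMaxOn hne hf
  have hz₀ := hneg z hz
  refine ⟨(|C| + 1) / -f z, div_pos (by positivity) (neg_pos.2 hz₀), fun x hx ↦ ?_⟩
  calc (|C| + 1) / -f z * f x ≤ (|C| + 1) / -f z * f z :=
        mul_le_mul_of_nonneg_left (hmax hx) (div_nonneg (by positivity) (neg_pos.2 hz₀).le)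
    _ = -(|C| + 1) := by field_simp [hz₀.ne]
    _ ≤ C := by linarith [neg_abs_le C]

/-- The map `E` with its first coordinate retracted onto `[0, ρ]` and a penalty `K` subtracted from
its second coordinate on lost points. -/
def penalizedMap (E : ℝ × ℝ → ℝ × ℝ) (ρ K : ℝ) (p : ℝ × ℝ) : ℝ × ℝ :=
  (max 0 (min ρ (E p).1), (E p).2 - K * max (-(E p).1) 0)

variable {E : ℝ × ℝ → ℝ × ℝ} {H : ℝ × ℝ → ℝ} {ρ K Y Y' ε : ℝ} {p : ℝ × ℝ}

theorem continuous_penalizedMap (hE : Continuous E) : Continuous (penalizedMap E ρ K) := by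
  unfold penalizedMap
  fun_prop

theorem penalizedMap_snd_of_nonneg (h : 0 ≤ (E p).1) : (penalizedMap E ρ K p).2 = (E p).2 := by
  rw [penalizedMap, max_eq_right (neg_nonpos.2 h), mul_zero, sub_zero]

theorem penalizedMap_snd_of_neg (h : (E p).1 < 0) :
    (penalizedMap E ρ K p).2 = (E p).2 + K * (E p).1 := by
  rw [penalizedMap, max_eq_left (neg_pos.2 h).le, mul_neg, sub_neg_eq_add]

theorem penalizedMap_eq (h : (E p).1 ∈ Icc 0 ρ) : penalizedMap E ρ K p = E p :=
  Prod.ext (by rw [penalizedMap, min_eq_right h.2, max_eq_right h.1])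
    (penalizedMap_snd_of_nonneg h.1)

/-- The second coordinate of `penalizedMap`, lifted above `Y` where `ε * H` is negative; `ε` is the
sign prescribed for `H`. -/
noncomputable def branchTarget (E : ℝ × ℝ → ℝ × ℝ) (H : ℝ × ℝ → ℝ) (ρ K Y ε : ℝ)
    (p : ℝ × ℝ) : ℝ :=
  if 0 ≤ ε * H p then (penalizedMap E ρ K p).2 else max (penalizedMap E ρ K p).2 (Y + 1)

namespace IsStretching

theorem exists_penalty (h : IsStretching E H ρ Y Y') : ∃ K, 0 < K ∧ ∀ x ∈ Icc 0 ρ,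
    (penalizedMap E ρ K (x, Y)).2 ≤ -Y' ∧ (penalizedMap E ρ K (x, -Y')).2 ≤ -Y' := by
  have hE := h.continuous_map
  obtain ⟨K, hK, hKle⟩ := exists_pos_mul_le_of_neg
    (isCompact_Icc (a := (0 : ℝ)) (b := ρ) |>.prod (toFinite {Y, -Y'}).isCompact)
    (f := fun p ↦ (E p).1) (by fun_prop)
    (by rintro ⟨x, y⟩ ⟨hx, rfl | rfl⟩; exacts [(h.top x hx).2, (h.bottom x hx).2]) (-Y')
  have hle : ∀ x ∈ Icc 0 ρ, ∀ y ∈ ({Y, -Y'} : Set ℝ), (E (x, y)).1 < 0 →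
      (penalizedMap E ρ K (x, y)).2 ≤ -Y' := fun x hx y hy hneg ↦ by
    rw [penalizedMap_snd_of_neg hneg]
    linarith [hKle (x, y) ⟨hx, hy⟩, h.snd_neg x y hx.1 hneg]
  exact ⟨K, hK, fun x hx ↦ ⟨hle x hx Y (.inl rfl) (h.top x hx).2,
    hle x hx (-Y') (.inr rfl) (h.bottom x hx).2⟩⟩

theorem add_one_le_penalizedMap_snd (h : IsStretching E H ρ Y Y') (hp : p.1 ∈ Icc 0 ρ)
    (hHp : H p = 0) : Y + 1 ≤ (penalizedMap E ρ K p).2 := by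
  obtain ⟨hfst, hsnd⟩ := h.of_cut_eq_zero p.1 hp p.2 hHp
  rwa [penalizedMap_snd_of_nonneg hfst]

theorem continuousOn_branchTarget (h : IsStretching E H ρ Y Y') (hε : ε ≠ 0) :
    ContinuousOn (branchTarget E H ρ K Y ε) {p | p.1 ∈ Icc 0 ρ} := by
  have hsnd := (continuous_penalizedMap (ρ := ρ) (K := K) h.continuous_map).snd.comp
    (continuous_subtype_val (p := fun p : ℝ × ℝ ↦ p.1 ∈ Icc 0 ρ))
  rw [continuousOn_iff_continuous_domRestrict]
  refine Continuous.if_le hsnd (hsnd.max continuous_const) continuous_const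
    (continuous_const.mul (h.continuous_cut.comp continuous_subtype_val)) fun p hp ↦ ?_
  exact (max_eq_left (h.add_one_le_penalizedMap_snd p.2
    ((mul_eq_zero.1 hp.symm).resolve_left hε))).symm

theorem branchTarget_eq (h : IsStretching E H ρ Y Y') (hε : ε ≠ 0) (hp : p.1 ∈ Icc 0 ρ)
    (hle : branchTarget E H ρ K Y ε p ≤ Y) :
    branchTarget E H ρ K Y ε p = (penalizedMap E ρ K p).2 ∧ 0 < ε * H p := by
  unfold branchTarget at hle ⊢
  split_ifs at hle ⊢ with hsign
  · refine ⟨rfl, hsign.lt_of_ne fun hzero ↦ ?_⟩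
    have hcut := (mul_eq_zero.1 hzero.symm).resolve_left hε
    linarith [h.add_one_le_penalizedMap_snd (K := K) hp hcut]
  · linarith [le_max_right (penalizedMap E ρ K p).2 (Y + 1)]

theorem branchTarget_le (hsign : 0 < ε * H p) (hK : (penalizedMap E ρ K p).2 ≤ -Y') :
    branchTarget E H ρ K Y ε p ≤ -Y' := by
  rwa [branchTarget, if_pos hsign.le]

theorem le_branchTarget (hsign : ε * H p < 0) : Y + 1 ≤ branchTarget E H ρ K Y ε p := by
  rw [branchTarget, if_neg hsign.not_ge]
  exact le_max_right _ _

theorem mul_sub_branchTarget_bottom_nonpos (h : IsStretching E H ρ Y Y') (hε : ε = 1 ∨ ε = -1)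
    {x y : ℝ} (hx : x ∈ Icc 0 ρ) (hK : (penalizedMap E ρ K (x, -Y')).2 ≤ -Y')
    (hy : y ∈ Icc (-Y') Y) : ε * (y - branchTarget E H ρ K Y ε (x, -Y')) ≤ 0 := by
  have hcut := (h.bottom x hx).1
  rcases hε with rfl | rfl
  · linarith [le_branchTarget (E := E) (ρ := ρ) (K := K) (Y := Y) (ε := 1) (by linarith), hy.2]
  · linarith [branchTarget_le (Y := Y) (ε := -1) (by linarith) hK, hy.1]

theorem mul_sub_branchTarget_top_nonneg (h : IsStretching E H ρ Y Y') (hε : ε = 1 ∨ ε = -1)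
    {x y : ℝ} (hx : x ∈ Icc 0 ρ) (hK : (penalizedMap E ρ K (x, Y)).2 ≤ -Y')
    (hy : y ∈ Icc (-Y') Y) : 0 ≤ ε * (y - branchTarget E H ρ K Y ε (x, Y)) := by
  have hcut := (h.top x hx).1
  rcases hε with rfl | rfl
  · linarith [branchTarget_le (Y := Y) (ε := 1) (by linarith) hK, hy.1]
  · linarith [le_branchTarget (E := E) (ρ := ρ) (K := K) (Y := Y) (ε := -1) (by linarith), hy.2]

end IsStretching

end Stretching

section Chain

variable {J : Type*} [Finite J] {nx : Equiv.Perm J} {E : J → ℝ × ℝ → ℝ × ℝ} {H : J → ℝ × ℝ → ℝ}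
  {ρ Y Y' : ℝ} {K ε : J → ℝ} {w : J → ℝ × ℝ}

theorem exists_chain_of_crossing {A : J → ℝ × ℝ → ℝ × ℝ} {a b : ℝ × ℝ} (hab : a ≤ b)
    (hA : ∀ j, ContinuousOn (A j) (Icc a b))
    (hfst : ∀ j, ∀ p ∈ Icc a b, (A j p).1 ∈ Icc a.1 b.1) (hε : ∀ j, ε j ≠ 0)
    (hbottom : ∀ j, ∀ x ∈ Icc a.1 b.1, ∀ y ∈ Icc a.2 b.2, ε j * (y - (A j (x, a.2)).2) ≤ 0)
    (htop : ∀ j, ∀ x ∈ Icc a.1 b.1, ∀ y ∈ Icc a.2 b.2, 0 ≤ ε j * (y - (A j (x, b.2)).2)) :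
    ∃ w : J → ℝ × ℝ, ∀ j, w j ∈ Icc a b ∧ A j (w j) = w (nx j) := by
  let box (c : ℝ × ℝ) : J ⊕ J → ℝ := Sum.elim (Function.const J c.1) (Function.const J c.2)
  let P (t : J ⊕ J → ℝ) (j : J) : ℝ × ℝ := (t (.inl j), t (.inr j))
  let F (t : J ⊕ J → ℝ) : J ⊕ J → ℝ :=
    Sum.elim (fun j ↦ (P t j).1 - (A (nx.symm j) (P t (nx.symm j))).1)
      fun j ↦ ε j * ((P t (nx j)).2 - (A j (P t j)).2)
  have hP : ∀ t ∈ Icc (box a) (box b), ∀ j, P t j ∈ Icc a b := fun t ht j ↦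
    ⟨⟨ht.1 (.inl j), ht.1 (.inr j)⟩, ⟨ht.2 (.inl j), ht.2 (.inr j)⟩⟩
  have hPcont : ∀ j, Continuous fun t ↦ P t j := fun j ↦ by fun_prop
  have hAP : ∀ j, ContinuousOn (fun t ↦ A j (P t j)) (Icc (box a) (box b)) := fun j ↦
    (hA j).comp (hPcont j).continuousOn fun t ht ↦ hP t ht j
  have hF : ContinuousOn F (Icc (box a) (box b)) := by
    refine continuousOn_pi.2 ?_
    rintro (j | j)
    · exact (hPcont j).fst.continuousOn.sub (hAP _).fst
    · exact continuousOn_const.mul ((hPcont _).snd.continuousOn.sub (hAP j).snd)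
  obtain ⟨t, ht, hzero⟩ := poincare_miranda (by rintro (_ | _); exacts [hab.1, hab.2]) hF
    (by
      rintro t ht (j | j) htj
      · exact sub_nonpos.2 (htj.trans_le (hfst _ _ (hP t ht _)).1)
      · have hedge := hbottom j _ ⟨ht.1 (.inl j), ht.2 (.inl j)⟩ _
          ⟨ht.1 (.inr (nx j)), ht.2 (.inr (nx j))⟩
        rw [← show P t j = (t (.inl j), a.2) from Prod.ext rfl htj] at hedge
        exact hedge)
    (by
      rintro t ht (j | j) htj
      · exact sub_nonneg.2 ((hfst _ _ (hP t ht _)).2.trans_eq htj.symm)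
      · have hedge := htop j _ ⟨ht.1 (.inl j), ht.2 (.inl j)⟩ _
          ⟨ht.1 (.inr (nx j)), ht.2 (.inr (nx j))⟩
        rw [← show P t j = (t (.inl j), b.2) from Prod.ext rfl htj] at hedge
        exact hedge)
  refine ⟨P t, fun j ↦ ⟨hP t ht j, Prod.ext ?_ ?_⟩⟩
  · have hj : (P t (nx j)).1 - (A (nx.symm (nx j)) (P t (nx.symm (nx j)))).1 = 0 :=
      congrFun hzero (.inl (nx j))
    rw [nx.symm_apply_apply] at hj
    exact (sub_eq_zero.1 hj).symm
  · have hj : ε j * ((P t (nx j)).2 - (A j (P t j)).2) = 0 := congrFun hzero (.inr j)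
    exact (sub_eq_zero.1 ((mul_eq_zero.1 hj).resolve_left (hε j))).symm

theorem exists_penalizedMap_eq (h : ∀ j, IsStretching (E j) (H j) ρ Y Y') (hρ : 0 ≤ ρ)
    (hY : -Y' ≤ Y) (hε : ∀ j, ε j = 1 ∨ ε j = -1)
    (hK : ∀ j, ∀ x ∈ Icc 0 ρ, (penalizedMap (E j) ρ (K j) (x, Y)).2 ≤ -Y' ∧
      (penalizedMap (E j) ρ (K j) (x, -Y')).2 ≤ -Y') :
    ∃ w : J → ℝ × ℝ, ∀ j, (w j).1 ∈ Icc 0 ρ ∧ penalizedMap (E j) ρ (K j) (w j) = w (nx j) ∧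
      0 < ε j * H j (w j) := by
  have hε₀ : ∀ j, ε j ≠ 0 := fun j ↦ by rcases hε j with hj | hj <;> norm_num [hj]
  let A (j : J) (p : ℝ × ℝ) : ℝ × ℝ :=
    ((penalizedMap (E j) ρ (K j) p).1, branchTarget (E j) (H j) ρ (K j) Y (ε j) p)
  have hx : ∀ p ∈ Icc ((0 : ℝ), -Y') (ρ, Y), p.1 ∈ Icc 0 ρ := fun p hp ↦ ⟨hp.1.1, hp.2.1⟩
  have hA : ∀ j, ContinuousOn (A j) (Icc (0, -Y') (ρ, Y)) := fun j ↦
    (continuous_penalizedMap (h j).continuous_map).fst.continuousOn.prodMk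
      (((h j).continuousOn_branchTarget (hε₀ j)).mono hx)
  obtain ⟨w, hw⟩ := exists_chain_of_crossing (nx := nx) ⟨hρ, hY⟩ hA
    (fun j p _ ↦ ⟨le_max_left _ _, max_le hρ (min_le_left _ _)⟩) hε₀
    (fun j x hx y hy ↦ (h j).mul_sub_branchTarget_bottom_nonpos (hε j) hx (hK j x hx).2 hy)
    (fun j x hx y hy ↦ (h j).mul_sub_branchTarget_top_nonneg (hε j) hx (hK j x hx).1 hy)
  refine ⟨w, fun j ↦ ?_⟩
  have hfst : (A j (w j)).1 = (w (nx j)).1 := congrArg Prod.fst (hw j).2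
  have hsnd : (A j (w j)).2 = (w (nx j)).2 := congrArg Prod.snd (hw j).2
  obtain ⟨htarget, hsign⟩ := (h j).branchTarget_eq (hε₀ j) (hx _ (hw j).1)
    (hsnd.trans_le (hw (nx j)).1.2.2)
  exact ⟨hx _ (hw j).1, Prod.ext hfst (htarget.symm.trans hsnd), hsign⟩

theorem fst_nonneg_of_penalizedMap_eq (h : ∀ j, IsStretching (E j) (H j) ρ Y Y') (hK : ∀ j, 0 < K j)
    (hw : ∀ j, (w j).1 ∈ Icc 0 ρ ∧ penalizedMap (E j) ρ (K j) (w j) = w (nx j)) (j : J) :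
    0 ≤ (E j (w j)).1 := by
  have hstep : ∀ j, (E j (w j)).1 < 0 →
      (E (nx j) (w (nx j))).1 < 0 ∧ (w (nx (nx j))).2 < (w (nx j)).2 := fun j hj ↦ by
    have hfst : (w (nx j)).1 = 0 := by
      rw [← (hw j).2, penalizedMap]
      exact max_eq_left ((min_le_right _ _).trans hj.le)
    have hsnd : (w (nx j)).2 < 0 := by
      rw [← (hw j).2, penalizedMap_snd_of_neg hj]
      linarith [(h j).snd_neg _ _ (hw j).1.1 hj, mul_neg_of_pos_of_neg (hK j) hj]
    have hleft := (h (nx j)).left _ hsnd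
    rw [← show w (nx j) = (0, (w (nx j)).2) from Prod.ext hfst rfl] at hleft
    refine ⟨hleft.1, ?_⟩
    rw [← (hw (nx j)).2, penalizedMap_snd_of_neg hleft.1]
    linarith [mul_neg_of_pos_of_neg (hK (nx j)) hleft.1, hleft.2]
  by_contra! hj
  obtain ⟨i, hi, hmin⟩ := (toFinite {j | (E j (w j)).1 < 0}).exists_minimalFor
    (fun j ↦ (w (nx j)).2) _ ⟨j, hj⟩
  exact (hstep i hi).2.not_ge (hmin (hstep i hi).1 (hstep i hi).2.le)

theorem exists_chain (h : ∀ j, IsStretching (E j) (H j) ρ Y Y') (hρ : 0 ≤ ρ)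
    (hY : -Y' ≤ Y) (hε : ∀ j, ε j = 1 ∨ ε j = -1) :
    ∃ w : J → ℝ × ℝ, ∀ j, (w j).1 ∈ Icc 0 ρ ∧ E j (w j) = w (nx j) ∧ 0 < ε j * H j (w j) := by
  choose K hK hKle using fun j ↦ (h j).exists_penalty
  obtain ⟨w, hw⟩ := exists_penalizedMap_eq (nx := nx) h hρ hY hε hKle
  have hnonneg := fst_nonneg_of_penalizedMap_eq h hK fun j ↦ ⟨(hw j).1, (hw j).2.1⟩
  have hle : ∀ j, (E j (w j)).1 ≤ ρ := fun j ↦ by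
    by_contra! hj
    have hfst : (w (nx j)).1 = ρ := by
      rw [← (hw j).2.1, penalizedMap]
      exact (congrArg _ (min_eq_left hj.le)).trans (max_eq_right hρ)
    have hsnd : 0 ≤ (w (nx j)).2 := by
      rw [← (hw j).2.1, penalizedMap_snd_of_nonneg (hnonneg j)]
      exact (h j).snd_nonneg _ _ (hw j).1.1 hj
    have hright := (h (nx j)).right _ hsnd
    rw [← hfst] at hright
    exact hright.not_ge (hnonneg (nx j))
  exact ⟨w, fun j ↦ ⟨(hw j).1, (penalizedMap_eq ⟨hnonneg j, hle j⟩).symm.trans (hw j).2.1,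
    (hw j).2.2⟩⟩

theorem exists_periodic_chain {N : ℕ} (hN : N ≠ 0) {E : ℕ → ℝ × ℝ → ℝ × ℝ} {H : ℕ → ℝ × ℝ → ℝ}
    {s : ℕ → Bool} (hE : Function.Periodic E N) (hH : Function.Periodic H N)
    (hs : Function.Periodic s N) (h : ∀ n, IsStretching (E n) (H n) ρ Y Y') (hρ : 0 ≤ ρ)
    (hY : -Y' ≤ Y) :
    ∃ w : ℕ → ℝ × ℝ, Function.Periodic w N ∧ ∀ n, (w n).1 ∈ Icc 0 ρ ∧ E n (w n) = w (n + 1) ∧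
      (0 < H n (w n) ↔ s n = true) := by
  have : NeZero N := ⟨hN⟩
  obtain ⟨w, hw⟩ := exists_chain (nx := Equiv.addRight (1 : ZMod N))
    (ε := fun j ↦ if s j.val then 1 else -1) (fun j ↦ h j.val) hρ hY fun j ↦ by split_ifs <;> simp
  refine ⟨fun n ↦ w n, fun n ↦ by simp, fun n ↦ ?_⟩
  obtain ⟨hfst, hchain, hsign⟩ := hw n
  simp only [ZMod.val_natCast, hE.map_mod_nat, hH.map_mod_nat, hs.map_mod_nat,
    Equiv.coe_addRight] at hfst hchain hsign
  refine ⟨hfst, hchain.trans (congrArg w (Nat.cast_succ n).symm), ?_⟩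
  split_ifs at hsign with hsn
  · exact iff_of_true (by linarith) hsn
  · exact iff_of_false (by linarith) hsn

end Chain

/-! ### The flow across a hump -/

section Hump

/-- On `[c, d]` the weight `q` has a nonnegative hump `[σ, τ]` between two nonpositive intervals. -/
structure Hump (q : ℝ → ℝ) (c σ τ d : ℝ) : Prop where
  c_lt_σ : c < σ
  σ_lt_τ : σ < τ
  τ_lt_d : τ < d
  nonpos_left : ∀ᵐ r ∂volume.restrict (Icc c σ), q r ≤ 0
  nonneg_mid : ∀ᵐ r ∂volume.restrict (Icc σ τ), 0 ≤ q r
  nonpos_right : ∀ᵐ r ∂volume.restrict (Icc τ d), q r ≤ 0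

/-- Two levels `r ≤ R` of the solution, with bounds for the nonlinearity `f` on either side of each
level. -/
structure LevelBounds (f : ℝ → ℝ) (R G r e η : ℝ) : Prop where
  r_pos : 0 < r
  r_le_R : r ≤ R
  G_nonneg : 0 ≤ G
  e_nonneg : 0 ≤ e
  η_pos : 0 < η
  le_G : ∀ s ≤ R, f s ≤ G
  le_e : ∀ s ≤ r, f s ≤ e
  η_le : ∀ s, r / 4 ≤ s → η ≤ f s

/-- A hump whose positive part is weak at the level `r`, and whose negative parts are strong
compared with the positive part and with the slope threshold `Y`. The inequalities are those that
make the flow from `c` to `d` stretch the rectangle `[0, r / 4] × [-Y', Y]`. -/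
structure TunedHump (q f : ℝ → ℝ) (c σ τ d R G r e η Y Y' : ℝ) : Prop
    extends AdmissiblePair q f, Hump q c σ τ d, LevelBounds f R G r e η where
  apriori : ∀ u v, IsTrajectory q f u v → (∀ t ∈ Icc σ τ, 0 ≤ u t) → ∀ t ∈ Icc σ τ, u t ≤ R
  drop_lt : G * (∫ x in σ..τ, q x) + R / (τ - σ) < Y
  r_lt : r < (τ - σ) * Y
  Y_le : Y ≤ η * -∫ x in c..σ, q x
  Y_add_one_le : Y + 1 + e * (∫ x in σ..τ, q x) ≤ η * -∫ x in τ..d, q x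
  loss_hump_le : e * (∫ x in σ..τ, q x) * (τ - σ) ≤ r / 2
  loss_right_le : e * (∫ x in σ..τ, q x) * (d - τ) ≤ r / 4
  lt_Y' : G * (-∫ x in c..σ, q x) + r / (σ - c) < Y'

variable {q f u v : ℝ → ℝ} {c σ τ d R G r e η Y Y' k : ℝ}

theorem integral_subinterval_le (h_int : LocallyIntegrable q)
    (hq : ∀ᵐ x ∂volume.restrict (Icc σ τ), 0 ≤ q x) {s t : ℝ} (hs : σ ≤ s) (hst : s ≤ t)
    (ht : t ≤ τ) : ∫ x in s..t, q x ≤ ∫ x in σ..τ, q x :=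
  intervalIntegral.integral_mono_interval hs hst ht
    (ae_restrict_of_ae_restrict_of_subset Ioc_subset_Icc_self hq)
    (intervalIntegrable_of_locallyIntegrable h_int _ _)

theorem IsTrajectory.sub_mul_integral_le_snd (b : AdmissiblePair q f) (h : IsTrajectory q f u v)
    (hq : ∀ᵐ x ∂volume.restrict (Icc σ τ), 0 ≤ q x) (hk : 0 ≤ k) {s t : ℝ} (hs : σ ≤ s)
    (hst : s ≤ t) (ht : t ≤ τ) (hf : ∀ x ∈ Icc s t, f (u x) ≤ k) :
    v s - k * (∫ x in σ..τ, q x) ≤ v t := by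
  have hmono := integral_subinterval_le b.locallyIntegrable hq hs hst ht
  linarith [mul_le_mul_of_nonneg_left hmono hk, h.le_snd_of_weight_nonneg b hst
    (ae_restrict_of_ae_restrict_of_subset (Icc_subset_Icc hs ht) hq) hf]

namespace TunedHump

variable (T : TunedHump q f c σ τ d R G r e η Y Y') (h : IsTrajectory q f u v)
include T

theorem Y_pos : 0 < Y :=
  pos_of_mul_pos_right (T.r_pos.trans T.r_lt) (sub_pos.2 T.σ_lt_τ).le

theorem loss_nonneg : 0 ≤ e * ∫ x in σ..τ, q x :=
  mul_nonneg T.e_nonneg (intervalIntegral.integral_nonneg_of_ae_restrict T.σ_lt_τ.le T.nonneg_mid)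

include h

theorem fst_neg_of_le_snd (hu : 0 ≤ u σ) (hv : Y ≤ v σ) : u d < 0 := by
  by_contra! hd
  have hnonneg : ∀ t ∈ Icc σ τ, 0 ≤ u t := fun t ht ↦ by
    by_contra! hneg
    exact hd.not_gt (h.neg_of_fst_neg T.toAdmissiblePair ht.1 (ht.2.trans T.τ_lt_d.le) hu hneg).1
  have hR := T.apriori u v h hnonneg
  have hslope : ∀ t ∈ Icc σ τ, Y - G * (∫ x in σ..τ, q x) ≤ v t := fun t ht ↦ by
    linarith [h.sub_mul_integral_le_snd T.toAdmissiblePair T.nonneg_mid T.G_nonneg le_rfl ht.1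
      ht.2 fun x hx ↦ T.le_G _ (hR x ⟨hx.1, hx.2.trans ht.2⟩)]
  have hrise := h.add_mul_le_fst T.σ_lt_τ.le hslope
  have hwidth := sub_pos.2 T.σ_lt_τ
  have hgain : R < (Y - G * ∫ x in σ..τ, q x) * (τ - σ) := by
    rw [← div_lt_iff₀ hwidth]
    linarith [T.drop_lt]
  linarith [hR τ (right_mem_Icc.2 T.σ_lt_τ.le)]

theorem top (hu : 0 ≤ u c) (hv : v c = Y) : r < u σ + (τ - σ) * v σ ∧ u d < 0 := by
  have hmono : ∀ t ∈ Icc c σ, Y ≤ v t := fun t ht ↦ hv.symm.trans_le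
    (h.monotoneOn_snd T.toAdmissiblePair T.nonpos_left (left_mem_Icc.2 T.c_lt_σ.le) ht ht.1)
  have hvσ := hmono σ (right_mem_Icc.2 T.c_lt_σ.le)
  have huσ : 0 ≤ u σ := by
    linarith [h.add_mul_le_fst T.c_lt_σ.le hmono, mul_pos T.Y_pos (sub_pos.2 T.c_lt_σ)]
  refine ⟨?_, T.fst_neg_of_le_snd h huσ hvσ⟩
  linarith [T.r_lt, mul_le_mul_of_nonneg_left hvσ (sub_pos.2 T.σ_lt_τ).le]

theorem right (hu : u c = r / 4) (hv : 0 ≤ v c) : u d < 0 := by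
  have hmono := h.monotoneOn_snd T.toAdmissiblePair T.nonpos_left
  have hc := left_mem_Icc.2 T.c_lt_σ.le
  have hlevel : ∀ t ∈ Icc c σ, r / 4 ≤ u t := fun t ht ↦ by
    linarith [h.add_mul_le_fst ht.1 fun x hx ↦
      hv.trans (hmono hc ⟨hx.1, hx.2.trans ht.2⟩ hx.1)]
  refine T.fst_neg_of_le_snd h ?_ ?_
  · linarith [hlevel σ (right_mem_Icc.2 T.c_lt_σ.le), T.r_pos]
  · linarith [T.Y_le, h.le_snd_of_weight_nonpos T.toAdmissiblePair T.c_lt_σ.le T.nonpos_left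
      fun x hx ↦ T.η_le _ (hlevel x hx)]

theorem snd_nonneg_of_cut (hu : u c ≤ r / 4) (hcut : u σ + (τ - σ) * v σ = r) : 0 ≤ v σ := by
  by_contra! hneg
  have hdrop := h.fst_le_add_mul T.c_lt_σ.le fun t ht ↦
    h.monotoneOn_snd T.toAdmissiblePair T.nonpos_left ht (right_mem_Icc.2 T.c_lt_σ.le) ht.2
  linarith [T.r_pos, mul_neg_of_pos_of_neg (sub_pos.2 T.σ_lt_τ) hneg,
    mul_neg_of_pos_of_neg (sub_pos.2 T.c_lt_σ) hneg]

theorem le_fst_and_le_snd_of_cut (hσ : 0 ≤ v σ) (hcut : u σ + (τ - σ) * v σ = r) :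
    r / 2 ≤ u τ ∧ -(e * ∫ x in σ..τ, q x) ≤ v τ := by
  have hanti := h.antitoneOn_snd T.toAdmissiblePair T.nonneg_mid
  have hlow : ∀ t ∈ Icc σ τ, u t ≤ r := fun t ht ↦ by
    have hsecant : u t ≤ u σ + v σ * (t - σ) := h.fst_le_add_mul ht.1 fun x hx ↦
      hanti (left_mem_Icc.2 T.σ_lt_τ.le) ⟨hx.1, hx.2.trans ht.2⟩ hx.1
    linarith [mul_le_mul_of_nonneg_left (sub_le_sub_right ht.2 σ) hσ]
  have hslope : ∀ t ∈ Icc σ τ, v σ - e * (∫ x in σ..τ, q x) ≤ v t := fun t ht ↦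
    h.sub_mul_integral_le_snd T.toAdmissiblePair T.nonneg_mid T.e_nonneg le_rfl ht.1 ht.2
      fun x hx ↦ T.le_e _ (hlow x ⟨hx.1, hx.2.trans ht.2⟩)
  constructor
  · linarith [h.add_mul_le_fst T.σ_lt_τ.le hslope, T.loss_hump_le]
  · linarith [hslope τ (right_mem_Icc.2 T.σ_lt_τ.le)]

theorem exit_of_le (hu : r / 2 ≤ u τ) (hv : -(e * ∫ x in σ..τ, q x) ≤ v τ) :
    0 ≤ u d ∧ Y + 1 ≤ v d := by
  have hmono := h.monotoneOn_snd T.toAdmissiblePair T.nonpos_right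
  have hτ := left_mem_Icc.2 T.τ_lt_d.le
  have hlevel : ∀ t ∈ Icc τ d, r / 4 ≤ u t := fun t ht ↦ by
    have hsecant := h.add_mul_le_fst ht.1 fun x hx ↦
      hv.trans (hmono hτ ⟨hx.1, hx.2.trans ht.2⟩ hx.1)
    linarith [T.loss_right_le, mul_le_mul_of_nonneg_left (sub_le_sub_right ht.2 τ) T.loss_nonneg]
  constructor
  · linarith [hlevel d (right_mem_Icc.2 T.τ_lt_d.le), T.r_pos]
  · linarith [T.Y_add_one_le, h.le_snd_of_weight_nonpos T.toAdmissiblePair T.τ_lt_d.le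
      T.nonpos_right fun x hx ↦ T.η_le _ (hlevel x hx)]

theorem of_cut_eq (hu : u c ≤ r / 4) (hcut : u σ + (τ - σ) * v σ = r) :
    0 ≤ u d ∧ Y + 1 ≤ v d :=
  have hτ := T.le_fst_and_le_snd_of_cut h (T.snd_nonneg_of_cut h hu hcut) hcut
  T.exit_of_le h hτ.1 hτ.2

theorem snd_le_of_steep (hu : u c ≤ r / 4) (hv : v c = -Y') : v σ ≤ -(r / (σ - c)) := by
  by_contra! hσ
  have hmono := h.monotoneOn_snd T.toAdmissiblePair T.nonpos_left
  have hmass : ∀ t ∈ Icc c σ, -∫ x in c..t, q x ≤ -∫ x in c..σ, q x := fun t ht ↦ by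
    simp only [← intervalIntegral.integral_neg]
    exact integral_subinterval_le T.locallyIntegrable.neg
      (T.nonpos_left.mono fun _ ↦ neg_nonneg.2) le_rfl ht.1 ht.2
  have hmass₀ := hmass c (left_mem_Icc.2 T.c_lt_σ.le)
  rw [intervalIntegral.integral_same, neg_zero] at hmass₀
  have hsteep : 0 < r / (σ - c) := div_pos T.r_pos (sub_pos.2 T.c_lt_σ)
  obtain ⟨t, ht, hvt⟩ := intermediate_value_Icc T.c_lt_σ.le h.continuous_snd.continuousOn
    ⟨by linarith [T.lt_Y', mul_nonneg T.G_nonneg hmass₀], hσ.le⟩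
  have hlow : ∀ s ∈ Icc c t, u s ≤ R := fun s hs ↦ by
    have hsecant : u s ≤ u c + 0 * (s - c) := h.fst_le_add_mul hs.1 fun x hx ↦
      (hmono ⟨hx.1, hx.2.trans (hs.2.trans ht.2)⟩ ht (hx.2.trans hs.2)).trans (by linarith)
    linarith [T.r_pos, T.r_le_R]
  linarith [T.lt_Y', mul_le_mul_of_nonneg_left (hmass t ht) T.G_nonneg,
    h.snd_le_of_weight_nonpos T.toAdmissiblePair ht.1 (ae_restrict_of_ae_restrict_of_subset
      (Icc_subset_Icc_right ht.2) T.nonpos_left) fun s hs ↦ T.le_G _ (hlow s hs)]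

theorem bottom (hu₀ : 0 ≤ u c) (hu : u c ≤ r / 4) (hv : v c = -Y') :
    u σ + (τ - σ) * v σ < r ∧ u d < 0 := by
  have hσ := T.snd_le_of_steep h hu hv
  have hmono := h.monotoneOn_snd T.toAdmissiblePair T.nonpos_left
  have hwidth := sub_pos.2 T.c_lt_σ
  have hdrop : u σ ≤ u c + -(r / (σ - c)) * (σ - c) := h.fst_le_add_mul T.c_lt_σ.le fun t ht ↦
    (hmono ht (right_mem_Icc.2 T.c_lt_σ.le) ht.2).trans hσ
  rw [neg_mul, div_mul_cancel₀ _ hwidth.ne'] at hdrop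
  have hneg : u σ < 0 := by linarith [T.r_pos]
  have hσ₀ : v σ < 0 := hσ.trans_lt (neg_neg_of_pos (div_pos T.r_pos hwidth))
  exact ⟨by linarith [T.r_pos, mul_neg_of_pos_of_neg (sub_pos.2 T.σ_lt_τ) hσ₀],
    (h.neg_of_fst_neg T.toAdmissiblePair T.c_lt_σ.le (T.σ_lt_τ.trans T.τ_lt_d).le hu₀ hneg).1⟩

theorem snd_nonneg (hu : 0 ≤ u c) (hd : r / 4 < u d) : 0 ≤ v d := by
  by_contra! hvd
  have hmono := h.monotoneOn_snd T.toAdmissiblePair T.nonpos_right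
  have hnonneg : ∀ t ∈ Icc σ τ, 0 ≤ u t := fun t ht ↦ by
    by_contra! hneg
    linarith [T.r_pos, (h.neg_of_fst_neg T.toAdmissiblePair (T.c_lt_σ.le.trans ht.1)
      (ht.2.trans T.τ_lt_d.le) hu hneg).1]
  have hR := T.apriori u v h hnonneg
  have hlevel : ∀ t ∈ Icc τ d, r / 4 ≤ u t := fun t ht ↦ by
    have hsecant : u d ≤ u t + 0 * (d - t) := h.fst_le_add_mul ht.2 fun x hx ↦
      (hmono ⟨ht.1.trans hx.1, hx.2⟩ (right_mem_Icc.2 T.τ_lt_d.le) hx.2).trans hvd.le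
    linarith
  have hvτ : v τ < -Y := by
    linarith [T.Y_add_one_le, T.loss_nonneg, h.le_snd_of_weight_nonpos T.toAdmissiblePair
      T.τ_lt_d.le T.nonpos_right fun x hx ↦ T.η_le _ (hlevel x hx)]
  have hslope : ∀ t ∈ Icc σ τ, v t ≤ -(R / (τ - σ)) := fun t ht ↦ by
    linarith [T.drop_lt, h.sub_mul_integral_le_snd T.toAdmissiblePair T.nonneg_mid T.G_nonneg
      ht.1 ht.2 le_rfl fun x hx ↦ T.le_G _ (hR x ⟨ht.1.trans hx.1, hx.2⟩)]
  have hdrop := h.fst_le_add_mul T.σ_lt_τ.le hslope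
  rw [neg_mul, div_mul_cancel₀ _ (sub_pos.2 T.σ_lt_τ).ne'] at hdrop
  linarith [hR σ (left_mem_Icc.2 T.σ_lt_τ.le), hlevel τ (left_mem_Icc.2 T.τ_lt_d.le), T.r_pos]

omit h in
theorem isStretching : IsStretching (fun p ↦ T.toAdmissiblePair.flow c p d)
    (fun p ↦ (T.toAdmissiblePair.flow c p σ).1 + (τ - σ) * (T.toAdmissiblePair.flow c p σ).2 - r)
    (r / 4) Y Y' := by
  have hflow := T.toAdmissiblePair.isTrajectory_flow c
  have hself := T.toAdmissiblePair.flow_self c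
  have hcd := (T.c_lt_σ.trans T.σ_lt_τ).trans T.τ_lt_d
  refine ⟨T.toAdmissiblePair.continuous_flow c d, ?_, fun x hx y hcut ↦ ?_, fun x hx ↦ ?_,
    fun x hx ↦ ?_, fun y hy ↦ ?_, fun y hy ↦ ?_, fun x y hx hd ↦ ?_, fun x y hx hd ↦ ?_⟩
  · have hcont := T.toAdmissiblePair.continuous_flow c σ
    fun_prop
  · exact T.of_cut_eq (hflow (x, y)) (by rw [hself]; exact hx.2) (sub_eq_zero.1 hcut)
  · have htop := T.top (hflow (x, Y)) (by rw [hself]; exact hx.1) (by rw [hself])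
    exact ⟨sub_pos.2 htop.1, htop.2⟩
  · have hbot := T.bottom (hflow (x, -Y')) (by rw [hself]; exact hx.1)
      (by rw [hself]; exact hx.2) (by rw [hself])
    exact ⟨sub_neg.2 hbot.1, hbot.2⟩
  · obtain ⟨hu, hv⟩ := (hflow (0, y)).eq_affine_of_nonpos T.toAdmissiblePair
      (by rw [hself]) (by rw [hself]; exact hy.le) hcd.le
    rw [hself] at hu hv
    exact ⟨by rw [hu, zero_add]; exact mul_neg_of_neg_of_pos hy (sub_pos.2 hcd), hv⟩
  · exact T.right (hflow (r / 4, y)) (by rw [hself]) (by rw [hself]; exact hy)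
  · exact ((hflow (x, y)).neg_of_fst_neg T.toAdmissiblePair hcd.le le_rfl
      (by rw [hself]; exact hx) hd).2
  · exact T.snd_nonneg (hflow (x, y)) (by rw [hself]; exact hx) hd

end TunedHump

end Hump

/-! ### Periodic trajectories through a periodic sequence of humps -/

section PeriodicTrajectory

variable {q f u v : ℝ → ℝ} {R S : ℝ}

theorem IsTrajectory.nonneg_of_periodic (h : IsTrajectory q f u v) (b : AdmissiblePair q f)
    (hS : 0 < S) (hu : Function.Periodic u S) {c : ℝ} (hc : 0 ≤ u c) (t : ℝ) : 0 ≤ u t := by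
  obtain ⟨t', ht', heq⟩ := hu.exists_mem_Ico hS t c
  rw [heq]
  by_contra! hneg
  have hcS := (h.neg_of_fst_neg b ht'.1 ht'.2.le hc hneg).1
  rw [hu c] at hcS
  exact hcS.not_ge hc

theorem IsTrajectory.pos_of_periodic (h : IsTrajectory q f u v) (b : AdmissiblePair q f)
    (hS : 0 < S) (hu : Function.Periodic u S) (hnonneg : ∀ t, 0 ≤ u t) {x : ℝ} (hx : u x ≠ 0)
    (t : ℝ) : 0 < u t := by
  refine (hnonneg t).lt_of_ne' fun ht ↦ hx ?_
  have hmin : IsLocalMin u t := Eventually.of_forall fun y ↦ ht.trans_le (hnonneg y)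
  have hv : v t = 0 := hmin.hasDerivAt_eq_zero (h.hasDerivAt t)
  obtain ⟨x', hx', heq⟩ := hu.exists_mem_Ico hS x t
  rw [heq, (h.eq_affine_of_nonpos b ht.le hv.le hx'.1).1, ht, hv]
  ring

theorem IsTrajectory.fst_le_of_weight_nonpos (h : IsTrajectory q f u v) (b : AdmissiblePair q f)
    {x y t : ℝ} (hq : ∀ᵐ z ∂volume.restrict (Icc x y), q z ≤ 0) (hx : u x ≤ R) (hy : u y ≤ R)
    (ht : t ∈ Icc x y) : u t ≤ R := by
  have hmono := h.monotoneOn_snd b hq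
  rcases le_total (v t) 0 with hvt | hvt
  · linarith [h.fst_le_add_mul ht.1 fun z hz ↦ (hmono ⟨hz.1, hz.2.trans ht.2⟩ ht hz.2).trans hvt]
  · linarith [h.add_mul_le_fst ht.2 fun z hz ↦ hvt.trans (hmono ht ⟨ht.1.trans hz.1, hz.2⟩ hz.1)]

end PeriodicTrajectory

/-- Consecutive tuned humps `[c j, c (j + 1)]` of an `S`-periodic weight such that `N` steps amount
to one period. -/
structure PeriodicHumps (q f : ℝ → ℝ) (c σ τ : ℕ → ℝ) (N : ℕ) (S R G r e η Y Y' : ℝ) : Prop where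
  tuned : ∀ j, TunedHump q f (c j) (σ j) (τ j) (c (j + 1)) R G r e η Y Y'
  period_pos : 0 < S
  periodic : Function.Periodic q S
  c_add : ∀ j, c (j + N) = c j + S
  σ_add : ∀ j, σ (j + N) = σ j + S
  τ_add : ∀ j, τ (j + N) = τ j + S

section PeriodicHumps

variable {q f u v : ℝ → ℝ} {c σ τ d S R G r e η Y Y' : ℝ}

theorem TunedHump.fst_le (T : TunedHump q f c σ τ d R G r e η Y Y') (h : IsTrajectory q f u v)
    (hu : ∀ t, 0 ≤ u t) (hc : u c ≤ R) (hd : u d ≤ R) {t : ℝ} (ht : t ∈ Icc c d) : u t ≤ R := by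
  have hmid := T.apriori u v h fun t _ ↦ hu t
  rcases le_total t σ with hσ | hσ
  · exact h.fst_le_of_weight_nonpos T.toAdmissiblePair T.nonpos_left hc
      (hmid σ (left_mem_Icc.2 T.σ_lt_τ.le)) ⟨ht.1, hσ⟩
  rcases le_total t τ with hτ | hτ
  · exact hmid t ⟨hσ, hτ⟩
  · exact h.fst_le_of_weight_nonpos T.toAdmissiblePair T.nonpos_right
      (hmid τ (right_mem_Icc.2 T.σ_lt_τ.le)) hd ⟨hτ, ht.2⟩

theorem TunedHump.neg_Y'_le_Y (T : TunedHump q f c σ τ d R G r e η Y Y') : -Y' ≤ Y := by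
  have hmass : 0 ≤ ∫ x in c..σ, -q x :=
    intervalIntegral.integral_nonneg_of_ae_restrict T.c_lt_σ.le
      (T.nonpos_left.mono fun _ ↦ neg_nonneg.2)
  rw [intervalIntegral.integral_neg] at hmass
  linarith [T.Y_pos, T.lt_Y', mul_nonneg T.G_nonneg hmass,
    div_pos T.r_pos (sub_pos.2 T.c_lt_σ)]

namespace PeriodicHumps

variable {c σ τ : ℕ → ℝ} {N : ℕ} {s : ℕ → Bool} (P : PeriodicHumps q f c σ τ N S R G r e η Y Y')
include P

theorem admissiblePair : AdmissiblePair q f :=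
  (P.tuned 0).toAdmissiblePair

theorem N_ne_zero : N ≠ 0 := by
  rintro rfl
  exact P.period_pos.ne' (left_eq_add.1 (P.c_add 0))

theorem strictMono_c : StrictMono c :=
  strictMono_nat_of_lt_succ fun j ↦
    ((P.tuned j).c_lt_σ.trans (P.tuned j).σ_lt_τ).trans (P.tuned j).τ_lt_d

theorem exists_trajectory (hs : Function.Periodic s N) :
    ∃ u v, IsTrajectory q f u v ∧ Function.Periodic u S ∧ (∀ n, u (c n) ∈ Icc 0 (r / 4)) ∧
      ∀ n, 0 < u (σ n) + (τ n - σ n) * v (σ n) - r ↔ s n = true := by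
  have b := P.admissiblePair
  have hflow := b.flow_add_period P.periodic
  have hE : Function.Periodic (fun n p ↦ b.flow (c n) p (c (n + 1))) N := fun n ↦ by
    funext p
    simp only [add_right_comm n N 1, P.c_add, hflow]
  have hH : Function.Periodic (fun n p ↦ (b.flow (c n) p (σ n)).1 +
      (τ n - σ n) * (b.flow (c n) p (σ n)).2 - r) N := fun n ↦ by
    funext p
    simp only [P.c_add, P.σ_add, P.τ_add, hflow, add_sub_add_right_eq_sub]
  obtain ⟨w, hw, hchain⟩ := exists_periodic_chain P.N_ne_zero hE hH hs
    (fun n ↦ (P.tuned n).isStretching) (by linarith [(P.tuned 0).r_pos]) (P.tuned 0).neg_Y'_le_Y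
  set u := fun t ↦ (b.flow (c 0) (w 0) t).1
  set v := fun t ↦ (b.flow (c 0) (w 0) t).2
  have huv : IsTrajectory q f u v := b.isTrajectory_flow _ _
  have heq : ∀ n t, (u t, v t) = b.flow (c n) (w n) t := fun n ↦ by
    induction n with
    | zero => exact fun _ ↦ rfl
    | succ n ih => exact fun t ↦ by rw [b.eq_flow huv (c (n + 1)) t, ih, (hchain n).2.1]
  refine ⟨u, v, huv, fun t ↦ ?_, fun n ↦ ?_, fun n ↦ ?_⟩
  · have hcN : c N = c 0 + S := by rw [← P.c_add, zero_add]
    have hwN : w N = w 0 := by rw [← hw 0, zero_add]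
    have hflowN := (heq N (t + S)).trans (by rw [hcN, hwN, hflow])
    exact congrArg Prod.fst hflowN
  · have hstart : u (c n) = (w n).1 :=
      congrArg Prod.fst ((heq n (c n)).trans (b.flow_self _ _))
    exact hstart ▸ (hchain n).1
  · rw [← (hchain n).2.2, ← heq n (σ n)]

theorem fst_le (h : IsTrajectory q f u v) (hu : Function.Periodic u S) (hnonneg : ∀ t, 0 ≤ u t)
    (hc : ∀ n, u (c n) ≤ R) (t : ℝ) : u t ≤ R := by
  obtain ⟨t', ht', heq⟩ := hu.exists_mem_Ioc P.period_pos t (c 0)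
  rw [← P.c_add, zero_add, ← P.strictMono_c.monotone.biUnion_Ico_Ioc_map_succ] at ht'
  simp only [mem_iUnion] at ht'
  obtain ⟨n, -, hn⟩ := ht'
  rw [heq]
  exact (P.tuned n).fst_le h hnonneg (hc n) (hc (n + 1)) (Ioc_subset_Icc_self hn)

theorem exists_pos_trajectory (hs : Function.Periodic s N) (hs' : ∃ n, s n = true) :
    ∃ u v, IsTrajectory q f u v ∧ Function.Periodic u S ∧ (∀ t, 0 < u t) ∧ (∀ t, u t ≤ R) ∧
      ∀ n, s n = true ↔ r < u (σ n) + (τ n - σ n) * v (σ n) := by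
  obtain ⟨u, v, h, hu, hc, hcode⟩ := P.exists_trajectory hs
  have b := P.admissiblePair
  have hr := (P.tuned 0).r_pos
  have hnonneg := h.nonneg_of_periodic b P.period_pos hu (hc 0).1
  have hne : ∃ x, u x ≠ 0 := by
    by_contra! hzero
    obtain ⟨n, hn⟩ := hs'
    obtain rfl : u = fun _ ↦ 0 := funext hzero
    have hv : v (σ n) = 0 := (h.hasDerivAt (σ n)).unique (hasDerivAt_const _ _)
    have hpos := (hcode n).2 hn
    rw [hv] at hpos
    linarith
  obtain ⟨x, hx⟩ := hne
  refine ⟨u, v, h, hu, h.pos_of_periodic b P.period_pos hu hnonneg hx,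
    P.fst_le h hu hnonneg fun n ↦ ?_, fun n ↦ ?_⟩
  · linarith [(hc n).2, (P.tuned 0).r_le_R]
  · rw [← hcode, sub_pos]

end PeriodicHumps

end PeriodicHumps

/-! ### Truncation of the nonlinearity -/

section Truncation

open scoped Topology

variable {g : ℝ → ℝ} {M R s : ℝ}

/-- The function that agrees with `g` on `[0, R]`, is constant on `(-∞, 0]` and is affine of slope
`M` on `[R, ∞)`. -/
def truncation (g : ℝ → ℝ) (M R s : ℝ) : ℝ :=
  g (max 0 (min s R)) + M * max (s - R) 0

theorem truncation_of_nonpos (hR : 0 ≤ R) (hs : s ≤ 0) : truncation g M R s = g 0 := by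
  rw [truncation, min_eq_left (hs.trans hR), max_eq_left hs, max_eq_right (by linarith), mul_zero,
    add_zero]

theorem truncation_of_mem (hs : s ∈ Icc 0 R) : truncation g M R s = g s := by
  rw [truncation, min_eq_left hs.2, max_eq_right hs.1, max_eq_right (by linarith [hs.2]), mul_zero,
    add_zero]

theorem truncation_of_ge (hR : 0 ≤ R) (hs : R ≤ s) : truncation g M R s = g R + M * (s - R) := by
  rw [truncation, min_eq_right hs, max_eq_right hR, max_eq_left (sub_nonneg.2 hs)]

theorem truncation_nonneg (hg : ∀ s, 0 ≤ s → 0 ≤ g s) (hM : 0 ≤ M) : 0 ≤ truncation g M R s :=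
  add_nonneg (hg _ (le_max_left _ _)) (mul_nonneg hM (le_max_right _ _))

theorem exists_lipschitzWith_truncation (hg : LocallyLipschitzOn (Ici 0) g) (hR : 0 ≤ R) :
    ∃ Λ, LipschitzWith Λ (truncation g M R) := by
  have hgR : LocallyLipschitzOn (Icc 0 R) g := hg.mono Icc_subset_Ici_self
  obtain ⟨K, hK⟩ := hgR.exists_lipschitzOnWith_of_compact isCompact_Icc
  have hclamp : LipschitzWith 1 fun s : ℝ ↦ max 0 (min s R) :=
    (LipschitzWith.id.min_const R).const_max 0
  have hmaps : MapsTo (fun s : ℝ ↦ max 0 (min s R)) univ (Icc 0 R) := fun s _ ↦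
    ⟨le_max_left _ _, max_le hR (min_le_right _ _)⟩
  have hinner : LipschitzWith (K * 1) fun s ↦ g (max 0 (min s R)) :=
    lipschitzOnWith_univ.1 (hK.comp hclamp.lipschitzOnWith hmaps)
  have houter : LipschitzWith (‖M‖₊ * (1 + 0)) fun s ↦ M * max (s - R) 0 :=
    (lipschitzWith_smul M).comp
      ((LipschitzWith.id.sub (LipschitzWith.const R)).max_const 0)
  exact ⟨_, hinner.add houter⟩

theorem admissiblePair_truncation {q : ℝ → ℝ} (hq : LocallyIntegrable q)
    (hg : LocallyLipschitzOn (Ici 0) g) (hg₀ : g 0 = 0) (hpos : ∀ s, 0 < s → 0 < g s) (hM : 0 ≤ M)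
    (hR : 0 ≤ R) : AdmissiblePair q (truncation g M R) where
  locallyIntegrable := hq
  lipschitz := exists_lipschitzWith_truncation hg hR
  eq_zero _ hs := (truncation_of_nonpos hR hs).trans hg₀
  nonneg _ := truncation_nonneg (fun s hs ↦ hs.eq_or_lt.elim (fun h ↦ h ▸ hg₀.ge)
    fun h ↦ (hpos s h).le) hM

theorem mul_le_truncation {s₀ : ℝ} (hs₀ : 0 ≤ s₀) (hR : s₀ ≤ R)
    (hMg : ∀ s, s₀ ≤ s → M * s ≤ g s) (hs : s₀ ≤ s) : M * s ≤ truncation g M R s := by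
  rcases le_total s R with hsR | hsR
  · rw [truncation_of_mem ⟨hs₀.trans hs, hsR⟩]
    exact hMg s hs
  · rw [truncation_of_ge (hs₀.trans hR) hsR]
    linarith [hMg R hR]

theorem exists_pos_le_truncation {ρ : ℝ} (hg : ContinuousOn g (Ici 0))
    (hpos : ∀ s, 0 < s → 0 < g s) (hM : 0 ≤ M) (hρ : 0 < ρ) (hρR : ρ ≤ R) :
    ∃ η, 0 < η ∧ ∀ s, ρ ≤ s → η ≤ truncation g M R s := by
  obtain ⟨z, hz, hmin⟩ := isCompact_Icc.exists_isMinOn (nonempty_Icc.2 hρR)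
    (hg.mono (Icc_subset_Ici_self.trans (Ici_subset_Ici.2 hρ.le)))
  refine ⟨g z, hpos z (hρ.trans_le hz.1), fun s hs ↦ ?_⟩
  rcases le_total s R with hsR | hsR
  · rw [truncation_of_mem ⟨hρ.le.trans hs, hsR⟩]
    exact hmin ⟨hs, hsR⟩
  · rw [truncation_of_ge (hρ.le.trans hρR) hsR]
    exact (hmin (right_mem_Icc.2 hρR)).trans
      (le_add_of_nonneg_right (mul_nonneg hM (sub_nonneg.2 hsR)))

theorem exists_truncation_le (hg : ContinuousOn g (Ici 0)) (hg₀ : g 0 = 0) (hR : 0 ≤ R) :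
    ∃ G, 0 ≤ G ∧ ∀ s ≤ R, truncation g M R s ≤ G := by
  obtain ⟨z, -, hmax⟩ := isCompact_Icc.exists_isMaxOn (nonempty_Icc.2 hR)
    (hg.mono Icc_subset_Ici_self)
  have hz₀ : 0 ≤ g z := hg₀.ge.trans (hmax (left_mem_Icc.2 hR))
  refine ⟨g z, hz₀, fun s hs ↦ ?_⟩
  rcases le_total s 0 with hs₀ | hs₀
  · rwa [truncation_of_nonpos hR hs₀, hg₀]
  · rw [truncation_of_mem ⟨hs₀, hs⟩]
    exact hmax ⟨hs₀, hs⟩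

theorem eventually_le_mul_of_hasDerivWithinAt_zero {ε : ℝ} (hg₀ : g 0 = 0)
    (hg' : HasDerivWithinAt g 0 (Ici 0) 0) (hε : 0 < ε) : ∀ᶠ s in 𝓝[≥] 0, g s ≤ ε * s := by
  filter_upwards [(hasDerivWithinAt_iff_isLittleO.1 hg').def hε, self_mem_nhdsWithin] with s hs
    (hs₀ : 0 ≤ s)
  simp only [hg₀, sub_zero, smul_zero, Real.norm_eq_abs, abs_of_nonneg hs₀] at hs
  exact (le_abs_self _).trans hs

theorem exists_levelBounds_truncation {ε : ℝ} (hg : LocallyLipschitzOn (Ici 0) g) (hg₀ : g 0 = 0)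
    (hpos : ∀ s, 0 < s → 0 < g s) (hg' : HasDerivWithinAt g 0 (Ici 0) 0) (hM : 0 ≤ M) (hR : 0 < R)
    (hε : 0 < ε) : ∃ G r η, LevelBounds (truncation g M R) R G r (ε * r) η := by
  obtain ⟨G, hG, hGle⟩ := exists_truncation_le (M := M) hg.continuousOn hg₀ hR.le
  obtain ⟨r₁, hr₁, hle⟩ := mem_nhdsGE_iff_exists_Icc_subset.1
    (eventually_le_mul_of_hasDerivWithinAt_zero hg₀ hg' hε)
  have hr : 0 < min r₁ R := lt_min hr₁ hR
  obtain ⟨η, hη, hηle⟩ := exists_pos_le_truncation hg.continuousOn hpos hM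
    (show 0 < min r₁ R / 4 by linarith) (show min r₁ R / 4 ≤ R by linarith [min_le_right r₁ R])
  refine ⟨G, min r₁ R, η, hr, min_le_right _ _, hG, by positivity, hη, hGle, fun s hs ↦ ?_, hηle⟩
  rcases le_total s 0 with hs₀ | hs₀
  · rw [truncation_of_nonpos hR.le hs₀, hg₀]
    positivity
  · rw [truncation_of_mem ⟨hs₀, hs.trans (min_le_right _ _)⟩]
    exact (hle ⟨hs₀, hs.trans (min_le_left _ _)⟩).trans (mul_le_mul_of_nonneg_left hs hε.le)

end Truncation

/-! ### The sign condition on the real line -/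

section SignCondition

variable {a : ℝ → ℝ} {T x y : ℝ} {m : ℕ}

theorem integral_add_period (ha : Function.Periodic a T) (x y : ℝ) :
    ∫ t in (x + T)..(y + T), a t = ∫ t in x..y, a t := by
  rw [← intervalIntegral.integral_comp_add_right]
  simp only [ha _]

theorem ae_restrict_Icc_add_iff {P : ℝ → Prop} :
    (∀ᵐ t ∂volume.restrict (Icc (x + T) (y + T)), P t) ↔
      ∀ᵐ t ∂volume.restrict (Icc x y), P (t + T) := by
  have hmap := ((measurePreserving_add_right volume T).restrict_preimage_emb
    (measurableEmbedding_addRight T) (Icc (x + T) (y + T))).map_eq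
  rw [preimage_add_const_Icc, add_sub_cancel_right, add_sub_cancel_right] at hmap
  rw [← hmap, (measurableEmbedding_addRight T).ae_map_iff]

theorem posOn_Icc_add_period (ha : Function.Periodic a T) (h : PosOn a (Icc x y)) :
    PosOn a (Icc (x + T) (y + T)) := by
  rw [PosOn, ae_restrict_Icc_add_iff, ae_restrict_Icc_add_iff]
  simp only [ha _]
  exact h

theorem integral_pos_of_posOn (ha : LocallyIntegrable a) (hxy : x ≤ y) (h : PosOn a (Icc x y)) :
    0 < ∫ t in x..y, a t := by
  rw [intervalIntegral.integral_of_le hxy, ← integral_Icc_eq_integral_Ioc]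
  refine (integral_nonneg_of_ae h.1).lt_of_ne' fun hzero ↦ h.2 ?_
  exact (integral_eq_zero_iff_of_nonneg_ae h.1
    (ha.integrableOn_isCompact isCompact_Icc)).1 hzero

theorem exists_mem_Ioo_integral_pos (ha : LocallyIntegrable a) (hxy : x ≤ y)
    (h : 0 < ∫ t in x..y, a t) :
    ∃ z ∈ Ioo x y, 0 < (∫ t in x..z, a t) ∧ 0 < ∫ t in z..y, a t := by
  have h_int := intervalIntegrable_of_locallyIntegrable ha
  have hhalf : (∫ t in x..y, a t) / 2 ∈ Ioo (∫ t in x..x, a t) (∫ t in x..y, a t) := by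
    rw [intervalIntegral.integral_same]
    exact ⟨half_pos h, half_lt_self h⟩
  obtain ⟨z, hz, hzeq : ∫ t in x..z, a t = _⟩ := intermediate_value_Ioo hxy
    (continuous_primitive_of_locallyIntegrable ha x).continuousOn hhalf
  have hadd := intervalIntegral.integral_add_adjacent_intervals (h_int x z) (h_int z y)
  exact ⟨z, hz, by linarith, by linarith⟩

theorem forall_of_forall_lt_of_add {P : ℕ → Prop} (hm : m ≠ 0) (hlt : ∀ j < m, P j)
    (hadd : ∀ j, P j → P (j + m)) (j : ℕ) : P j := by
  induction j using Nat.strong_induction_on with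
  | _ j ih =>
    rcases lt_or_ge j m with hj | hj
    · exact hlt j hj
    · rw [← Nat.sub_add_cancel hj]
      exact hadd _ (ih _ (by omega))

theorem exists_seq_add_eq {A : Type*} {φ : A → A} {P : ℕ → A → Prop} (hm : m ≠ 0)
    (hlt : ∀ j < m, ∃ x, P j x) (hadd : ∀ j x, P j x → P (j + m) (φ x)) :
    ∃ X : ℕ → A, (∀ j, X (j + m) = φ (X j)) ∧ ∀ j, P j (X j) := by
  have hA : Nonempty A := let ⟨x, _⟩ := hlt 0 (Nat.pos_of_ne_zero hm); ⟨x⟩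
  choose! x hx using hlt
  have hX : ∀ j, φ^[(j + m) / m] (x ((j + m) % m)) = φ (φ^[j / m] (x (j % m))) := fun j ↦ by
    rw [Nat.add_mod_right, Nat.add_div_right _ (Nat.pos_of_ne_zero hm),
      Function.iterate_succ_apply']
  refine ⟨fun j ↦ φ^[j / m] (x (j % m)), hX, forall_of_forall_lt_of_add hm (fun j hj ↦ ?_)
    fun j hj ↦ ?_⟩
  · simp only [Nat.mod_eq_of_lt hj, Nat.div_eq_of_lt hj]
    exact hx j hj
  · simp only [hX]
    exact hadd _ _ hj

theorem exists_partition_of_signCond (hm : m ≠ 0) (ha : Function.Periodic a T)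
    (h : SignCond a T m) :
    ∃ S : ℕ → ℝ, (∀ j, S (j + 2 * m) = S j + T) ∧ (∀ j, S j < S (j + 1)) ∧
      (∀ j, PosOn a (Icc (S (2 * j)) (S (2 * j + 1)))) ∧
      ∀ j, PosOn (fun t ↦ -a t) (Icc (S (2 * j + 1)) (S (2 * j + 2))) := by
  obtain ⟨s, hs₀, hsT, hlt, hpos, hneg⟩ := h
  obtain ⟨S, hadd, hS⟩ := exists_seq_add_eq (m := 2 * m) (φ := (· + T))
    (P := fun j x ↦ j < 2 * m → x = s j) (by omega) (fun j _ ↦ ⟨s j, fun _ ↦ rfl⟩)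
    fun j _ _ hj ↦ absurd hj (by omega)
  have hSs : ∀ j ≤ 2 * m, S j = s j := fun j hj ↦ by
    rcases hj.lt_or_eq with hj | rfl
    · exact hS j hj
    · have hper := hadd 0
      rw [zero_add] at hper
      rw [hper, hS 0 (by omega), hs₀, hsT, zero_add]
  have hadd' : ∀ j i, S (2 * (j + m) + i) = S (2 * j + i) + T := fun j i ↦ by
    rw [← hadd]
    congr 1
    ring
  refine ⟨S, hadd, forall_of_forall_lt_of_add (m := 2 * m) (by omega) (fun j hj ↦ ?_)
    fun j hj ↦ ?_, forall_of_forall_lt_of_add hm (fun j hj ↦ ?_) fun j hj ↦ ?_,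
    forall_of_forall_lt_of_add hm (fun j hj ↦ ?_) fun j hj ↦ ?_⟩
  · rw [hSs _ hj.le, hSs _ hj]
    exact hlt j hj
  · rw [add_right_comm, hadd, hadd]
    exact add_lt_add_left hj T
  · rw [hSs _ (by omega), hSs _ (by omega)]
    exact hpos j hj
  · rw [hadd', ← add_zero (2 * (j + m)), hadd']
    exact posOn_Icc_add_period ha hj
  · rw [hSs _ (by omega), hSs _ (by omega)]
    exact hneg j hj
  · rw [hadd', hadd']
    exact posOn_Icc_add_period (fun t ↦ congrArg Neg.neg (ha t)) hj

/-- Points adapted to a `T`-periodic weight `a` with `m` humps per period, indexed by all natural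
numbers: `[σ j, τ j]` is the `j`-th hump, `[α j, β j]` is an inner interval carrying positive mass,
and `c j` splits the mass of the nonpositive interval preceding the hump. -/
structure HumpDecomposition (a : ℝ → ℝ) (T : ℝ) (m : ℕ) (c σ α β τ : ℕ → ℝ) : Prop where
  hump : ∀ j, Hump a (c j) (σ j) (τ j) (c (j + 1))
  σ_lt_α : ∀ j, σ j < α j
  α_lt_β : ∀ j, α j < β j
  β_lt_τ : ∀ j, β j < τ j
  c_add : ∀ j, c (j + m) = c j + T
  σ_add : ∀ j, σ (j + m) = σ j + T
  α_add : ∀ j, α (j + m) = α j + T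
  β_add : ∀ j, β (j + m) = β j + T
  τ_add : ∀ j, τ (j + m) = τ j + T
  mass_left : ∀ j, 0 < ∫ t in (c j)..(σ j), -a t
  mass_mid : ∀ j, 0 < ∫ t in (α j)..(β j), a t
  mass_right : ∀ j, 0 < ∫ t in (τ j)..(c (j + 1)), -a t

theorem exists_inner_interval (ha : LocallyIntegrable a) (hxy : x ≤ y) (h : PosOn a (Icc x y)) :
    ∃ p : ℝ × ℝ, x < p.1 ∧ p.1 < p.2 ∧ p.2 < y ∧ 0 < ∫ t in p.1..p.2, a t := by
  obtain ⟨β, hβ, hpos, -⟩ :=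
    exists_mem_Ioo_integral_pos ha hxy (integral_pos_of_posOn ha hxy h)
  obtain ⟨α, hα, -, hpos⟩ := exists_mem_Ioo_integral_pos ha hβ.1.le hpos
  exact ⟨(α, β), hα.1, hα.2, hβ.2, hpos⟩

theorem exists_humpDecomposition (hm : m ≠ 0) (ha : Function.Periodic a T)
    (hloc : LocallyIntegrable a) (h : SignCond a T m) :
    ∃ c σ α β τ, HumpDecomposition a T m c σ α β τ := by
  obtain ⟨S, hadd, hlt, hpos, hneg⟩ := exists_partition_of_signCond hm ha h
  have hadd' : ∀ j i, S (2 * (j + m) + i) = S (2 * j + i) + T := fun j i ↦ by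
    rw [← hadd]
    congr 1
    ring
  have hna : Function.Periodic (fun t ↦ -a t) T := fun t ↦ congrArg Neg.neg (ha t)
  obtain ⟨c, hc, hcmass⟩ := exists_seq_add_eq hm (φ := (· + T))
    (P := fun j z ↦ z ∈ Ioo (S (2 * j + 1)) (S (2 * j + 2)) ∧
      0 < (∫ t in (S (2 * j + 1))..z, -a t) ∧ 0 < ∫ t in z..(S (2 * j + 2)), -a t)
    (fun j _ ↦ exists_mem_Ioo_integral_pos hloc.neg (hlt _).le
      (integral_pos_of_posOn hloc.neg (hlt _).le (hneg j)))
    fun j z hz ↦ by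
      rw [hadd', hadd', integral_add_period hna, integral_add_period hna]
      exact ⟨⟨add_lt_add_left hz.1.1 T, add_lt_add_left hz.1.2 T⟩, hz.2⟩
  obtain ⟨p, hp, hpmass⟩ := exists_seq_add_eq hm (φ := fun p : ℝ × ℝ ↦ (p.1 + T, p.2 + T))
    (P := fun j p ↦ S (2 * j + 2) < p.1 ∧ p.1 < p.2 ∧ p.2 < S (2 * j + 3) ∧
      0 < ∫ t in p.1..p.2, a t)
    (fun j _ ↦ exists_inner_interval hloc (hlt _).le (hpos (j + 1)))
    fun j p hp ↦ by
      rw [hadd', hadd', integral_add_period ha]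
      exact ⟨add_lt_add_left hp.1 T, add_lt_add_left hp.2.1 T, add_lt_add_left hp.2.2.1 T,
        hp.2.2.2⟩
  have hnonpos : ∀ j, ∀ᵐ t ∂volume.restrict (Icc (S (2 * j + 1)) (S (2 * j + 2))), a t ≤ 0 :=
    fun j ↦ (hneg j).1.mono fun _ ↦ neg_nonneg.1
  refine ⟨c, fun j ↦ S (2 * j + 2), fun j ↦ (p j).1, fun j ↦ (p j).2, fun j ↦ S (2 * j + 3),
    fun j ↦ ⟨(hcmass j).1.2, hlt _, (hcmass (j + 1)).1.1, ?_, (hpos (j + 1)).1, ?_⟩,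
    fun j ↦ (hpmass j).1, fun j ↦ (hpmass j).2.1, fun j ↦ (hpmass j).2.2.1, hc,
    fun j ↦ hadd' j 2, fun j ↦ congrArg Prod.fst (hp j), fun j ↦ congrArg Prod.snd (hp j),
    fun j ↦ hadd' j 3, fun j ↦ (hcmass j).2.2, fun j ↦ (hpmass j).2.2.2,
    fun j ↦ (hcmass (j + 1)).2.1⟩
  · exact ae_restrict_of_ae_restrict_of_subset
      (Icc_subset_Icc_left (hcmass j).1.1.le) (hnonpos j)
  · exact ae_restrict_of_ae_restrict_of_subset
      (Icc_subset_Icc_right (hcmass (j + 1)).1.2.le) (hnonpos (j + 1))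

end SignCondition

/-! ### Choice of the constants -/

section Weight

variable {a : ℝ → ℝ} {μ x y t : ℝ}

/-- The weight `a⁺ - μ a⁻`. -/
def weight (a : ℝ → ℝ) (μ t : ℝ) : ℝ := max (a t) 0 - μ * max (-a t) 0

theorem weight_of_nonneg (h : 0 ≤ a t) : weight a μ t = a t := by
  rw [weight, max_eq_left h, max_eq_right (neg_nonpos.2 h), mul_zero, sub_zero]

theorem weight_of_nonpos (h : a t ≤ 0) : weight a μ t = μ * a t := by
  rw [weight, max_eq_right h, max_eq_left (neg_nonneg.2 h), mul_neg, zero_sub, neg_neg]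

theorem locallyIntegrable_weight (ha : LocallyIntegrable a) (μ : ℝ) :
    LocallyIntegrable (weight a μ) := by
  have hpos : ∀ {h : ℝ → ℝ}, LocallyIntegrable h → LocallyIntegrable fun t ↦ max (h t) 0 :=
    fun h x ↦ let ⟨U, hU, h_int⟩ := h x; ⟨U, hU, h_int.pos_part⟩
  exact (hpos ha).sub ((hpos ha.neg).smul μ)

theorem periodic_weight {T : ℝ} (ha : Function.Periodic a T) (μ : ℝ) :
    Function.Periodic (weight a μ) T := fun t ↦ by rw [weight, ha, weight]

theorem integral_weight_of_nonneg (hxy : x ≤ y)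
    (h : ∀ᵐ t ∂volume.restrict (Icc x y), 0 ≤ a t) :
    ∫ t in x..y, weight a μ t = ∫ t in x..y, a t := by
  refine intervalIntegral.integral_congr_ae_restrict ?_
  rw [uIoc_of_le hxy]
  exact ae_restrict_of_ae_restrict_of_subset Ioc_subset_Icc_self
    (h.mono fun _ ↦ weight_of_nonneg)

theorem neg_integral_weight_of_nonpos (hxy : x ≤ y)
    (h : ∀ᵐ t ∂volume.restrict (Icc x y), a t ≤ 0) :
    -∫ t in x..y, weight a μ t = μ * ∫ t in x..y, -a t := by
  rw [intervalIntegral.integral_neg, mul_neg, ← intervalIntegral.integral_const_mul]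
  congr 1
  refine intervalIntegral.integral_congr_ae_restrict ?_
  rw [uIoc_of_le hxy]
  exact ae_restrict_of_ae_restrict_of_subset Ioc_subset_Icc_self
    (h.mono fun _ ↦ weight_of_nonpos)

theorem Hump.weight {c σ τ d : ℝ} (h : Hump a c σ τ d) (hμ : 0 ≤ μ) :
    Hump (weight a μ) c σ τ d where
  __ := h
  nonpos_left := h.nonpos_left.mono fun _ ht ↦
    (weight_of_nonpos ht).trans_le (mul_nonpos_of_nonneg_of_nonpos hμ ht)
  nonneg_mid := h.nonneg_mid.mono fun _ ht ↦ (weight_of_nonneg ht).symm ▸ ht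
  nonpos_right := h.nonpos_right.mono fun _ ht ↦
    (weight_of_nonpos ht).trans_le (mul_nonpos_of_nonneg_of_nonpos hμ ht)

end Weight

section Tuning

variable {a f g : ℝ → ℝ} {m : ℕ}

theorem exists_forall_le_of_periodic {X : Type*} [LinearOrder X] {φ : ℕ → X} (hm : m ≠ 0)
    (hφ : Function.Periodic φ m) : ∃ j₀, ∀ j, φ j₀ ≤ φ j := by
  obtain ⟨j₀, -, hj₀⟩ := (Finset.range m).exists_min_image φ (Finset.nonempty_range_iff.2 hm)
  refine ⟨j₀, fun j ↦ ?_⟩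
  rw [← hφ.map_mod_nat j]
  exact hj₀ _ (Finset.mem_range.2 (Nat.mod_lt _ (Nat.pos_of_ne_zero hm)))

/-- A hump `[σ, τ]` with inner interval `[α, β]`, together with a lower bound `ℓ` and an upper
bound `L` for its lengths, and a lower bound `κ` and an upper bound `A` for its masses. -/
structure BoundedHump (a : ℝ → ℝ) (c σ α β τ d ℓ L κ A : ℝ) : Prop extends Hump a c σ τ d where
  α_le_β : α ≤ β
  ℓ_pos : 0 < ℓ
  κ_pos : 0 < κ
  ℓ_le_left : ℓ ≤ σ - c
  ℓ_le_σα : ℓ ≤ α - σ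
  ℓ_le_βτ : ℓ ≤ τ - β
  mid_le_L : τ - σ ≤ L
  right_le_L : d - τ ≤ L
  κ_le_left : κ ≤ ∫ t in c..σ, -a t
  κ_le_mid : κ ≤ ∫ t in α..β, a t
  κ_le_right : κ ≤ ∫ t in τ..d, -a t
  left_le_A : ∫ t in c..σ, -a t ≤ A
  mid_le_A : ∫ t in σ..τ, a t ≤ A

theorem HumpDecomposition.exists_boundedHump {T : ℝ} {c σ α β τ : ℕ → ℝ}
    (D : HumpDecomposition a T m c σ α β τ) (hm : m ≠ 0) (ha : Function.Periodic a T) :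
    ∃ ℓ L κ A, ∀ j,
      BoundedHump a (c j) (σ j) (α j) (β j) (τ j) (c (j + 1)) ℓ L κ A := by
  have hna : Function.Periodic (fun t ↦ -a t) T := fun t ↦ congrArg Neg.neg (ha t)
  have hc : ∀ j, c (j + m + 1) = c (j + 1) + T := fun j ↦ by rw [add_right_comm, D.c_add]
  obtain ⟨j₁, hℓ⟩ := exists_forall_le_of_periodic hm
    (φ := fun j ↦ min (σ j - c j) (min (α j - σ j) (τ j - β j))) fun j ↦ by
      simp only [D.c_add, D.σ_add, D.α_add, D.β_add, D.τ_add, add_sub_add_right_eq_sub]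
  obtain ⟨j₂, hL⟩ := exists_forall_le_of_periodic hm
    (φ := fun j ↦ -max (τ j - σ j) (c (j + 1) - τ j)) fun j ↦ by
      simp only [hc, D.σ_add, D.τ_add, add_sub_add_right_eq_sub]
  obtain ⟨j₃, hκ⟩ := exists_forall_le_of_periodic hm
    (φ := fun j ↦ min (∫ t in (c j)..(σ j), -a t)
      (min (∫ t in (α j)..(β j), a t) (∫ t in (τ j)..(c (j + 1)), -a t))) fun j ↦ by
      simp only [hc, D.c_add, D.σ_add, D.α_add, D.β_add, D.τ_add, integral_add_period hna,
        integral_add_period ha]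
  obtain ⟨j₄, hA⟩ := exists_forall_le_of_periodic hm
    (φ := fun j ↦ -max (∫ t in (c j)..(σ j), -a t) (∫ t in (σ j)..(τ j), a t)) fun j ↦ by
      simp only [D.c_add, D.σ_add, D.τ_add, integral_add_period hna, integral_add_period ha]
  simp only [neg_le_neg_iff, max_le_iff] at hL hA
  simp only [le_min_iff] at hℓ hκ
  exact ⟨_, _, _, _, fun j ↦
    { toHump := D.hump j
      α_le_β := (D.α_lt_β j).le
      ℓ_pos := lt_min (sub_pos.2 (D.hump j₁).c_lt_σ)
        (lt_min (sub_pos.2 (D.σ_lt_α j₁)) (sub_pos.2 (D.β_lt_τ j₁)))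
      κ_pos := lt_min (D.mass_left j₃) (lt_min (D.mass_mid j₃) (D.mass_right j₃))
      ℓ_le_left := (hℓ j).1
      ℓ_le_σα := (hℓ j).2.1
      ℓ_le_βτ := (hℓ j).2.2
      mid_le_L := (hL j).1
      right_le_L := (hL j).2
      κ_le_left := (hκ j).1
      κ_le_mid := (hκ j).2.1
      κ_le_right := (hκ j).2.2
      left_le_A := (hA j).1
      mid_le_A := (hA j).2 }⟩

variable {c σ α β τ d ℓ L κ A M R G r ε η Y μ s₀ : ℝ}

theorem BoundedHump.fst_le (B : BoundedHump a c σ α β τ d ℓ L κ A)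
    (b : AdmissiblePair (weight a μ) f) (hL : 0 < L) (hM : 0 ≤ M)
    (hMf : ∀ s, s₀ ≤ s → M * s ≤ f s) (hMκ : 2 / ℓ < M * (ℓ / L) * κ) (hR : 0 ≤ R)
    (hs₀ : s₀ ≤ ℓ / L * R) {u v : ℝ → ℝ} (h : IsTrajectory (weight a μ) f u v)
    (hu : ∀ t ∈ Icc σ τ, 0 ≤ u t) : ∀ t ∈ Icc σ τ, u t ≤ R := by
  have hℓ := B.ℓ_pos
  have hσα := B.ℓ_le_σα
  have hβτ := B.ℓ_le_βτ
  have hδL : ℓ / L * (τ - σ) ≤ ℓ := by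
    calc ℓ / L * (τ - σ) ≤ ℓ / L * L := by gcongr; exact B.mid_le_L
      _ = ℓ := div_mul_cancel₀ _ hL.ne'
  have hmid : ∫ t in α..β, weight a μ t = ∫ t in α..β, a t :=
    integral_weight_of_nonneg B.α_le_β (ae_restrict_of_ae_restrict_of_subset
      (Icc_subset_Icc (by linarith) (by linarith)) B.nonneg_mid)
  refine h.fst_le_of_superlinear b (by linarith) B.α_le_β (by linarith)
    (B.nonneg_mid.mono fun t ht ↦ (weight_of_nonneg (μ := μ) ht).symm ▸ ht) (div_pos hℓ hL)
    (hδL.trans hσα) (hδL.trans hβτ) hM hMf ?_ hR hs₀ hu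
  calc 1 / (α - σ) + 1 / (τ - β) ≤ 1 / ℓ + 1 / ℓ := by gcongr
    _ = 2 / ℓ := by ring
    _ < M * (ℓ / L) * κ := hMκ
    _ ≤ M * (ℓ / L) * ∫ t in α..β, weight a μ t := by
      rw [hmid]
      gcongr
      exact B.κ_le_mid

theorem BoundedHump.integral_weight_mid_le (B : BoundedHump a c σ α β τ d ℓ L κ A) :
    ∫ t in σ..τ, weight a μ t ≤ A :=
  (integral_weight_of_nonneg B.σ_lt_τ.le B.nonneg_mid).trans_le B.mid_le_A

theorem BoundedHump.integral_weight_left_le (B : BoundedHump a c σ α β τ d ℓ L κ A)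
    (hμ : 0 ≤ μ) : -∫ t in c..σ, weight a μ t ≤ μ * A :=
  (neg_integral_weight_of_nonpos B.c_lt_σ.le B.nonpos_left).trans_le
    (mul_le_mul_of_nonneg_left B.left_le_A hμ)

theorem BoundedHump.le_integral_weight_left (B : BoundedHump a c σ α β τ d ℓ L κ A)
    (hμ : 0 ≤ μ) : μ * κ ≤ -∫ t in c..σ, weight a μ t :=
  (mul_le_mul_of_nonneg_left B.κ_le_left hμ).trans_eq
    (neg_integral_weight_of_nonpos B.c_lt_σ.le B.nonpos_left).symm

theorem BoundedHump.le_integral_weight_right (B : BoundedHump a c σ α β τ d ℓ L κ A)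
    (hμ : 0 ≤ μ) : μ * κ ≤ -∫ t in τ..d, weight a μ t :=
  (mul_le_mul_of_nonneg_left B.κ_le_right hμ).trans_eq
    (neg_integral_weight_of_nonpos B.τ_lt_d.le B.nonpos_right).symm

theorem BoundedHump.tunedHump (B : BoundedHump a c σ α β τ d ℓ L κ A)
    (b : AdmissiblePair (weight a μ) f) (l : LevelBounds f R G r (ε * r) η) (hμ : 0 ≤ μ)
    (hε : 0 ≤ ε)
    (hap : ∀ u v, IsTrajectory (weight a μ) f u v → (∀ t ∈ Icc σ τ, 0 ≤ u t) →
      ∀ t ∈ Icc σ τ, u t ≤ R)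
    (hεA : ε * A * L ≤ 1 / 4) (hY : G * A + R / ℓ < Y) (hrY : r < ℓ * Y)
    (hμY : Y + 1 + ε * r * A ≤ η * (μ * κ)) :
    TunedHump (weight a μ) f c σ τ d R G r (ε * r) η Y (G * (μ * A) + r / ℓ + 1) := by
  have hℓ := B.ℓ_pos
  have hr := l.r_pos
  have hη := l.η_pos
  have hG := l.G_nonneg
  have hR : 0 ≤ R := hr.le.trans l.r_le_R
  have hℓmid : ℓ ≤ τ - σ := by linarith [B.ℓ_le_σα, B.ℓ_le_βτ, B.α_le_β]
  have hY₀ : 0 ≤ Y := (pos_of_mul_pos_right (hr.trans hrY) hℓ.le).le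
  have hmid : ∫ t in σ..τ, weight a μ t ≤ A := B.integral_weight_mid_le
  have hA : 0 ≤ A := (intervalIntegral.integral_nonneg_of_ae_restrict B.σ_lt_τ.le
    B.nonneg_mid).trans B.mid_le_A
  have hloss : ∀ x, 0 ≤ x → x ≤ L → ε * r * (∫ t in σ..τ, weight a μ t) * x ≤ r / 4 :=
    fun x hx hxL ↦
      calc ε * r * (∫ t in σ..τ, weight a μ t) * x ≤ ε * r * A * L := by gcongr
        _ = r * (ε * A * L) := by ring
        _ ≤ r * (1 / 4) := by gcongr
        _ = r / 4 := by ring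
  exact
    { toAdmissiblePair := b
      toHump := B.toHump.weight hμ
      toLevelBounds := l
      apriori := hap
      drop_lt := lt_of_le_of_lt (by gcongr) hY
      r_lt := hrY.trans_le (mul_le_mul_of_nonneg_right hℓmid hY₀)
      Y_le := (by linarith [mul_nonneg (mul_nonneg hε hr.le) hA] : Y ≤ η * (μ * κ)).trans
        (mul_le_mul_of_nonneg_left (B.le_integral_weight_left hμ) hη.le)
      Y_add_one_le := calc
        Y + 1 + ε * r * (∫ t in σ..τ, weight a μ t) ≤ Y + 1 + ε * r * A := by gcongr
        _ ≤ η * (μ * κ) := hμY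
        _ ≤ η * -∫ t in τ..d, weight a μ t := by gcongr; exact B.le_integral_weight_right hμ
      loss_hump_le := (hloss _ (sub_nonneg.2 B.σ_lt_τ.le) B.mid_le_L).trans (by linarith)
      loss_right_le := hloss _ (sub_nonneg.2 B.τ_lt_d.le) B.right_le_L
      lt_Y' := lt_add_of_le_of_pos (add_le_add
        (mul_le_mul_of_nonneg_left (B.integral_weight_left_le hμ) hG)
        (div_le_div_of_nonneg_left hr.le hℓ B.ℓ_le_left)) one_pos }

theorem exists_superlinear_truncation (hℓ : 0 < ℓ) (hL : 0 < L) (hκ : 0 < κ)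
    (hg : Tendsto (fun s ↦ g s / s) atTop atTop) :
    ∃ M R s₀, 0 ≤ M ∧ 0 < R ∧ (∀ s, s₀ ≤ s → M * s ≤ truncation g M R s) ∧
      2 / ℓ < M * (ℓ / L) * κ ∧ s₀ ≤ ℓ / L * R := by
  set M := (2 / ℓ + 1) / (ℓ / L * κ) with hMdef
  have hM : M * (ℓ / L) * κ = 2 / ℓ + 1 := by
    rw [hMdef, mul_assoc, div_mul_cancel₀ _ (by positivity)]
  obtain ⟨s₁, hs₁⟩ := (hg.eventually_ge_atTop M).exists_forall_of_atTop
  have hs₀ : 0 < max s₁ 1 := lt_max_of_lt_right one_pos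
  have hMg : ∀ s, max s₁ 1 ≤ s → M * s ≤ g s := fun s hs ↦
    (le_div_iff₀ (hs₀.trans_le hs)).1 (hs₁ s ((le_max_left _ _).trans hs))
  refine ⟨M, max (max s₁ 1) (max s₁ 1 / (ℓ / L)), max s₁ 1, by positivity,
    lt_max_of_lt_left hs₀, fun s ↦ mul_le_truncation hs₀.le (le_max_left _ _) hMg,
    by rw [hM]; exact lt_add_one _, ?_⟩
  rw [← div_le_iff₀' (by positivity)]
  exact le_max_right _ _

theorem exists_tunedHump {c σ α β τ d : ℕ → ℝ}
    (B : ∀ j, BoundedHump a (c j) (σ j) (α j) (β j) (τ j) (d j) ℓ L κ A)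
    (ha : LocallyIntegrable a) (hg : LocallyLipschitzOn (Ici 0) g) (hg₀ : g 0 = 0)
    (hpos : ∀ s, 0 < s → 0 < g s) (hg' : HasDerivWithinAt g 0 (Ici 0) 0)
    (hg_top : Tendsto (fun s ↦ g s / s) atTop atTop) :
    ∃ f R G r e η Y, (∀ s ∈ Icc 0 R, f s = g s) ∧ ∃ μ₀, 0 < μ₀ ∧ ∀ μ, μ₀ < μ → ∃ Y', ∀ j,
      TunedHump (weight a μ) f (c j) (σ j) (τ j) (d j) R G r e η Y Y' := by
  have hℓ := (B 0).ℓ_pos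
  have hκ := (B 0).κ_pos
  have hL : 0 < L := (sub_pos.2 (B 0).σ_lt_τ).trans_le (B 0).mid_le_L
  have hA : 0 < A := hκ.trans_le ((B 0).κ_le_left.trans (B 0).left_le_A)
  obtain ⟨M, R, s₀, hM, hR, hMf, hMκ, hs₀⟩ := exists_superlinear_truncation hℓ hL hκ hg_top
  obtain ⟨G, r, η, l⟩ :=
    exists_levelBounds_truncation (ε := 1 / (4 * A * L)) hg hg₀ hpos hg' hM hR (by positivity)
  have hr := l.r_pos
  have hη := l.η_pos
  obtain ⟨Y, hY, hrY⟩ : ∃ Y, G * A + R / ℓ < Y ∧ r / ℓ < Y :=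
    (exists_gt (max (G * A + R / ℓ) (r / ℓ))).imp fun _ ↦ max_lt_iff.1
  have hY₀ : 0 < Y := (div_pos hr hℓ).trans hrY
  refine ⟨truncation g M R, R, G, r, 1 / (4 * A * L) * r, η, Y, fun s ↦ truncation_of_mem,
    (Y + 1 + 1 / (4 * A * L) * r * A) / (η * κ), by positivity,
    fun μ hμ ↦ ⟨G * (μ * A) + r / ℓ + 1, fun j ↦ ?_⟩⟩
  have hμ₀ : 0 < μ := lt_trans (by positivity) hμ
  have b := admissiblePair_truncation (locallyIntegrable_weight ha μ) hg hg₀ hpos hM hR.le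
  refine (B j).tunedHump b l hμ₀.le (by positivity)
    (fun u v h hu ↦ (B j).fst_le b hL hM hMf hMκ hR.le hs₀ h hu) ?_ hY
    ((div_lt_iff₀' hℓ).1 hrY) ?_
  · exact le_of_eq (by field_simp)
  · rw [div_lt_iff₀ (by positivity)] at hμ
    linarith

end Tuning

/-! ### Periodic orbits and necklaces -/

section PeriodicOrbits

open Function

variable {X : Type*} {F : X → X} {k : ℕ}

theorem sum_divisors_ncard_minimalPeriod_eq (hk : 0 < k) (hfin : (ptsOfPeriod F k).Finite) :
    ∑ d ∈ k.divisors, {x | minimalPeriod F x = d}.ncard = (ptsOfPeriod F k).ncard := by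
  classical
  have hmem : ∀ x ∈ hfin.toFinset, minimalPeriod F x ∈ k.divisors := fun x hx ↦
    Nat.mem_divisors.2 ⟨IsPeriodicPt.minimalPeriod_dvd (hfin.mem_toFinset.1 hx), hk.ne'⟩
  rw [ncard_eq_toFinset_card _ hfin, Finset.card_eq_sum_card_fiberwise hmem]
  refine Finset.sum_congr rfl fun d hd ↦ ?_
  rw [← ncard_coe_finset]
  congr 1
  ext x
  simp only [mem_ofPred_eq, Finset.coe_filter, hfin.mem_toFinset, mem_ptsOfPeriod,
    isPeriodicPt_iff_minimalPeriod_dvd]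
  exact ⟨fun hx ↦ ⟨hx ▸ Nat.dvd_of_mem_divisors hd, hx⟩, And.right⟩

theorem ncard_minimalPeriod_eq_sum_moebius (hk : 0 < k)
    (hfin : ∀ n, 0 < n → (ptsOfPeriod F n).Finite) :
    ({x | minimalPeriod F x = k}.ncard : ℤ) =
      ∑ l ∈ k.divisors, ArithmeticFunction.moebius l * ((ptsOfPeriod F (k / l)).ncard : ℤ) := by
  have hsum : ∀ n > 0, ∑ d ∈ n.divisors, ({x | minimalPeriod F x = d}.ncard : ℤ) =
      (ptsOfPeriod F n).ncard := fun n hn ↦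
    mod_cast sum_divisors_ncard_minimalPeriod_eq hn (hfin n hn)
  rw [← ArithmeticFunction.sum_eq_iff_sum_mul_moebius_eq.1 hsum k hk]
  exact Nat.sum_divisorsAntidiagonal
    fun l n ↦ ArithmeticFunction.moebius l * ((ptsOfPeriod F n).ncard : ℤ)

theorem card_filter_periodicOrbit_eq_le [DecidableEq (Cycle X)] (P : Finset X)
    (hP : ∀ x ∈ P, minimalPeriod F x = k) (hk : 0 < k) {x : X} (hx : x ∈ P) :
    (P.filter fun y ↦ periodicOrbit F y = periodicOrbit F x).card ≤ k := by
  classical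
  have hper : ∀ y ∈ P, y ∈ periodicPts F := fun y hy ↦
    minimalPeriod_pos_iff_mem_periodicPts.1 ((hP y hy).symm ▸ hk)
  suffices h : (P.filter fun y ↦ periodicOrbit F y = periodicOrbit F x) ⊆
      (Finset.range k).image fun i ↦ F^[i] x from
    (Finset.card_le_card h).trans (Finset.card_image_le.trans (Finset.card_range k).le)
  intro y hy
  obtain ⟨hyP, hyx⟩ := Finset.mem_filter.1 hy
  obtain ⟨i, rfl⟩ := (mem_periodicOrbit_iff (hper x hx)).1
    (hyx ▸ self_mem_periodicOrbit (hper y hyP))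
  refine Finset.mem_image.2 ⟨i % k, Finset.mem_range.2 (Nat.mod_lt _ hk), ?_⟩
  rw [← hP x hx, iterate_mod_minimalPeriod_eq]

theorem exists_finset_orbit_representatives (hk : 0 < k)
    (hfin : {x | minimalPeriod F x = k}.Finite) :
    ∃ W : Finset X, {x | minimalPeriod F x = k}.ncard ≤ k * W.card ∧
      (∀ x ∈ W, minimalPeriod F x = k) ∧ ∀ x ∈ W, ∀ y ∈ W, ∀ i, F^[i] x = y → x = y := by
  classical
  obtain ⟨W, hWsub, hWinj, hWimage⟩ := Finset.exists_subset_injOn_image_eq_of_surjOn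
    (f := periodicOrbit F) hfin.toFinset (hfin.toFinset.image (periodicOrbit F))
    (by rw [Finset.coe_image]; exact surjOn_image _ _)
  have hW : ∀ x ∈ W, minimalPeriod F x = k := fun x hx ↦ hfin.mem_toFinset.1 (hWsub hx)
  refine ⟨W, ?_, hW, fun x hx y hy i hxy ↦ hWinj hx hy ?_⟩
  · rw [ncard_eq_toFinset_card _ hfin, ← Finset.card_image_of_injOn hWinj, hWimage]
    refine Finset.card_le_mul_card_image _ _ fun C hC ↦ ?_
    obtain ⟨x, hx, rfl⟩ := Finset.mem_image.1 hC
    exact card_filter_periodicOrbit_eq_le _ (fun y ↦ hfin.mem_toFinset.1) hk hx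
  · rw [← hxy, periodicOrbit_apply_iterate_eq
      (minimalPeriod_pos_iff_mem_periodicPts.1 ((hW x hx).symm ▸ hk))]

end PeriodicOrbits

section Necklaces

variable {A : Type*} {m k : ℕ} {w : ℕ → A}

/-- The shift by `m` letters on sequences; the aperiodic necklaces of length `k` on the blocks of
`m` letters are its orbits of minimal period `k`. -/
def blockShift (m : ℕ) (w : ℕ → A) (n : ℕ) : A := w (n + m)

theorem iterate_blockShift (m i : ℕ) (w : ℕ → A) (n : ℕ) :
    (blockShift m)^[i] w n = w (n + i * m) := by
  induction i generalizing w with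
  | zero => rw [Function.iterate_zero_apply, zero_mul, add_zero]
  | succ i ih => rw [Function.iterate_succ_apply, ih, blockShift, add_assoc, Nat.succ_mul]

theorem isPeriodicPt_blockShift_iff :
    Function.IsPeriodicPt (blockShift m) k w ↔ Function.Periodic w (k * m) := by
  simp only [Function.IsPeriodicPt, Function.IsFixedPt, funext_iff, iterate_blockShift,
    Function.Periodic]

/-- The sequences fixed by the `k`-th power of the block shift, each given by its first `k * m`
letters. -/
def ptsOfPeriodBlockShiftEquiv (A : Type*) (hkm : 0 < k * m) :
    (Fin (k * m) → A) ≃ Function.ptsOfPeriod (blockShift (A := A) m) k where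
  toFun v := ⟨fun n ↦ v ⟨n % (k * m), Nat.mod_lt n hkm⟩,
    isPeriodicPt_blockShift_iff.2 fun n ↦ by simp only [Nat.add_mod_right]⟩
  invFun w i := w.1 i
  left_inv v := by
    ext i
    simp only [Nat.mod_eq_of_lt i.2]
  right_inv w := Subtype.ext (funext (isPeriodicPt_blockShift_iff.1 w.2).map_mod_nat)

theorem ncard_ptsOfPeriod_blockShift (A : Type*) [Fintype A] (hkm : 0 < k * m) :
    (Function.ptsOfPeriod (blockShift (A := A) m) k).ncard = (Fintype.card A ^ m) ^ k := by
  rw [← Nat.card_coe_set_eq, ← pow_mul, mul_comm m,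
    ← Nat.card_congr (ptsOfPeriodBlockShiftEquiv A hkm), Nat.card_fun, Nat.card_fin,
    Nat.card_eq_fintype_card]

theorem exists_finset_necklaces (A : Type*) [Fintype A] (hm : m ≠ 0) (hk : 0 < k) :
    ∃ W : Finset (ℕ → A), necklaceCount (Fintype.card A ^ m) k ≤ W.card ∧
      (∀ w ∈ W, Function.minimalPeriod (blockShift m) w = k) ∧
      ∀ w ∈ W, ∀ w' ∈ W, ∀ i, (blockShift m)^[i] w = w' → w = w' := by
  have hkm : ∀ n, 0 < n → 0 < n * m := fun n hn ↦ Nat.mul_pos hn (Nat.pos_of_ne_zero hm)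
  have hfin : ∀ n, 0 < n → (Function.ptsOfPeriod (blockShift (A := A) m) n).Finite := fun n hn ↦
    finite_coe_iff.1 <| .of_equiv _ (ptsOfPeriodBlockShiftEquiv A (hkm n hn))
  obtain ⟨W, hcard, hW, hinj⟩ := exists_finset_orbit_representatives hk
    ((hfin k hk).subset fun w (hw : Function.minimalPeriod (blockShift m) w = k) ↦
      hw ▸ Function.isPeriodicPt_minimalPeriod _ w)
  refine ⟨W, ?_, hW, hinj⟩
  have hcount : ∑ l ∈ k.divisors,
      ArithmeticFunction.moebius l * ((Fintype.card A ^ m : ℕ) : ℤ) ^ (k / l) ≤ k * W.card := by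
    calc ∑ l ∈ k.divisors,
          ArithmeticFunction.moebius l * ((Fintype.card A ^ m : ℕ) : ℤ) ^ (k / l)
        = {w : ℕ → A | Function.minimalPeriod (blockShift m) w = k}.ncard := by
          rw [ncard_minimalPeriod_eq_sum_moebius hk hfin]
          refine Finset.sum_congr rfl fun l hl ↦ ?_
          rw [ncard_ptsOfPeriod_blockShift A (hkm _ (Nat.div_pos (Nat.divisor_le hl)
            (Nat.pos_of_mem_divisors hl))), Nat.cast_pow _ (k / l)]
      _ ≤ k * W.card := mod_cast hcard
  exact Int.ediv_le_of_le_mul (mod_cast hk) (by rwa [mul_comm])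

end Necklaces

/-! ### Coding of periodic solutions -/

section Coding

variable {q f g u u' v : ℝ → ℝ} {c σ τ : ℕ → ℝ} {w w' : ℕ → Bool} {m k : ℕ}
  {T R G r e η Y Y' : ℝ}

theorem IsTrajectory.isSol (h : IsTrajectory q f u v) (b : AdmissiblePair q f)
    (hfg : ∀ t, f (u t) = g (u t)) : IsSol (fun t s ↦ q t * g s) u := by
  refine ⟨v, h.hasDerivAt, ?_, fun t ↦ ?_⟩
  · simp only [← hfg]
    exact b.locallyIntegrable_mul_comp h.continuous_fst
  · simp only [← hfg]
    exact h.snd_eq 0 t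

theorem apply_add_mul_of_apply_add {x : ℕ → ℝ} (hx : ∀ j, x (j + m) = x j + T) (l j : ℕ) :
    x (j + l * m) = x j + l * T := by
  induction l with
  | zero => rw [zero_mul, add_zero, Nat.cast_zero, zero_mul, add_zero]
  | succ l ih =>
    rw [Nat.succ_mul, ← add_assoc, hx, ih, Nat.cast_succ]
    ring

theorem PeriodicHumps.iterate (P : PeriodicHumps q f c σ τ m T R G r e η Y Y') (hk : 0 < k) :
    PeriodicHumps q f c σ τ (k * m) (k * T) R G r e η Y Y' where
  tuned := P.tuned
  period_pos := mul_pos (Nat.cast_pos.2 hk) P.period_pos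
  periodic := P.periodic.nat_mul k
  c_add := apply_add_mul_of_apply_add P.c_add k
  σ_add := apply_add_mul_of_apply_add P.σ_add k
  τ_add := apply_add_mul_of_apply_add P.τ_add k

/-- `w` is the itinerary of `u`: its `n`-th letter tells whether the line tangent to `u` at the
beginning `σ n` of the `n`-th hump exceeds `r` at the end `τ n`. This detects whether `u` is large
on that hump. -/
def HasItinerary (r : ℝ) (σ τ : ℕ → ℝ) (u : ℝ → ℝ) (w : ℕ → Bool) : Prop :=
  ∀ n, w n = true ↔ r < u (σ n) + (τ n - σ n) * deriv u (σ n)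

theorem HasItinerary.iterate_blockShift_eq (hu : HasItinerary r σ τ u w)
    (hu' : HasItinerary r σ τ u' w') (hσ : ∀ j, σ (j + m) = σ j + T)
    (hτ : ∀ j, τ (j + m) = τ j + T) {l : ℕ} (h : ∀ t, u' t = u (t + l * T)) :
    (blockShift m)^[l] w = w' := by
  ext n
  have hderiv : deriv u' (σ n) = deriv u (σ n + l * T) := by
    rw [funext h, deriv_comp_add_const]
  rw [iterate_blockShift, Bool.eq_iff_iff, hu, hu', h, hderiv, apply_add_mul_of_apply_add hσ,
    apply_add_mul_of_apply_add hτ, add_sub_add_right_eq_sub]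

theorem exists_eq_true_of_minimalPeriod_ne_one
    (hw : Function.minimalPeriod (blockShift m) w ≠ 1) : ∃ n, w n = true := by
  contrapose! hw
  refine Function.minimalPeriod_eq_one_iff_isFixedPt.2 (funext fun n ↦ ?_)
  rw [blockShift, Bool.eq_false_of_not_eq_true (hw n), Bool.eq_false_of_not_eq_true (hw (n + m))]

theorem PeriodicHumps.exists_subharmonic (P : PeriodicHumps q f c σ τ m T R G r e η Y Y')
    (hfg : ∀ s ∈ Icc 0 R, f s = g s) (hk : 2 ≤ k)
    (hw : Function.minimalPeriod (blockShift m) w = k) :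
    ∃ u, IsSol (fun t s ↦ q t * g s) u ∧ (∀ t, 0 < u t) ∧ IsSubharmonic u T k ∧
      HasItinerary r σ τ u w := by
  have hwper : Function.Periodic w (k * m) :=
    isPeriodicPt_blockShift_iff.1 (hw ▸ Function.isPeriodicPt_minimalPeriod _ w)
  obtain ⟨u, v, h, hu, hpos, hle, hcode⟩ := (P.iterate (by omega)).exists_pos_trajectory hwper
    (exists_eq_true_of_minimalPeriod_ne_one (m := m) (by omega))
  have hitin : HasItinerary r σ τ u w := fun n ↦ by rw [(h.hasDerivAt _).deriv, hcode]
  refine ⟨u, h.isSol (P.tuned 0).toAdmissiblePair fun t ↦ hfg _ ⟨(hpos t).le, hle t⟩, hpos,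
    ⟨hu, fun l hl hlk hper ↦ ?_⟩, hitin⟩
  have hfix : Function.IsPeriodicPt (blockShift m) l w :=
    hitin.iterate_blockShift_eq hitin P.σ_add P.τ_add fun t ↦ (hper t).symm
  exact hlk.not_ge (hw ▸ hfix.minimalPeriod_le hl)

theorem exists_nat_of_sameClass (hk : k ≠ 0) (hu : Function.Periodic u (k * T))
    (h : SameClass u v T) : ∃ l : ℕ, ∀ t, v t = u (t + l * T) := by
  obtain ⟨i, hi⟩ := h
  lift i % k to ℕ using Int.emod_nonneg i (Nat.cast_ne_zero.2 hk) with l hl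
  have hdiv : (i : ℝ) = l + (i / k : ℤ) * k := by
    rw [← Int.cast_natCast l, hl]
    exact_mod_cast (Int.emod_add_ediv_mul i k).symm
  refine ⟨l, fun t ↦ ?_⟩
  rw [hi, hdiv, ← hu.int_mul (i / k) (t + l * T)]
  ring_nf

theorem PeriodicHumps.exists_finset_subharmonics
    (P : PeriodicHumps q f c σ τ m T R G r e η Y Y') (hm : m ≠ 0)
    (hfg : ∀ s ∈ Icc 0 R, f s = g s) (hk : 2 ≤ k) :
    ∃ U : Finset (ℝ → ℝ), necklaceCount (2 ^ m) k ≤ U.card ∧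
      (∀ u ∈ U, IsSol (fun t s ↦ q t * g s) u ∧ (∀ t, 0 < u t) ∧ IsSubharmonic u T k) ∧
      ∀ u ∈ U, ∀ v ∈ U, u ≠ v → ¬ SameClass u v T := by
  classical
  obtain ⟨W, hcard, hW, hinj⟩ := exists_finset_necklaces Bool (m := m) (k := k) hm (by omega)
  have hsol := fun w hw ↦ P.exists_subharmonic hfg hk (hW w hw)
  choose! u hsol hpos hsub hitin using hsol
  have hclass : ∀ w ∈ W, ∀ w' ∈ W, SameClass (u w) (u w') T → w = w' := fun w hw w' hw' h ↦ by
    obtain ⟨l, hl⟩ := exists_nat_of_sameClass (by omega) (hsub w hw).1 h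
    exact hinj w hw w' hw' l
      ((hitin w hw).iterate_blockShift_eq (hitin w' hw') P.σ_add P.τ_add hl)
  have hinjOn : InjOn u W := fun w hw w' hw' h ↦ hclass w hw w' hw' ⟨0, fun t ↦ by
    rw [h, Int.cast_zero, zero_mul, add_zero]⟩
  refine ⟨W.image u, ?_, ?_, ?_⟩
  · rwa [Finset.card_image_of_injOn hinjOn]
  · rw [Finset.forall_mem_image]
    exact fun w hw ↦ ⟨hsol w hw, hpos w hw, hsub w hw⟩
  · simp only [Finset.forall_mem_image]
    exact fun w hw w' hw' hne h ↦ hne (congrArg u (hclass w hw w' hw' h))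

end Coding

theorem ne_zero_of_signCond {a : ℝ → ℝ} {T : ℝ} {m : ℕ} (hT : T ≠ 0) (h : SignCond a T m) :
    m ≠ 0 := by
  rintro rfl
  obtain ⟨s, hs₀, hsT, -⟩ := h
  exact hT (hsT.symm.trans hs₀)

theorem stmt7_general (T : ℝ) (hT : 0 < T) (a : ℝ → ℝ) (haper : Function.Periodic a T)
    (haloc : LocallyIntegrable a) (m : ℕ) (hasign : SignCond a T m)
    (g : ℝ → ℝ) (hg : LocallyLipschitzOn (Ici 0) g) (hg0 : g 0 = 0)
    (hgpos : ∀ s : ℝ, 0 < s → 0 < g s) (hg' : HasDerivWithinAt g 0 (Ici 0) 0)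
    (hgsup : Tendsto (fun s ↦ g s / s) atTop atTop) :
    ∃ μstar : ℝ, 0 < μstar ∧ ∀ μ : ℝ, μstar < μ → ∀ k : ℕ, 2 ≤ k →
      ∃ U : Finset (ℝ → ℝ), necklaceCount (2 ^ m) k ≤ (U.card : ℤ) ∧
        (∀ u ∈ U, IsSol (fun t s ↦ (max (a t) 0 - μ * max (-a t) 0) * g s) u ∧
          (∀ t, 0 < u t) ∧ IsSubharmonic u T k) ∧
        ∀ u ∈ U, ∀ v ∈ U, u ≠ v → ¬ SameClass u v T := by
  have hm := ne_zero_of_signCond hT.ne' hasign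
  obtain ⟨c, σ, α, β, τ, D⟩ := exists_humpDecomposition hm haper haloc hasign
  obtain ⟨ℓ, L, κ, A, B⟩ := D.exists_boundedHump hm haper
  obtain ⟨f, R, G, r, e, η, Y, hfg, μ₀, hμ₀, htuned⟩ :=
    exists_tunedHump B haloc hg hg0 hgpos hg' hgsup
  refine ⟨μ₀, hμ₀, fun μ hμ k hk ↦ ?_⟩
  obtain ⟨Y', hY'⟩ := htuned μ hμ
  have P : PeriodicHumps (weight a μ) f c σ τ m T R G r e η Y Y' :=
    ⟨hY', hT, periodic_weight haper μ, D.c_add, D.σ_add, D.τ_add⟩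
  exact P.exists_finset_subharmonics hm hfg hk

/-- Theorem 4.2: for `μ` large, for each `k ≥ 2` the equation
`u'' + (a⁺ - μ a⁻) g(u) = 0` has at least `S_{2^m}(k)` positive subharmonic solutions of
order `k`, pairwise not in the same periodicity class. -/
theorem stmt7 (T : ℝ) (hT : 0 < T) (a : ℝ → ℝ)
    (haper : Function.Periodic a T)
    (haloc : MeasureTheory.LocallyIntegrable a MeasureTheory.volume)
    (m : ℕ) (hm : 1 ≤ m) (hasign : SignCond a T m)
    (g : ℝ → ℝ) (hgC1 : ContDiffOn ℝ 1 g (Set.Ici 0))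
    (hg0 : g 0 = 0) (hgpos : ∀ s : ℝ, 0 < s → 0 < g s)
    (hg'0 : derivWithin g (Set.Ici 0) 0 = 0)
    (hgsup : Filter.Tendsto (fun s => g s / s) Filter.atTop Filter.atTop) :
    ∃ μstar : ℝ, 0 < μstar ∧ ∀ μ : ℝ, μstar < μ → ∀ k : ℕ, 2 ≤ k →
      ∃ U : Finset (ℝ → ℝ), necklaceCount (2 ^ m) k ≤ (U.card : ℤ) ∧
        (∀ u ∈ U,
          IsSol (fun t s => (max (a t) 0 - μ * max (-a t) 0) * g s) u ∧
          (∀ t, 0 < u t) ∧ IsSubharmonic u T k) ∧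
        ∀ u ∈ U, ∀ v ∈ U, u ≠ v → ¬ SameClass u v T :=
  stmt7_general T hT a haper haloc m hasign g (hgC1.locallyLipschitzOn (convex_Ici 0)) hg0 hgpos
    ((hgC1.differentiableOn one_ne_zero 0 self_mem_Ici).hasDerivWithinAt.congr_deriv hg'0) hgsup
end

section
/- Let T > 0, let q : ℝ → ℝ be T-periodic, locally integrable and not identically zero (a.e.), let g ∈ C¹([0,∞)) satisfy (g*) together with g'(s) > 0 for all s > 0, and let k ≥ 1 be an integer. If there exists a positive kT-periodic solution u of u'' + q(t) g(u) = 0, then k ∫_0^T q(t) dt = − ∫_0^{kT} (u'(t)/g(u(t)))² g'(u(t)) dt < 0; in particular ∫_0^T q(t) dt < 0. -/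
open MeasureTheory Set Filter

/-!
Along a solution on which `g ∘ u` does not vanish, `w = u' / g(u)` satisfies the Riccati equation
`w' = -q - w² g'(u)` almost everywhere. Since `w` is absolutely continuous and inherits the period
of `u`, integrating over a period expresses `∫ q` as `-∫ w² g'(u)`, which is nonpositive for
increasing `g`. Were it zero, `(g ∘ u)' = g'(u) u'` would vanish identically; as `g` is injective,
`u` would be constant, forcing `q = 0` a.e.
-/

theorem strictMonoOn_of_derivWithin_pos {D : Set ℝ} (hD : Convex ℝ D) {f : ℝ → ℝ}
    (hf : ContinuousOn f D) (hf' : ∀ x ∈ interior D, 0 < derivWithin f D x) :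
    StrictMonoOn f D :=
  strictMonoOn_of_deriv_pos hD hf fun x hx =>
    derivWithin_of_mem_nhds (f := f) (mem_interior_iff_mem_nhds.1 hx) ▸ hf' x hx

theorem periodic_deriv {f : ℝ → ℝ} {L : ℝ} (hf : Function.Periodic f L) :
    Function.Periodic (deriv f) L := fun t => by
  rw [← deriv_comp_add_const, funext hf]

theorem integral_pos_of_periodic {f : ℝ → ℝ} {L : ℝ} (hL : 0 < L) (hfc : Continuous f)
    (hf : Function.Periodic f L) (hf0 : 0 ≤ f) (hne : f ≠ 0) : 0 < ∫ t in (0 : ℝ)..L, f t := by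
  obtain ⟨t, ht⟩ := Function.ne_iff.1 hne
  obtain ⟨t₀, ht₀, heq⟩ := hf.exists_mem_Ico₀ hL t
  exact intervalIntegral.integral_pos hL hfc.continuousOn (fun x _ => hf0 x)
    ⟨t₀, Ico_subset_Icc_self ht₀, (hf0 t₀).lt_of_ne' (heq ▸ ht)⟩

namespace IsSol

section General

variable {F : ℝ → ℝ → ℝ} {u : ℝ → ℝ}

theorem differentiable (hu : IsSol F u) : Differentiable ℝ u :=
  let ⟨_, hderiv, _⟩ := hu
  fun t => (hderiv t).differentiableAt

theorem locallyIntegrable (hu : IsSol F u) : LocallyIntegrable (fun t => F t (u t)) :=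
  let ⟨_, _, hint, _⟩ := hu
  hint

theorem intervalIntegrable (hu : IsSol F u) (a b : ℝ) :
    IntervalIntegrable (fun t => F t (u t)) volume a b :=
  intervalIntegrable_iff.2 <|
    (hu.locallyIntegrable.integrableOn_isCompact isCompact_uIcc).mono_set uIoc_subset_uIcc

theorem deriv_eq_sub_integral (hu : IsSol F u) (a t : ℝ) :
    deriv u t = deriv u a - ∫ s in a..t, F s (u s) := by
  have hint := hu.intervalIntegrable
  obtain ⟨u', hderiv, -, heq⟩ := hu
  rw [(hderiv t).deriv, (hderiv a).deriv, heq t, heq a,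
    ← intervalIntegral.integral_interval_sub_left (hint 0 t) (hint 0 a)]
  ring

theorem contDiff (hu : IsSol F u) : ContDiff ℝ 1 u := by
  refine contDiff_one_iff_deriv.2 ⟨hu.differentiable, ?_⟩
  rw [funext (hu.deriv_eq_sub_integral 0)]
  exact continuous_const.sub (intervalIntegral.continuous_primitive hu.intervalIntegrable 0)

theorem absolutelyContinuousOnInterval_deriv (hu : IsSol F u) (a b : ℝ) :
    AbsolutelyContinuousOnInterval (deriv u) a b := by
  rw [funext (hu.deriv_eq_sub_integral a)]
  exact contDiff_const.contDiffOn.absolutelyContinuousOnInterval.fun_sub <|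
    (hu.intervalIntegrable a b).absolutelyContinuousOnInterval_intervalIntegral left_mem_uIcc

theorem ae_hasDerivAt_deriv (hu : IsSol F u) :
    ∀ᵐ t, HasDerivAt (deriv u) (-F t (u t)) t := by
  filter_upwards [LocallyIntegrable.ae_hasDerivAt_integral hu.locallyIntegrable] with t ht
  rw [funext (hu.deriv_eq_sub_integral 0)]
  exact (ht 0).const_sub _

theorem ae_eq_zero_of_deriv_eq_zero (hu : IsSol F u) (h : deriv u = 0) :
    ∀ᵐ t, F t (u t) = 0 := by
  filter_upwards [hu.ae_hasDerivAt_deriv] with t ht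
  rw [h] at ht
  exact neg_eq_zero.1 (ht.unique (hasDerivAt_const t 0))

end General

section Separable

variable {q g u : ℝ → ℝ}

theorem hasDerivAt_comp (hu : IsSol (fun t x => q t * g x) u)
    (hg : ∀ t, ContDiffAt ℝ 1 g (u t)) (t : ℝ) :
    HasDerivAt (fun t => g (u t)) (deriv g (u t) * deriv u t) t :=
  ((hg t).differentiableAt one_ne_zero).hasDerivAt.comp t (hu.differentiable t).hasDerivAt

theorem contDiff_comp (hu : IsSol (fun t x => q t * g x) u)
    (hg : ∀ t, ContDiffAt ℝ 1 g (u t)) : ContDiff ℝ 1 (fun t => g (u t)) :=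
  contDiff_iff_contDiffAt.2 fun t => (hg t).comp t hu.contDiff.contDiffAt

theorem intervalIntegrable_coeff (hu : IsSol (fun t x => q t * g x) u)
    (hg : ∀ t, ContDiffAt ℝ 1 g (u t)) (hg0 : ∀ t, g (u t) ≠ 0) (a b : ℝ) :
    IntervalIntegrable q volume a b := by
  have hinv : Continuous fun t => (g (u t))⁻¹ := (hu.contDiff_comp hg).continuous.inv₀ hg0
  simpa only [mul_inv_cancel_right₀ (hg0 _)] using
    (hu.intervalIntegrable a b).mul_continuousOn hinv.continuousOn

theorem continuous_sq_mul_deriv (hu : IsSol (fun t x => q t * g x) u)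
    (hg : ∀ t, ContDiffAt ℝ 1 g (u t)) (hg0 : ∀ t, g (u t) ≠ 0) :
    Continuous fun t => (deriv u t / g (u t)) ^ 2 * deriv g (u t) := by
  have hderiv : Continuous fun t => deriv g (u t) := continuous_iff_continuousAt.2 fun t =>
    ((hg t).derivWithin (zero_add 1).le).continuousAt.comp (hu.differentiable t).continuousAt
  exact ((hu.contDiff.continuous_deriv_one.div (hu.contDiff_comp hg).continuous hg0).pow 2).mul
    hderiv

theorem ae_hasDerivAt_deriv_div (hu : IsSol (fun t x => q t * g x) u)
    (hg : ∀ t, ContDiffAt ℝ 1 g (u t)) (hg0 : ∀ t, g (u t) ≠ 0) :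
    ∀ᵐ t, HasDerivAt (fun t => deriv u t / g (u t))
      (-q t - (deriv u t / g (u t)) ^ 2 * deriv g (u t)) t := by
  filter_upwards [hu.ae_hasDerivAt_deriv] with t ht
  convert! ht.fun_div (hu.hasDerivAt_comp hg t) (hg0 t) using 1
  have := hg0 t
  field_simp

theorem absolutelyContinuousOnInterval_deriv_div (hu : IsSol (fun t x => q t * g x) u)
    (hg : ∀ t, ContDiffAt ℝ 1 g (u t)) (hg0 : ∀ t, g (u t) ≠ 0) (a b : ℝ) :
    AbsolutelyContinuousOnInterval (fun t => deriv u t / g (u t)) a b := by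
  simp only [div_eq_mul_inv]
  exact (hu.absolutelyContinuousOnInterval_deriv a b).fun_mul
    ((hu.contDiff_comp hg).inv hg0).contDiffOn.absolutelyContinuousOnInterval

theorem deriv_div_sub_deriv_div (hu : IsSol (fun t x => q t * g x) u)
    (hg : ∀ t, ContDiffAt ℝ 1 g (u t)) (hg0 : ∀ t, g (u t) ≠ 0) (a b : ℝ) :
    deriv u b / g (u b) - deriv u a / g (u a) =
      -(∫ t in a..b, q t) - ∫ t in a..b, (deriv u t / g (u t)) ^ 2 * deriv g (u t) := by
  rw [← (hu.absolutelyContinuousOnInterval_deriv_div hg hg0 a b).integral_deriv_eq_sub,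
    ← intervalIntegral.integral_neg,
    ← intervalIntegral.integral_sub (f := fun t => -q t)
      (hu.intervalIntegrable_coeff hg hg0 a b).neg
      ((hu.continuous_sq_mul_deriv hg hg0).intervalIntegrable a b)]
  refine intervalIntegral.integral_congr_ae ?_
  filter_upwards [hu.ae_hasDerivAt_deriv_div hg hg0] with t ht _ using ht.deriv

theorem integral_eq_neg_of_periodic (hu : IsSol (fun t x => q t * g x) u)
    (hg : ∀ t, ContDiffAt ℝ 1 g (u t)) (hg0 : ∀ t, g (u t) ≠ 0)
    {L : ℝ} (huper : Function.Periodic u L) :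
    ∫ t in (0 : ℝ)..L, q t =
      -∫ t in (0 : ℝ)..L, (deriv u t / g (u t)) ^ 2 * deriv g (u t) := by
  have hid := hu.deriv_div_sub_deriv_div hg hg0 0 L
  rw [huper.eq, (periodic_deriv huper).eq, sub_self] at hid
  linarith

theorem deriv_eq_zero_of_sq_mul_deriv_eq_zero (hu : IsSol (fun t x => q t * g x) u)
    (hg : ∀ t, ContDiffAt ℝ 1 g (u t)) (hg0 : ∀ t, g (u t) ≠ 0) (hinj : InjOn g (range u))
    (h : ∀ t, (deriv u t / g (u t)) ^ 2 * deriv g (u t) = 0) : deriv u = 0 := by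
  have hcomp : ∀ t, deriv (fun t => g (u t)) t = 0 := fun t => by
    rw [(hu.hasDerivAt_comp hg t).deriv]
    simpa [hg0 t, or_comm] using h t
  have hconst : u = fun _ => u 0 := funext fun t =>
    hinj (mem_range_self t) (mem_range_self 0) <|
      is_const_of_deriv_eq_zero (hu.contDiff_comp hg).differentiable_one hcomp t 0
  rw [hconst, deriv_const']
  rfl

theorem integral_sq_mul_deriv_pos (hu : IsSol (fun t x => q t * g x) u)
    (hg : ∀ t, ContDiffAt ℝ 1 g (u t)) (hg0 : ∀ t, g (u t) ≠ 0) (hinj : InjOn g (range u))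
    (hg' : ∀ t, 0 ≤ deriv g (u t)) (hq : ¬ ∀ᵐ t, q t = 0)
    {L : ℝ} (hL : 0 < L) (huper : Function.Periodic u L) :
    0 < ∫ t in (0 : ℝ)..L, (deriv u t / g (u t)) ^ 2 * deriv g (u t) := by
  refine integral_pos_of_periodic hL (hu.continuous_sq_mul_deriv hg hg0)
    (fun t => by simp only [huper t, periodic_deriv huper t])
    (fun t => mul_nonneg (sq_nonneg _) (hg' t)) fun hzero => hq ?_
  have hu' : deriv u = 0 :=
    hu.deriv_eq_zero_of_sq_mul_deriv_eq_zero hg hg0 hinj (congrFun hzero)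
  filter_upwards [hu.ae_eq_zero_of_deriv_eq_zero hu'] with t ht
  exact (mul_eq_zero.1 ht).resolve_right (hg0 t)

end Separable

end IsSol

theorem stmt9_general {T : ℝ} (hT : 0 < T) {q : ℝ → ℝ} (hqper : Function.Periodic q T)
    (hqne : ¬ ∀ᵐ t, q t = 0) {s : Set ℝ} (hs : IsOpen s) {g : ℝ → ℝ} (hg : ContDiffOn ℝ 1 g s)
    (hg0 : ∀ x ∈ s, g x ≠ 0) (hmono : StrictMonoOn g s) {k : ℕ} (hk : 1 ≤ k) {u : ℝ → ℝ}
    (hu : IsSol (fun t x => q t * g x) u) (hus : ∀ t, u t ∈ s)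
    (huper : Function.Periodic u (k * T)) :
    k * (∫ t in (0 : ℝ)..T, q t) =
      -∫ t in (0 : ℝ)..k * T, (deriv u t / g (u t)) ^ 2 * deriv g (u t) ∧
    k * (∫ t in (0 : ℝ)..T, q t) < 0 ∧
    ∫ t in (0 : ℝ)..T, q t < 0 := by
  have hk0 : (0 : ℝ) < k := Nat.cast_pos.2 hk
  have hgu : ∀ t, ContDiffAt ℝ 1 g (u t) := fun t => hg.contDiffAt (hs.mem_nhds (hus t))
  have hgu0 : ∀ t, g (u t) ≠ 0 := fun t => hg0 _ (hus t)
  have hgu' : ∀ t, 0 ≤ deriv g (u t) := fun t => by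
    rw [← derivWithin_of_isOpen hs (hus t)]
    exact hmono.monotoneOn.derivWithin_nonneg
  have hper : ∫ t in (0 : ℝ)..k * T, q t = k * ∫ t in (0 : ℝ)..T, q t := by
    simpa using hqper.intervalIntegral_add_zsmul_eq k 0 (hu.intervalIntegrable_coeff hgu hgu0)
  have hid := hper.symm.trans (hu.integral_eq_neg_of_periodic hgu hgu0 huper)
  have hpos := hu.integral_sq_mul_deriv_pos hgu hgu0
    (hmono.injOn.mono (range_subset_iff.2 hus)) hgu' hqne (mul_pos hk0 hT) huper
  have hneg : k * ∫ t in (0 : ℝ)..T, q t < 0 := hid ▸ neg_neg_of_pos hpos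
  exact ⟨hid, hneg, neg_of_mul_neg_right hneg hk0.le⟩

/-- if `g' > 0` on `(0,∞)` and `u` is a positive `kT`-periodic solution of
`u'' + q(t)g(u) = 0` with `q` not a.e. zero, then
`k ∫_0^T q = -∫_0^{kT} (u'/g(u))² g'(u) < 0`; in particular `∫_0^T q < 0`. -/
theorem stmt9 (T : ℝ) (hT : 0 < T) (q : ℝ → ℝ)
    (hqper : Function.Periodic q T)
    (hqloc : MeasureTheory.LocallyIntegrable q MeasureTheory.volume)
    (hqne : ¬ (∀ᵐ t ∂MeasureTheory.volume, q t = 0))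
    (g : ℝ → ℝ) (hgC1 : ContDiffOn ℝ 1 g (Set.Ici 0))
    (hg0 : g 0 = 0) (hgpos : ∀ s : ℝ, 0 < s → 0 < g s)
    (hg' : ∀ s : ℝ, 0 < s → 0 < derivWithin g (Set.Ici 0) s)
    (k : ℕ) (hk : 1 ≤ k)
    (u : ℝ → ℝ) (hu : IsSol (fun t s => q t * g s) u)
    (hupos : ∀ t, 0 < u t) (huper : Function.Periodic u ((k:ℝ) * T)) :
    (k : ℝ) * (∫ t in (0:ℝ)..T, q t) =
      - ∫ t in (0:ℝ)..((k:ℝ) * T),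
          (deriv u t / g (u t)) ^ 2 * derivWithin g (Set.Ici 0) (u t) ∧
    (k : ℝ) * (∫ t in (0:ℝ)..T, q t) < 0 ∧
    (∫ t in (0:ℝ)..T, q t) < 0 := by
  have hderiv (t : ℝ) : derivWithin g (Ici 0) (u t) = deriv g (u t) :=
    derivWithin_of_mem_nhds (Ici_mem_nhds (hupos t))
  have hmono : StrictMonoOn g (Ici 0) :=
    strictMonoOn_of_derivWithin_pos (convex_Ici 0) hgC1.continuousOn (by simpa using hg')
  simpa only [hderiv] using stmt9_general hT hqper hqne isOpen_Ioi
    (hgC1.mono Ioi_subset_Ici_self) (fun s hs => (hgpos s hs).ne')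
    (hmono.mono Ioi_subset_Ici_self) hk hu hupos huper
end
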